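/- arXiv:2301.09942 — 6 statements merged into one kernel-verified Lean document; each statement's English description precedes it below -/
import Mathlib

section
/- Let A₀,…,A_{N₁}, B₀,…,B_{N₂} ∈ M_d(ℝ) and suppose that A_i·B_j = B_j·A_i for every i ∈ {0,…,N₁} and j ∈ {0,…,N₂}. Let 𝖠, 𝖡 and 𝖢 denote the convex hulls of {A₀,…,A_{N₁}}, {B₀,…,B_{N₂}} and {A₀,…,A_{N₁}, B₀,…,B_{N₂}} respectively. Then Λ(𝖢) = max{Λ(𝖠), Λ(𝖡)}. -/
/-!
For a finite family `T` of operators, say that `lam` is a growth bound if all switched flows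
`exp (s_k T_{i_k}) ⋯ exp (s_1 T_{i_1})` of total duration `t` have norm at most `K exp (lam t)`,
with `K` independent of the flow. The proof rests on two facts.

* `Lambda_eq`: `Λ` of the convex hull of a finite family is the infimum of its growth bounds.
* `growth_sum_iff`: if two families commute, the growth bounds of their union are exactly the
  common growth bounds of the two. Indeed a switched flow of the union can be reordered into a
  flow of the first family times a flow of the second, with durations adding up to the original.

Since the growth bounds form an up-closed set, the infimum over the intersection is the maximum of
the two infima, which is the theorem.

In `Lambda_eq`, the bound from below holds because piecewise constant switching laws are admissible
(`Reach.exists_isTrajectory`): if at a single time `t₀` the supremum of the rates is below `lam`,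
then cutting switched flows into pieces of duration `t₀` shows that `lam` is a growth bound
(`growth_of_sSup_rates_lt`). For the bound from above, a growth bound `lam` yields an equivalent
norm `N v = sup exp (-lam t) ‖P v‖` over switched flows `P`, for which every single flow satisfies
`N (exp (s T_i) v) ≤ exp (lam s) N v`. The infinitesimal form of this inequality passes to convex
combinations of the `T_i`, so a Gronwall argument gives `N (x t) ≤ exp (lam t) N (x 0)` along every
trajectory of the convex hull (`IsSol.le_exp`). Working with averages of the velocity over short
intervals, which stay close to the convex set of admissible velocities, avoids any measurable
selection of barycentric coordinates and any change of time.
-/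

open MeasureTheory Filter Matrix Kronecker

/-- The Euclidean norm on `n → ℝ`. -/
noncomputable def eNorm {n : Type*} [Fintype n] (v : n → ℝ) : ℝ :=
  Real.sqrt (∑ i, (v i) ^ 2)

/-- The operator norm induced by the Euclidean norm. -/
noncomputable def opNorm {n : Type*} [Fintype n] (M : Matrix n n ℝ) : ℝ :=
  sSup ((fun v => eNorm (M.mulVec v)) '' {v | eNorm v ≤ 1})

/-- `x` is a trajectory of the linear switching system defined by `S`: it is continuous and
satisfies `x t = x 0 + ∫₀ᵗ A s ⬝ x s ds` for all `t ≥ 0`, for some measurable switching law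
`A` taking values in `S` on `[0,∞)`. -/
def IsTrajectory {n : Type*} [Fintype n] (S : Set (Matrix n n ℝ)) (x : ℝ → n → ℝ) : Prop :=
  Continuous x ∧ ∃ A : ℝ → Matrix n n ℝ,
    (∀ i j, Measurable fun s => A s i j) ∧ (∀ s, 0 ≤ s → A s ∈ S) ∧
    (∀ t, 0 ≤ t → IntervalIntegrable (fun s => (A s).mulVec (x s)) volume 0 t) ∧
    (∀ t, 0 ≤ t → x t = x 0 + ∫ s in (0:ℝ)..t, (A s).mulVec (x s))

/-- The topological top Lyapunov exponent
`Λ(S) = lim_{t→∞} sup_x (1/t) log (‖x t‖/‖x 0‖)`, the supremum being over all trajectories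
of the linear switching system defined by `S` with `x 0 ≠ 0`. -/
noncomputable def Lambda {n : Type*} [Fintype n] (S : Set (Matrix n n ℝ)) : ℝ :=
  limUnder atTop fun t : ℝ =>
    sSup {r | ∃ x : ℝ → n → ℝ, IsTrajectory S x ∧ x 0 ≠ 0 ∧
      r = (1 / t) * Real.log (eNorm (x t) / eNorm (x 0))}

/-- `N` is a norm on `n → ℝ`. -/
structure IsNorm {n : Type*} [Fintype n] (N : (n → ℝ) → ℝ) : Prop where
  eq_zero_iff : ∀ v, N v = 0 ↔ v = 0
  smul : ∀ (a : ℝ) (v), N (a • v) = |a| * N v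
  triangle : ∀ v w, N (v + w) ≤ N v + N w

/-- `N` is an extremal norm for `S`: `t ↦ e^{-tΛ(S)} N (x t)` is non-increasing on `[0,∞)`
along every trajectory. -/
def IsExtremalNorm {n : Type*} [Fintype n] (S : Set (Matrix n n ℝ)) (N : (n → ℝ) → ℝ) : Prop :=
  IsNorm N ∧ ∀ x : ℝ → n → ℝ, IsTrajectory S x → ∀ s t : ℝ, 0 ≤ s → s ≤ t →
    Real.exp (-t * Lambda S) * N (x t) ≤ Real.exp (-s * Lambda S) * N (x s)

/-- `N` is a Barabanov norm for `S`. -/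
def IsBarabanovNorm {n : Type*} [Fintype n] (S : Set (Matrix n n ℝ)) (N : (n → ℝ) → ℝ) : Prop :=
  IsExtremalNorm S N ∧ ∀ u : n → ℝ, ∃ x : ℝ → n → ℝ, IsTrajectory S x ∧ x 0 = u ∧
    ∀ t : ℝ, 0 ≤ t → Real.exp (-t * Lambda S) * N (x t) = N u

/-- `S` is irreducible: no nontrivial proper subspace is invariant under every `A ∈ S`. -/
def IrreducibleSystem {n : Type*} [Fintype n] (S : Set (Matrix n n ℝ)) : Prop :=
  ¬ ∃ V : Submodule ℝ (n → ℝ), 0 < Module.finrank ℝ V ∧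
    Module.finrank ℝ V < Fintype.card n ∧ ∀ A ∈ S, ∀ v ∈ V, A.mulVec v ∈ V

/-- A real matrix is Hurwitz if all of its complex eigenvalues have negative real part. -/
def IsHurwitz {n : Type*} [Fintype n] [DecidableEq n] (A : Matrix n n ℝ) : Prop :=
  ∀ μ ∈ spectrum ℂ (A.map (Complex.ofReal ·)), μ.re < 0

namespace Switching

open Set Topology

set_option linter.unusedSectionVars false
variable {E : Type*} [NormedAddCommGroup E] [NormedSpace ℝ E] [CompleteSpace E] {ι κ : Type*}

/-! ### Switched flows and growth bounds -/

/-- The flow `exp (s T)` of the linear equation `x' = T x`. -/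
noncomputable def flow (T : E →L[ℝ] E) (s : ℝ) : E →L[ℝ] E := NormedSpace.exp (s • T)

theorem flow_zero (T : E →L[ℝ] E) : flow T 0 = 1 := by
  simp [flow]

theorem flow_add (T : E →L[ℝ] E) (s u : ℝ) : flow T (s + u) = flow T s * flow T u := by
  let _ : NormedAlgebra ℚ (E →L[ℝ] E) := NormedAlgebra.restrictScalars ℚ ℝ (E →L[ℝ] E)
  rw [flow, add_smul]
  exact NormedSpace.exp_add_of_commute (((Commute.refl T).smul_left s).smul_right u)

theorem commute_flow {T U : E →L[ℝ] E} (h : Commute T U) (s u : ℝ) :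
    Commute (flow T s) (flow U u) :=
  ((h.smul_left s).smul_right u).exp

theorem hasDerivAt_flow (T : E →L[ℝ] E) (v : E) (t : ℝ) :
    HasDerivAt (fun u => flow T u v) (T (flow T t v)) t := by
  have h := hasDerivAt_exp_smul_const' (𝕂 := ℝ) T t
  exact h.clm_apply (hasDerivAt_const t v) |>.congr_deriv (by simp [flow])

theorem norm_flow_le (T : E →L[ℝ] E) {M : ℝ} (hM : ‖T‖ ≤ M) {s : ℝ} (hs : 0 ≤ s) (v : E) :
    ‖flow T s v‖ ≤ Real.exp (M * s) * ‖v‖ := by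
  have h := norm_le_gronwallBound_of_norm_deriv_right_le (f := fun u => flow T u v)
    (f' := fun u => T (flow T u v)) (δ := ‖v‖) (K := M) (ε := 0) (a := 0) (b := s)
    (fun u _ => (hasDerivAt_flow T v u).continuousAt.continuousWithinAt)
    (fun u _ => (hasDerivAt_flow T v u).hasDerivWithinAt)
    (by simp [flow_zero])
    (fun u _ => by
      rw [add_zero]
      exact (T.le_opNorm _).trans (mul_le_mul_of_nonneg_right hM (norm_nonneg _)))
    s ⟨hs, le_rfl⟩
  rw [gronwallBound_ε0, sub_zero, mul_comm] at h
  exact h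

/-- `Reach T t P`: the operator `P` is a finite product of flows of members of `T`, of total
duration `t`. It is the solution operator at time `t` of a piecewise constant switching law. -/
inductive Reach (T : ι → E →L[ℝ] E) : ℝ → (E →L[ℝ] E) → Prop
  | one : Reach T 0 1
  | step {t : ℝ} {P : E →L[ℝ] E} (h : Reach T t P) (i : ι) {s : ℝ} (hs : 0 ≤ s) :
      Reach T (t + s) (flow (T i) s * P)

/-- `lam` is a growth bound of the family `T`: switched flows of duration `t` have norm at most
`K exp (lam t)` for a constant `K`. -/
def Growth (T : ι → E →L[ℝ] E) (lam : ℝ) : Prop :=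
  ∃ K : ℝ, ∀ t P, Reach T t P → ∀ v, ‖P v‖ ≤ K * Real.exp (lam * t) * ‖v‖

namespace Reach

variable {T : ι → E →L[ℝ] E}

theorem nonneg {t : ℝ} {P : E →L[ℝ] E} (h : Reach T t P) : 0 ≤ t := by
  induction h with
  | one => exact le_rfl
  | step _ _ hs ih => positivity

theorem flow (i : ι) {s : ℝ} (hs : 0 ≤ s) : Reach T s (flow (T i) s) := by
  simpa using Reach.one.step (T := T) i hs

theorem mul {t u : ℝ} {P Q : E →L[ℝ] E} (hP : Reach T t P) (hQ : Reach T u Q) :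
    Reach T (t + u) (Q * P) := by
  induction hQ with
  | one => simpa using hP
  | step _ i hs ih => simpa [add_assoc, mul_assoc] using ih.step i hs

/-- A switched flow can be cut at any intermediate time. -/
theorem split {t : ℝ} {P : E →L[ℝ] E} (h : Reach T t P) {u : ℝ} (hu : 0 ≤ u) (hut : u ≤ t) :
    ∃ Q R, Reach T u Q ∧ Reach T (t - u) R ∧ P = R * Q := by
  induction h with
  | one =>
    obtain rfl : u = 0 := le_antisymm hut hu
    exact ⟨1, 1, .one, by simpa using Reach.one, by simp⟩
  | @step t P h i s hs ih =>
    rcases le_total u t with hu' | hu'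
    · obtain ⟨Q, R, hQ, hR, rfl⟩ := ih hu'
      refine ⟨Q, Switching.flow (T i) s * R, hQ, ?_, by rw [mul_assoc]⟩
      convert hR.step i hs using 1
      ring
    · refine ⟨Switching.flow (T i) (u - t) * P, Switching.flow (T i) (t + s - u), ?_,
        .flow i (by linarith), ?_⟩
      · convert h.step i (sub_nonneg.2 hu') using 1
        ring
      · rw [← mul_assoc, ← flow_add]
        congr 2
        ring

theorem norm_le {M : ℝ} (hM : ∀ i, ‖T i‖ ≤ M) {t : ℝ} {P : E →L[ℝ] E} (h : Reach T t P) (v : E) :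
    ‖P v‖ ≤ Real.exp (M * t) * ‖v‖ := by
  induction h with
  | one => simp
  | @step t P h i s hs ih =>
    calc ‖Switching.flow (T i) s (P v)‖ ≤ Real.exp (M * s) * ‖P v‖ := norm_flow_le _ (hM i) hs _
      _ ≤ Real.exp (M * s) * (Real.exp (M * t) * ‖v‖) := by gcongr
      _ = Real.exp (M * (t + s)) * ‖v‖ := by rw [mul_add, Real.exp_add]; ring

/-- The flow of an operator commuting with a family commutes with its switched flows. -/
theorem commute {U : E →L[ℝ] E} (hU : ∀ i, Commute (T i) U) {t : ℝ} {P : E →L[ℝ] E}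
    (h : Reach T t P) (s : ℝ) : Commute (Switching.flow U s) P := by
  induction h with
  | one => exact Commute.one_right _
  | step _ i _ ih => exact (commute_flow (hU i).symm _ _).mul_right ih

theorem comp {f : κ → ι} {t : ℝ} {P : E →L[ℝ] E} (h : Reach (T ∘ f) t P) : Reach T t P := by
  induction h with
  | one => exact .one
  | step _ i hs ih => exact ih.step (f i) hs

/-- If the two families commute, every switched flow of their union can be reordered so that all
flows of the second family act first. -/
theorem sum_factor {U : κ → E →L[ℝ] E} (hTU : ∀ i j, Commute (T i) (U j)) {t : ℝ}
    {P : E →L[ℝ] E} (h : Reach (Sum.elim T U) t P) :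
    ∃ t₁ t₂ P₁ P₂, Reach T t₁ P₁ ∧ Reach U t₂ P₂ ∧ t = t₁ + t₂ ∧ P = P₁ * P₂ := by
  induction h with
  | one => exact ⟨0, 0, 1, 1, .one, .one, by simp, by simp⟩
  | @step t P h i s hs ih =>
    obtain ⟨t₁, t₂, P₁, P₂, h₁, h₂, rfl, rfl⟩ := ih
    rcases i with i | j
    · exact ⟨t₁ + s, t₂, _, P₂, h₁.step i hs, h₂, by ring, by simp [mul_assoc]⟩
    · refine ⟨t₁, t₂ + s, P₁, _, h₁, h₂.step j hs, by ring, ?_⟩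
      have hc := h₁.commute (fun i => hTU i j) s
      simp only [Sum.elim_inr]
      rw [← mul_assoc, hc.eq, mul_assoc]

end Reach

theorem Growth.mono {T : ι → E →L[ℝ] E} {lam mu : ℝ} (h : Growth T lam) (hle : lam ≤ mu) :
    Growth T mu := by
  obtain ⟨K, hK⟩ := h
  refine ⟨|K|, fun t P hP v => (hK t P hP v).trans ?_⟩
  have := hP.nonneg
  gcongr
  exact le_abs_self K

/-- The growth bounds of the union of two commuting families are their common growth bounds. -/
theorem growth_sum_iff {T : ι → E →L[ℝ] E} {U : κ → E →L[ℝ] E}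
    (hTU : ∀ i j, Commute (T i) (U j)) (lam : ℝ) :
    Growth (Sum.elim T U) lam ↔ Growth T lam ∧ Growth U lam := by
  constructor
  · rintro ⟨K, hK⟩
    exact ⟨⟨K, fun t P hP => hK t P (Reach.comp (f := Sum.inl) hP)⟩,
      ⟨K, fun t P hP => hK t P (Reach.comp (f := Sum.inr) hP)⟩⟩
  · rintro ⟨⟨K, hK⟩, ⟨L, hL⟩⟩
    refine ⟨|K| * L, fun t P hP v => ?_⟩
    obtain ⟨t₁, t₂, P₁, P₂, h₁, h₂, rfl, rfl⟩ := hP.sum_factor hTU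
    calc ‖P₁ (P₂ v)‖ ≤ K * Real.exp (lam * t₁) * ‖P₂ v‖ := hK _ _ h₁ _
      _ ≤ |K| * Real.exp (lam * t₁) * ‖P₂ v‖ := by gcongr; exact le_abs_self K
      _ ≤ |K| * Real.exp (lam * t₁) * (L * Real.exp (lam * t₂) * ‖v‖) := by
        gcongr
        exact hL _ _ h₂ _
      _ = |K| * L * Real.exp (lam * (t₁ + t₂)) * ‖v‖ := by rw [mul_add, Real.exp_add]; ring

/-! ### Growth along solutions of the convexified inclusion -/

/-- If `N` grows at rate at most `lam` along the flow of `T`, then an Euler step of length `h`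
increases it by at most `h * (lam * N v) + o(h)`. -/
theorem flow_step {N : E → ℝ} {K lam : ℝ} (hadd : ∀ v w, N (v + w) ≤ N v + N w)
    (hK : 0 ≤ K) (hNK : ∀ v, N v ≤ K * ‖v‖) {T : E →L[ℝ] E}
    (hflow : ∀ s, 0 ≤ s → ∀ v, N (flow T s v) ≤ Real.exp (lam * s) * N v)
    (v : E) {ε : ℝ} (hε : 0 < ε) :
    ∀ᶠ h in 𝓝[>] (0 : ℝ), N (v + h • T v) ≤ N v + h * (lam * N v + ε) := by
  have e1 : ∀ᶠ h in 𝓝[>] (0:ℝ), Real.exp (lam * h) * N v ≤ N v + h * (lam * N v + ε / 2) := by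
    have hd : HasDerivAt (fun h => Real.exp (lam * h) * N v) (lam * N v) 0 := by
      have := (((hasDerivAt_id (0:ℝ)).const_mul lam).exp).mul_const (N v)
      simpa using this
    have := ((hasDerivAt_iff_isLittleO.1 hd).bound (half_pos hε)).filter_mono
      (nhdsWithin_le_nhds (s := Ioi 0))
    filter_upwards [this, self_mem_nhdsWithin] with h hh (h0 : 0 < h)
    simp only [mul_zero, Real.exp_zero, one_mul, sub_zero, smul_eq_mul, Real.norm_eq_abs,
      abs_of_pos h0] at hh
    have := le_of_abs_le hh
    linarith
  have e2 : ∀ᶠ h in 𝓝[>] (0:ℝ), K * ‖flow T h v - v - h • T v‖ ≤ h * (ε / 2) := by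
    have hd := hasDerivAt_flow T v 0
    have := ((hasDerivAt_iff_isLittleO.1 hd).bound (c := ε / 2 / (K + 1)) (by positivity)).filter_mono
      (nhdsWithin_le_nhds (s := Ioi 0))
    filter_upwards [this, self_mem_nhdsWithin] with h hh (h0 : 0 < h)
    simp only [flow_zero, sub_zero, Real.norm_eq_abs, abs_of_pos h0,
      one_apply_eq_self] at hh
    calc K * ‖flow T h v - v - h • T v‖ ≤ (K + 1) * (ε / 2 / (K + 1) * h) := by
          gcongr
          linarith
      _ = h * (ε / 2) := by field_simp
  filter_upwards [e1, e2, self_mem_nhdsWithin] with h h1 h2 (h0 : 0 < h)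
  have h3 := hadd (flow T h v) (-(flow T h v - v - h • T v))
  have h4 := hNK (-(flow T h v - v - h • T v))
  rw [norm_neg] at h4
  have h5 := hflow h h0.le v
  have h6 : flow T h v + -(flow T h v - v - h • T v) = v + h • T v := by abel
  rw [h6] at h3
  linarith


/-- `x` solves the differential inclusion `x' ∈ conv T · x` on `[0, τ]`, in integral form: `g` is
the velocity. Only values on `[0, τ]` matter, which makes the notion stable under time reversal;
`x` is nevertheless asked to be continuous on the whole line. -/
def IsSol (T : ι → E →L[ℝ] E) (τ : ℝ) (x : ℝ → E) : Prop :=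
  Continuous x ∧ ∃ g : ℝ → E, IntervalIntegrable g volume 0 τ ∧
    (∀ t ∈ Icc 0 τ, x t = x 0 + ∫ s in (0:ℝ)..t, g s) ∧
    ∀ s ∈ Icc 0 τ, ∃ C ∈ convexHull ℝ (range T), g s = C (x s)

theorem norm_le_of_mem_convexHull {T : ι → E →L[ℝ] E} {M : ℝ} (hM : ∀ i, ‖T i‖ ≤ M)
    {C : E →L[ℝ] E} (hC : C ∈ convexHull ℝ (range T)) : ‖C‖ ≤ M := by
  have : convexHull ℝ (range T) ⊆ Metric.closedBall 0 M :=
    convexHull_min (by rintro _ ⟨i, rfl⟩; simpa using hM i) (convex_closedBall _ _)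
  simpa using this hC

theorem apply_mem_convexHull {T : ι → E →L[ℝ] E} {C : E →L[ℝ] E}
    (hC : C ∈ convexHull ℝ (range T)) (v : E) :
    C v ∈ convexHull ℝ (range fun i => T i v) := by
  have h := LinearMap.image_convexHull ((ContinuousLinearMap.apply ℝ E v).toLinearMap) (range T)
  rw [← range_comp] at h
  have h2 : C v ∈ ((ContinuousLinearMap.apply ℝ E v).toLinearMap) '' convexHull ℝ (range T) :=
    ⟨C, hC, rfl⟩
  rw [h] at h2
  exact h2

/-- A sublinear function that grows at rate at most `lam` along each flow `exp (s T_i)` grows at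
rate at most `lam` along every solution of the convexified inclusion. -/
theorem IsSol.le_exp [Finite ι] {T : ι → E →L[ℝ] E} {N : E → ℝ} {K lam : ℝ}
    (hadd : ∀ v w, N (v + w) ≤ N v + N w) (hsmul : ∀ a, 0 ≤ a → ∀ v, N (a • v) ≤ a * N v)
    (hK : 0 ≤ K) (hNK : ∀ v, N v ≤ K * ‖v‖)
    (hflow : ∀ i s, 0 ≤ s → ∀ v, N (flow (T i) s v) ≤ Real.exp (lam * s) * N v)
    {τ : ℝ} (hτ : 0 ≤ τ) {x : ℝ → E} (hx : IsSol T τ x) :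
    N (x τ) ≤ Real.exp (lam * τ) * N (x 0) := by
  obtain ⟨hxc, g, hg, hxg, hgT⟩ := hx
  obtain ⟨M, hM0, hM⟩ : ∃ M : ℝ, 0 < M ∧ ∀ i, ‖T i‖ ≤ M := by
    obtain ⟨M, hM⟩ := (finite_range fun i => ‖T i‖).bddAbove
    exact ⟨max M 1, by positivity, fun i => (hM ⟨i, rfl⟩).trans (le_max_left _ _)⟩
  have hNc : Continuous N := by
    refine (LipschitzWith.of_le_add_mul K.toNNReal fun v w => ?_).continuous
    have h1 := hadd w (v - w)
    have h2 := hNK (v - w)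
    rw [add_sub_cancel] at h1
    rw [Real.coe_toNNReal _ hK, dist_eq_norm]
    linarith
  -- Gronwall's inequality reduces the claim to a bound for the upper right derivative of `N ∘ x`.
  have key := le_gronwallBound_of_liminf_deriv_right_le (f := fun t => N (x t))
    (f' := fun t => lam * N (x t)) (δ := N (x 0)) (K := lam) (ε := 0) (a := 0) (b := τ)
    (hNc.comp hxc).continuousOn ?_ le_rfl (fun t _ => by simp) τ ⟨hτ, le_rfl⟩
  · rw [gronwallBound_ε0, sub_zero, mul_comm] at key
    exact key
  intro t ht r hr
  apply Eventually.frequently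
  set v := x t with hv
  set δ := r - lam * N v with hδ
  have hδ0 : 0 < δ := sub_pos.2 hr
  -- `η` bounds how far velocities on `[t, z]` are from those at `x t`; the choice makes the
  -- resulting error `2 * K * η` less than `δ / 2`.
  set η := δ / (4 * (K + 1)) with hη
  have hη0 : 0 < η := by positivity
  have hηK : K * (2 * η) < δ / 2 := by
    have : (K + 1) * (2 * η) = δ / 2 := by rw [hη]; field_simp; ring
    linarith
  have hshift : Tendsto (fun z => z - t) (𝓝[>] t) (𝓝[>] 0) := by
    refine tendsto_nhdsWithin_iff.2 ⟨?_, ?_⟩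
    · have : Tendsto (fun z => z - t) (𝓝 t) (𝓝 (t - t)) := tendsto_id.sub_const t
      rw [sub_self] at this
      exact this.mono_left nhdsWithin_le_nhds
    · filter_upwards [self_mem_nhdsWithin] with z (hz : t < z)
      exact sub_pos.2 hz
  have e1 : ∀ᶠ z in 𝓝[>] t, ∀ i,
      N (v + (z - t) • T i v) ≤ N v + (z - t) * (lam * N v + δ / 2) :=
    eventually_all.2 fun i =>
      hshift.eventually (flow_step hadd hK hNK (hflow i) v (half_pos hδ0))
  have e2 : ∀ᶠ z in 𝓝[>] t, ∀ s ∈ Ioc t z, M * ‖x s - v‖ ≤ η := by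
    have h1 : Tendsto (fun s => M * ‖x s - v‖) (𝓝 t) (𝓝 (M * ‖x t - v‖)) :=
      (continuous_const.mul (hxc.sub continuous_const).norm).tendsto t
    rw [hv, sub_self, norm_zero, mul_zero] at h1
    obtain ⟨ρ, hρ, hb⟩ := Metric.eventually_nhds_iff.1 (h1.eventually (gt_mem_nhds hη0))
    have h3 : ∀ᶠ z in 𝓝[>] t, z < t + ρ :=
      (gt_mem_nhds (by linarith : t < t + ρ)).filter_mono nhdsWithin_le_nhds
    filter_upwards [h3] with z hz s hs
    refine (hb ?_).le
    rw [Real.dist_eq, abs_of_pos (sub_pos.2 hs.1)]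
    linarith [hs.2]
  have e3 : ∀ᶠ z in 𝓝[>] t, z < τ := (gt_mem_nhds ht.2).filter_mono nhdsWithin_le_nhds
  filter_upwards [e1, e2, e3, self_mem_nhdsWithin] with z h1 h2 hzτ (hzt : t < z)
  have hh : 0 < z - t := sub_pos.2 hzt
  set W := convexHull ℝ (range fun i => T i v) with hW
  have hg0t : IntervalIntegrable g volume 0 t :=
    hg.mono_set (by rw [uIcc_of_le ht.1, uIcc_of_le hτ]; exact Icc_subset_Icc le_rfl ht.2.le)
  have hg0z : IntervalIntegrable g volume 0 z :=
    hg.mono_set (by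
      rw [uIcc_of_le (ht.1.trans hzt.le), uIcc_of_le hτ]; exact Icc_subset_Icc le_rfl hzτ.le)
  -- The average velocity `w` lies within `η` of the convex set `W` of velocities at `v`.
  set w := ⨍ s in t..z, g s with hw
  have hwx : x z = v + (z - t) • w := by
    rw [hw, interval_average_eq, smul_inv_smul₀ hh.ne',
      ← intervalIntegral.integral_interval_sub_left hg0z hg0t, hv, hxg t ⟨ht.1, ht.2.le⟩,
      hxg z ⟨ht.1.trans hzt.le, hzτ.le⟩]
    abel
  have hwW : w ∈ Metric.cthickening η W := by
    rw [hw, uIoc_of_le hzt.le]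
    refine ((convex_convexHull ℝ _).cthickening η).set_average_mem Metric.isClosed_cthickening
      (by simpa using hzt) (by simp) ?_ ?_
    · refine (ae_restrict_iff' measurableSet_Ioc).2 (Eventually.of_forall fun s hs => ?_)
      obtain ⟨C, hC, hCs⟩ := hgT s ⟨ht.1.trans hs.1.le, hs.2.trans hzτ.le⟩
      refine Metric.mem_cthickening_of_dist_le _ (C v) _ _ (apply_mem_convexHull hC v) ?_
      rw [hCs, dist_eq_norm, ← map_sub]
      exact ((C.le_opNorm _).trans (mul_le_mul_of_nonneg_right
        (norm_le_of_mem_convexHull hM hC) (norm_nonneg _))).trans (h2 s hs)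
    · exact (intervalIntegrable_iff_integrableOn_Ioc_of_le hzt.le).1 (hg0t.symm.trans hg0z)
  obtain ⟨w', hw', hww'⟩ := Metric.mem_thickening_iff.1
    (Metric.cthickening_subset_thickening' (by positivity) (by linarith : η < 2 * η) W hwW)
  -- The estimate for the velocities `T i v` extends to `W`, as sublevel sets of `N` are convex.
  have h3 : N (v + (z - t) • w') ≤ N v + (z - t) * (lam * N v + δ / 2) := by
    have hconv : Convex ℝ {u | N (v + (z - t) • u) ≤ N v + (z - t) * (lam * N v + δ / 2)} := by
      intro u hu u' hu' a b ha hb hab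
      simp only [mem_ofPred_eq] at hu hu' ⊢
      have e : v + (z - t) • (a • u + b • u') =
          a • (v + (z - t) • u) + b • (v + (z - t) • u') := by
        have : v = a • v + b • v := by rw [← add_smul, hab, one_smul]
        nth_rewrite 1 [this]
        module
      rw [e]
      refine (hadd _ _).trans ((add_le_add (hsmul a ha _) (hsmul b hb _)).trans ?_)
      refine (add_le_add (mul_le_mul_of_nonneg_left hu ha)
        (mul_le_mul_of_nonneg_left hu' hb)).trans ?_
      rw [← add_mul, hab, one_mul]
    exact convexHull_min (by rintro _ ⟨i, rfl⟩; exact h1 i) hconv hw'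
  have h4 : N (x z) ≤ N (v + (z - t) • w') + (z - t) * (K * (2 * η)) := by
    have e : x z = (v + (z - t) • w') + (z - t) • (w - w') := by rw [hwx]; module
    rw [e]
    refine (hadd _ _).trans ?_
    gcongr
    refine (hsmul _ hh.le _).trans ?_
    gcongr
    refine (hNK _).trans ?_
    gcongr
    rw [← dist_eq_norm]
    exact hww'.le
  rw [inv_mul_lt_iff₀ hh]
  have : (z - t) * (K * (2 * η)) < (z - t) * (δ / 2) := by gcongr
  have e : (z - t) * r = (z - t) * (lam * N v + δ / 2) + (z - t) * (δ / 2) := by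
    rw [hδ]; ring
  linarith

theorem IsSol.norm_le [Finite ι] {T : ι → E →L[ℝ] E} {M : ℝ} (hM : ∀ i, ‖T i‖ ≤ M)
    {τ : ℝ} (hτ : 0 ≤ τ) {x : ℝ → E} (hx : IsSol T τ x) :
    ‖x τ‖ ≤ Real.exp (M * τ) * ‖x 0‖ :=
  hx.le_exp (N := norm) (K := 1) norm_add_le
    (fun a ha v => by rw [norm_smul, Real.norm_of_nonneg ha]) zero_le_one (by simp)
    (fun i s hs v => norm_flow_le _ (hM i) hs v) hτ

/-- Reversing time turns solutions for `T` into solutions for `-T`. -/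
theorem IsSol.reverse {T : ι → E →L[ℝ] E} {τ : ℝ} (hτ : 0 ≤ τ) {x : ℝ → E}
    (hx : IsSol T τ x) : IsSol (fun i => -T i) τ (fun s => x (τ - s)) := by
  obtain ⟨hxc, g, hg, hxg, hgT⟩ := hx
  refine ⟨by fun_prop, fun s => -g (τ - s), ?_, fun t ht => ?_, fun s hs => ?_⟩
  · have := (hg.comp_sub_left τ).neg.symm
    simp only [sub_zero, sub_self] at this
    exact this
  · have hg' : IntervalIntegrable g volume 0 (τ - t) :=
      hg.mono_set (by
        rw [uIcc_of_le (sub_nonneg.2 ht.2), uIcc_of_le hτ]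
        exact Icc_subset_Icc le_rfl (by linarith [ht.1]))
    rw [intervalIntegral.integral_neg, intervalIntegral.integral_comp_sub_left (fun s => g s),
      sub_zero, ← intervalIntegral.integral_interval_sub_left hg hg']
    simp only [sub_zero]
    rw [hxg τ ⟨hτ, le_rfl⟩,
      hxg (τ - t) ⟨sub_nonneg.2 ht.2, by linarith [ht.1]⟩]
    abel
  · obtain ⟨C, hC, h⟩ := hgT (τ - s) ⟨sub_nonneg.2 hs.2, by linarith [hs.1]⟩
    refine ⟨-C, ?_, by simp [h]⟩
    have : (range fun i => -T i) = -range T := by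
      ext U; simp [neg_eq_iff_eq_neg]
    rw [this, convexHull_neg]
    simpa using hC

/-- Solutions decay at most exponentially; in particular a nonzero solution never vanishes. -/
theorem IsSol.norm_zero_le [Finite ι] {T : ι → E →L[ℝ] E} {M : ℝ} (hM : ∀ i, ‖T i‖ ≤ M)
    {τ : ℝ} (hτ : 0 ≤ τ) {x : ℝ → E} (hx : IsSol T τ x) :
    ‖x 0‖ ≤ Real.exp (M * τ) * ‖x τ‖ := by
  simpa using (hx.reverse hτ).norm_le (M := M) (by simpa using hM) hτ

/-- A growth bound for switched flows is one for all solutions of the convexified inclusion. -/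
theorem Growth.norm_le [Finite ι] {T : ι → E →L[ℝ] E} {lam : ℝ} (h : Growth T lam) :
    ∃ K, 0 < K ∧ ∀ τ, 0 ≤ τ → ∀ x : ℝ → E, IsSol T τ x →
      ‖x τ‖ ≤ K * Real.exp (lam * τ) * ‖x 0‖ := by
  obtain ⟨K, hK⟩ := h
  let R := {p : ℝ × (E →L[ℝ] E) // Reach T p.1 p.2}
  -- The supremum of `φ v` over switched flows is the adapted norm of `v`.
  let φ : E → R → ℝ := fun v p => Real.exp (-(lam * p.1.1)) * ‖p.1.2 v‖
  have : Nonempty R := ⟨⟨(0, 1), .one⟩⟩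
  have hφ : ∀ v p, φ v p ≤ max K 1 * ‖v‖ := fun v p => by
    have h1 := hK _ _ p.2 v
    calc φ v p ≤ Real.exp (-(lam * p.1.1)) * (K * Real.exp (lam * p.1.1) * ‖v‖) := by
          simp only [φ]; gcongr
      _ = K * ‖v‖ := by rw [Real.exp_neg]; field_simp
      _ ≤ max K 1 * ‖v‖ := by gcongr; exact le_max_left _ _
  have hb : ∀ v, BddAbove (range (φ v)) := fun v => ⟨_, by rintro _ ⟨p, rfl⟩; exact hφ v p⟩
  have hsol := fun τ hτ x hx => IsSol.le_exp (T := T) (N := fun v => ⨆ p, φ v p)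
    (K := max K 1) (lam := lam) ?_ ?_ (by positivity) (fun v => ciSup_le (hφ v)) ?_
    (τ := τ) hτ (x := x) hx
  · refine ⟨max K 1, by positivity, fun τ hτ x hx => ?_⟩
    have h1 : ‖x τ‖ ≤ ⨆ p, φ (x τ) p := by
      have := le_ciSup (hb (x τ)) ⟨(0, 1), .one⟩
      simpa [φ] using this
    refine h1.trans ((hsol τ hτ x hx).trans ?_)
    rw [mul_comm (max K 1), mul_assoc]
    gcongr
    exact ciSup_le (hφ _)
  · refine fun v w => ciSup_le fun p => ?_
    refine le_trans ?_ (add_le_add (le_ciSup (hb v) p) (le_ciSup (hb w) p))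
    simp only [φ, ← mul_add, map_add]
    gcongr
    exact norm_add_le _ _
  · refine fun a ha v => ciSup_le fun p => ?_
    refine le_trans (le_of_eq ?_) (mul_le_mul_of_nonneg_left (le_ciSup (hb v) p) ha)
    simp only [φ, map_smul, norm_smul, Real.norm_of_nonneg ha]
    ring
  · refine fun i s hs v => ciSup_le fun p => ?_
    have h1 := le_ciSup (hb v) ⟨(s + p.1.1, p.1.2 * flow (T i) s), (Reach.flow i hs).mul p.2⟩
    refine le_trans (le_of_eq ?_) (mul_le_mul_of_nonneg_left h1 (Real.exp_nonneg _))
    simp only [φ, mul_apply_eq_comp]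
    rw [← mul_assoc, ← Real.exp_add]
    congr 2
    ring

/-! ### Trajectories of matrix systems -/

section Concrete

variable {d : ℕ}

/-- The continuous linear operator `v ↦ A *ᵥ v` on `Fin d → ℝ`, which carries the sup norm. -/
noncomputable def op : Matrix (Fin d) (Fin d) ℝ ≃ₗ[ℝ] ((Fin d → ℝ) →L[ℝ] (Fin d → ℝ)) :=
  Matrix.toLin' ≪≫ₗ LinearMap.toContinuousLinearMap

theorem op_apply (A : Matrix (Fin d) (Fin d) ℝ) (v : Fin d → ℝ) : op A v = A.mulVec v := rfl

theorem commute_op {A B : Matrix (Fin d) (Fin d) ℝ} (h : A * B = B * A) :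
    Commute (op A) (op B) := by
  ext1 v
  change A.mulVec (B.mulVec v) = B.mulVec (A.mulVec v)
  rw [Matrix.mulVec_mulVec, Matrix.mulVec_mulVec, h]

theorem isSol_of_isTrajectory {A : ι → Matrix (Fin d) (Fin d) ℝ} {x : ℝ → Fin d → ℝ}
    (hx : IsTrajectory (convexHull ℝ (range A)) x) {τ : ℝ} (hτ : 0 ≤ τ) :
    IsSol (fun i => op (A i)) τ x := by
  obtain ⟨hxc, C, -, hC, hint, heq⟩ := hx
  refine ⟨hxc, fun s => (C s).mulVec (x s), hint τ hτ, fun t ht => heq t ht.1, fun s hs =>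
    ⟨op (C s), ?_, rfl⟩⟩
  have h := LinearMap.image_convexHull (op (d := d)).toLinearMap (range A)
  rw [← range_comp] at h
  have h2 : op (C s) ∈ (op (d := d)).toLinearMap '' convexHull ℝ (range A) :=
    ⟨C s, hC s hs.1, rfl⟩
  rw [h] at h2
  exact h2

/-- A trajectory on `[0, τ]` only: the integral equation of `IsTrajectory` is required just for
times in `[0, τ]`. -/
def IsLocalTrajectory (S : Set (Matrix (Fin d) (Fin d) ℝ)) (τ : ℝ) (x : ℝ → Fin d → ℝ) : Prop :=
  Continuous x ∧ ∃ A : ℝ → Matrix (Fin d) (Fin d) ℝ,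
    (∀ i j, Measurable fun s => A s i j) ∧ (∀ s, 0 ≤ s → A s ∈ S) ∧
    (∀ t, 0 ≤ t → t ≤ τ → IntervalIntegrable (fun s => (A s).mulVec (x s)) volume 0 t) ∧
    (∀ t, 0 ≤ t → t ≤ τ → x t = x 0 + ∫ s in (0:ℝ)..t, (A s).mulVec (x s))

theorem isLocalTrajectory_of_isTrajectory {S : Set (Matrix (Fin d) (Fin d) ℝ)}
    {x : ℝ → Fin d → ℝ} (hx : IsTrajectory S x) (τ : ℝ) : IsLocalTrajectory S τ x := by
  obtain ⟨hxc, C, hm, hC, hint, heq⟩ := hx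
  exact ⟨hxc, C, hm, hC, fun t h _ => hint t h, fun t h _ => heq t h⟩

/-- A trajectory on `[0, τ]` extends to a global one by using the constant law `D` after `τ`. -/
theorem IsLocalTrajectory.extend {S : Set (Matrix (Fin d) (Fin d) ℝ)} {τ : ℝ} (hτ : 0 ≤ τ)
    {x : ℝ → Fin d → ℝ} (hx : IsLocalTrajectory S τ x) {D : Matrix (Fin d) (Fin d) ℝ}
    (hD : D ∈ S) :
    ∃ y, IsTrajectory S y ∧ y 0 = x 0 ∧ ∀ u, 0 ≤ u → y (τ + u) = flow (op D) u (x τ) := by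
  obtain ⟨hxc, C, hm, hC, hint, heq⟩ := hx
  let y : ℝ → Fin d → ℝ := fun s => if s ≤ τ then x s else flow (op D) (s - τ) (x τ)
  let C' : ℝ → Matrix (Fin d) (Fin d) ℝ := fun s => if s ≤ τ then C s else D
  have hy1 : ∀ s, s ≤ τ → y s = x s := fun s hs => if_pos hs
  have hy2 : ∀ s, τ ≤ s → y s = flow (op D) (s - τ) (x τ) := fun s hs => by
    rcases hs.eq_or_lt with rfl | hs
    · simp [y, flow_zero]
    · exact if_neg hs.not_ge
  have hderiv : ∀ s, HasDerivAt (fun s => flow (op D) (s - τ) (x τ))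
      (D.mulVec (flow (op D) (s - τ) (x τ))) s := fun s => by
    have h := (hasDerivAt_flow (op D) (x τ) (s - τ)).scomp s ((hasDerivAt_id s).sub_const τ)
    rw [one_smul] at h
    exact h
  have hflowc : Continuous fun s => flow (op D) (s - τ) (x τ) :=
    continuous_iff_continuousAt.2 fun s => (hderiv s).continuousAt
  have hDc : Continuous fun s => D.mulVec (flow (op D) (s - τ) (x τ)) :=
    (op D).continuous.comp hflowc
  have hle : ∀ s, s ≤ τ → (C' s).mulVec (y s) = (C s).mulVec (x s) := fun s hs => by
    simp [C', y, hs]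
  have hgt : ∀ s, τ < s → (C' s).mulVec (y s) = D.mulVec (flow (op D) (s - τ) (x τ)) :=
    fun s hs => by simp [C', y, hs.not_ge]
  have hcong1 : ∀ t, 0 ≤ t → t ≤ τ →
      EqOn (fun s => (C s).mulVec (x s)) (fun s => (C' s).mulVec (y s)) (uIoc 0 t) :=
    fun t h0 ht s hs => by
      rw [uIoc_of_le h0] at hs
      exact (hle s (hs.2.trans ht)).symm
  have hcong2 : ∀ t, τ ≤ t →
      EqOn (fun s => D.mulVec (flow (op D) (s - τ) (x τ)))
        (fun s => (C' s).mulVec (y s)) (uIoc τ t) :=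
    fun t ht s hs => by
      rw [uIoc_of_le ht] at hs
      exact (hgt s hs.1).symm
  have hint1 : ∀ t, 0 ≤ t → t ≤ τ →
      IntervalIntegrable (fun s => (C' s).mulVec (y s)) volume 0 t := fun t h0 ht =>
    (hint t h0 ht).congr (hcong1 t h0 ht)
  have hint2 : ∀ t, τ ≤ t →
      IntervalIntegrable (fun s => (C' s).mulVec (y s)) volume τ t := fun t ht =>
    (hDc.intervalIntegrable τ t).congr (hcong2 t ht)
  have heq1 : ∀ t, 0 ≤ t → t ≤ τ → y t = y 0 + ∫ s in (0:ℝ)..t, (C' s).mulVec (y s) :=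
    fun t h0 ht => by
      rw [hy1 t ht, hy1 0 hτ, heq t h0 ht]
      congr 1
      exact intervalIntegral.integral_congr_ae (Eventually.of_forall (hcong1 t h0 ht))
  refine ⟨y, ⟨?_, C', fun i j => ?_, fun s hs => ?_, fun t ht => ?_, fun t ht => ?_⟩,
    hy1 0 hτ, fun u hu => ?_⟩
  · exact hxc.if_le hflowc continuous_id continuous_const (by rintro s rfl; simp [flow_zero])
  · have : (fun s => C' s i j) = fun s => if s ≤ τ then C s i j else D i j := by
      funext s
      simp only [C']
      split_ifs <;> rfl
    rw [this]
    exact Measurable.ite measurableSet_Iic (hm i j) measurable_const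
  · simp only [C']
    split_ifs
    exacts [hC s hs, hD]
  · rcases le_total t τ with h | h
    · exact hint1 t ht h
    · exact (hint1 τ hτ le_rfl).trans (hint2 t h)
  · rcases le_total t τ with h | h
    · exact heq1 t ht h
    · rw [← intervalIntegral.integral_add_adjacent_intervals (hint1 τ hτ le_rfl) (hint2 t h),
        ← add_assoc, ← heq1 τ hτ le_rfl, 
          ← intervalIntegral.integral_congr_ae (Eventually.of_forall (hcong2 t h)),
        intervalIntegral.integral_eq_sub_of_hasDerivAt (fun s _ => hderiv s)
          (hDc.intervalIntegrable τ t), hy1 τ le_rfl, hy2 t h]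
      simp [flow_zero]
  · rw [hy2 _ (by linarith), add_sub_cancel_left]

/-- Piecewise constant switching laws realise every switched flow by trajectories. -/
theorem Reach.exists_isTrajectory [Nonempty ι] {A : ι → Matrix (Fin d) (Fin d) ℝ} {t : ℝ}
    {P : (Fin d → ℝ) →L[ℝ] (Fin d → ℝ)} (h : Reach (fun i => op (A i)) t P) (v : Fin d → ℝ) :
    ∃ x, IsTrajectory (convexHull ℝ (range A)) x ∧ x 0 = v ∧ x t = P v := by
  have hA : ∀ i, A i ∈ convexHull ℝ (range A) := fun i => subset_convexHull _ _ ⟨i, rfl⟩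
  induction h with
  | one =>
    obtain ⟨i⟩ := ‹Nonempty ι›
    -- On the degenerate interval `[0, 0]`, the constant function is a trajectory.
    have h0 : IsLocalTrajectory (convexHull ℝ (range A)) 0 (fun _ => v) := by
      refine ⟨continuous_const, fun _ => A i, fun _ _ => measurable_const, fun _ _ => hA i,
        fun t h0 h1 => ?_, fun t h0 h1 => ?_⟩ <;> obtain rfl := le_antisymm h1 h0 <;> simp
    obtain ⟨y, hy, hy0, -⟩ := h0.extend le_rfl (hA i)
    exact ⟨y, hy, hy0, hy0⟩
  | @step t P h i s hs ih =>
    obtain ⟨x, hx, hx0, hxt⟩ := ih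
    obtain ⟨y, hy, hy0, hyt⟩ :=
      (isLocalTrajectory_of_isTrajectory hx t).extend h.nonneg (hA i)
    exact ⟨y, hy, hy0.trans hx0, by rw [hyt s hs, hxt]; rfl⟩

/-! ### The Lyapunov exponent as an infimum of growth bounds -/

theorem norm_le_eNorm (v : Fin d → ℝ) : ‖v‖ ≤ eNorm v := by
  refine (pi_norm_le_iff_of_nonneg (Real.sqrt_nonneg _)).2 fun i => Real.abs_le_sqrt ?_
  exact Finset.single_le_sum (f := fun i => v i ^ 2) (fun _ _ => sq_nonneg _) (Finset.mem_univ i)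

theorem eNorm_le (v : Fin d → ℝ) : eNorm v ≤ (√d + 1) * ‖v‖ := by
  have h : ∑ i, v i ^ 2 ≤ d * ‖v‖ ^ 2 := by
    calc ∑ i, v i ^ 2 ≤ ∑ _i : Fin d, ‖v‖ ^ 2 := Finset.sum_le_sum fun i _ =>
          sq_le_sq.2 (by rw [abs_norm]; exact norm_le_pi_norm v i)
      _ = d * ‖v‖ ^ 2 := by simp
  calc eNorm v ≤ √(d * ‖v‖ ^ 2) := Real.sqrt_le_sqrt h
    _ = √d * ‖v‖ := by rw [Real.sqrt_mul (by positivity), Real.sqrt_sq (norm_nonneg _)]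
    _ ≤ (√d + 1) * ‖v‖ := by gcongr; linarith

theorem eNorm_pos {v : Fin d → ℝ} (hv : v ≠ 0) : 0 < eNorm v :=
  (norm_pos_iff.2 hv).trans_le (norm_le_eNorm v)

/-- The set of exponential rates at time `t`, whose supremum appears in `Lambda S`. -/
def rates (S : Set (Matrix (Fin d) (Fin d) ℝ)) (t : ℝ) : Set ℝ :=
  {r | ∃ x : ℝ → Fin d → ℝ, IsTrajectory S x ∧ x 0 ≠ 0 ∧
      r = (1 / t) * Real.log (eNorm (x t) / eNorm (x 0))}

theorem exists_norm_op_le [Finite ι] (A : ι → Matrix (Fin d) (Fin d) ℝ) :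
    ∃ M : ℝ, 0 ≤ M ∧ ∀ i, ‖op (A i)‖ ≤ M := by
  obtain ⟨M, hM⟩ := (finite_range fun i => ‖op (A i)‖).bddAbove
  exact ⟨max M 0, le_max_right _ _, fun i => (hM ⟨i, rfl⟩).trans (le_max_left _ _)⟩

theorem exists_growth [Finite ι] (A : ι → Matrix (Fin d) (Fin d) ℝ) :
    ∃ M, Growth (fun i => op (A i)) M := by
  obtain ⟨M, -, hM⟩ := exists_norm_op_le A
  exact ⟨M, 1, fun t P hP v => by simpa using hP.norm_le hM v⟩

/-- A growth bound `lam` bounds all rates at time `t` by `lam + O(1 / t)`. -/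
theorem Growth.rates_le [Finite ι] {A : ι → Matrix (Fin d) (Fin d) ℝ} {lam : ℝ}
    (h : Growth (fun i => op (A i)) lam) :
    ∃ c, ∀ t, 0 < t → ∀ r ∈ rates (convexHull ℝ (range A)) t, r ≤ c / t + lam := by
  obtain ⟨K, hK0, hK⟩ := h.norm_le
  obtain ⟨M, -, hM⟩ := exists_norm_op_le A
  refine ⟨Real.log ((√d + 1) * K), fun t ht r hr => ?_⟩
  obtain ⟨x, hx, hx0, rfl⟩ := hr
  have hsol := isSol_of_isTrajectory hx ht.le
  -- Without this, `Real.log 0 = 0` would break the monotonicity of the logarithm below.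
  have hxt : x t ≠ 0 := fun h0 => by
    have := hsol.norm_zero_le hM ht.le
    rw [h0, norm_zero, mul_zero] at this
    exact hx0 (norm_le_zero_iff.1 this)
  have h1 : eNorm (x t) / eNorm (x 0) ≤ (√d + 1) * K * Real.exp (lam * t) := by
    rw [div_le_iff₀ (eNorm_pos hx0)]
    calc eNorm (x t) ≤ (√d + 1) * ‖x t‖ := eNorm_le _
      _ ≤ (√d + 1) * (K * Real.exp (lam * t) * ‖x 0‖) := by
        gcongr
        exact hK t ht.le x hsol
      _ ≤ (√d + 1) * (K * Real.exp (lam * t) * eNorm (x 0)) := by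
        gcongr
        exact norm_le_eNorm _
      _ = (√d + 1) * K * Real.exp (lam * t) * eNorm (x 0) := by ring
  have h2 := Real.log_le_log (div_pos (eNorm_pos hxt) (eNorm_pos hx0)) h1
  rw [Real.log_mul (by positivity) (by positivity), Real.log_exp] at h2
  calc 1 / t * Real.log (eNorm (x t) / eNorm (x 0))
      ≤ 1 / t * (Real.log ((√d + 1) * K) + lam * t) := by gcongr
    _ = Real.log ((√d + 1) * K) / t + lam := by field_simp

/-- If the supremum of the rates at a single positive time is below `lam`, then `lam` is a growth
bound: switched flows are cut into pieces of duration `t₀`. -/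
theorem growth_of_sSup_rates_lt [Finite ι] [Nonempty ι] {A : ι → Matrix (Fin d) (Fin d) ℝ}
    {t₀ lam : ℝ} (ht₀ : 0 < t₀) (h : sSup (rates (convexHull ℝ (range A)) t₀) < lam) :
    Growth (fun i => op (A i)) lam := by
  obtain ⟨M, hM0, hM⟩ := exists_norm_op_le A
  have hbdd : BddAbove (rates (convexHull ℝ (range A)) t₀) := by
    obtain ⟨M', hM'⟩ := exists_growth A
    obtain ⟨c, hc⟩ := hM'.rates_le
    exact ⟨_, hc t₀ ht₀⟩
  have hstep : ∀ P, Reach (fun i => op (A i)) t₀ P → ∀ v,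
      eNorm (P v) ≤ Real.exp (lam * t₀) * eNorm v := fun P hP v => by
    by_cases hv : v = 0
    · simp [hv, eNorm]
    by_cases hPv : P v = 0
    · rw [hPv]
      have := eNorm_pos hv
      simp only [eNorm, Pi.zero_apply]
      simp only [eNorm] at this
      simp
      positivity
    obtain ⟨x, hx, rfl, hxt⟩ := hP.exists_isTrajectory v
    have h1 := le_csSup hbdd ⟨x, hx, hv, rfl⟩
    rw [← hxt] at hPv ⊢
    rw [← div_le_iff₀ (eNorm_pos hv), ← Real.log_le_iff_le_exp
      (div_pos (eNorm_pos hPv) (eNorm_pos hv))]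
    have h2 := h1.trans h.le
    rw [one_div, inv_mul_le_iff₀ ht₀] at h2
    linarith
  set C := (√d + 1) * Real.exp ((M + |lam|) * t₀) with hC
  have hall : ∀ n : ℕ, ∀ t P, Reach (fun i => op (A i)) t P → t ≤ n * t₀ → ∀ v,
      eNorm (P v) ≤ C * Real.exp (lam * t) * eNorm v := by
    have hsmall : ∀ t P, Reach (fun i => op (A i)) t P → t ≤ t₀ → ∀ v,
        eNorm (P v) ≤ C * Real.exp (lam * t) * eNorm v := fun t P hP ht v => by
      have ht0 := hP.nonneg
      have hexp : M * t ≤ (M + |lam|) * t₀ + lam * t := by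
        have h1 : M * t ≤ M * t₀ := by gcongr
        have h2 : -(lam * t) ≤ |lam| * t₀ := by
          rw [← neg_mul]
          exact (mul_le_mul_of_nonneg_right (neg_le_abs lam) ht0).trans (by gcongr)
        linarith
      calc eNorm (P v) ≤ (√d + 1) * ‖P v‖ := eNorm_le _
        _ ≤ (√d + 1) * (Real.exp (M * t) * ‖v‖) := by gcongr; exact hP.norm_le hM v
        _ ≤ (√d + 1) * (Real.exp ((M + |lam|) * t₀ + lam * t) * eNorm v) := by
          gcongr
          exact norm_le_eNorm v
        _ = C * Real.exp (lam * t) * eNorm v := by rw [hC, Real.exp_add]; ring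
    intro n
    induction n with
    | zero => exact fun t P hP ht => hsmall t P hP (by simp at ht; linarith)
    | succ n ih =>
      intro t P hP ht v
      rcases le_total t t₀ with h' | h'
      · exact hsmall t P hP h' v
      obtain ⟨Q, R, hQ, hR, rfl⟩ := hP.split ht₀.le h'
      push_cast at ht
      calc eNorm (R (Q v)) ≤ C * Real.exp (lam * (t - t₀)) * eNorm (Q v) :=
            ih _ _ hR (by linarith) _
        _ ≤ C * Real.exp (lam * (t - t₀)) * (Real.exp (lam * t₀) * eNorm v) := by
          gcongr
          exact hstep Q hQ v
        _ = C * (Real.exp (lam * (t - t₀)) * Real.exp (lam * t₀)) * eNorm v := by ring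
        _ = C * Real.exp (lam * t) * eNorm v := by rw [← Real.exp_add]; ring_nf
  refine ⟨C * (√d + 1), fun t P hP v => ?_⟩
  obtain ⟨n, hn⟩ := exists_nat_ge (t / t₀)
  calc ‖P v‖ ≤ eNorm (P v) := norm_le_eNorm _
    _ ≤ C * Real.exp (lam * t) * eNorm v := hall n t P hP ((div_le_iff₀ ht₀).1 hn) v
    _ ≤ C * Real.exp (lam * t) * ((√d + 1) * ‖v‖) := by gcongr; exact eNorm_le v
    _ = C * (√d + 1) * Real.exp (lam * t) * ‖v‖ := by ring

/-- If all `op (A i)` have norm at most `M`, every growth bound is at least `-M`. -/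
theorem bddBelow_growth [Finite ι] [Nonempty ι] [NeZero d] (A : ι → Matrix (Fin d) (Fin d) ℝ) :
    BddBelow {lam | Growth (fun i => op (A i)) lam} := by
  obtain ⟨M, hM0, hM⟩ := exists_norm_op_le A
  refine ⟨-M, fun lam hlam => ?_⟩
  by_contra! hlt
  obtain ⟨K, hK0, hK⟩ := Growth.norm_le hlam
  obtain ⟨i⟩ := ‹Nonempty ι›
  obtain ⟨v, hv⟩ := exists_ne (0 : Fin d → ℝ)
  -- At this time `K * exp ((lam + M) * t) = K / (K + 1) < 1`, contradicting the lower bound on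
  -- the norm of a trajectory.
  set t := Real.log (K + 1) / (-(lam + M)) with ht
  have hneg : 0 < -(lam + M) := by linarith
  have ht0 : 0 ≤ t := div_nonneg (Real.log_nonneg (by linarith)) hneg.le
  obtain ⟨x, hx, rfl, -⟩ :=
    (Reach.flow (T := fun i => op (A i)) i ht0).exists_isTrajectory (ι := ι) v
  have hsol := isSol_of_isTrajectory hx ht0
  have h1 := hsol.norm_zero_le hM ht0
  have h2 := hK t ht0 x hsol
  have h3 : Real.exp (M * t) * Real.exp (lam * t) = (K + 1)⁻¹ := by
    rw [← Real.exp_add, show M * t + lam * t = -(-(lam + M) * t) by ring, ht,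
      mul_div_cancel₀ _ hneg.ne', Real.exp_neg, Real.exp_log (by linarith)]
  have h4 : ‖x 0‖ ≤ K / (K + 1) * ‖x 0‖ :=
    calc ‖x 0‖ ≤ Real.exp (M * t) * (K * Real.exp (lam * t) * ‖x 0‖) := h1.trans (by gcongr)
      _ = K * (Real.exp (M * t) * Real.exp (lam * t)) * ‖x 0‖ := by ring
      _ = K / (K + 1) * ‖x 0‖ := by rw [h3, div_eq_mul_inv]
  have h5 : K / (K + 1) < 1 := (div_lt_one (by linarith)).2 (by linarith)
  have h6 := mul_lt_mul_of_pos_right h5 (norm_pos_iff.2 hv)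
  linarith

/-- The Lyapunov exponent of the convex hull of a finite family is the infimum of its growth
bounds. The limit in its definition is shown to exist along the way. -/
theorem Lambda_eq [Finite ι] [Nonempty ι] [NeZero d] (A : ι → Matrix (Fin d) (Fin d) ℝ) :
    Lambda (convexHull ℝ (range A)) = sInf {lam | Growth (fun i => op (A i)) lam} := by
  set G := {lam | Growth (fun i => op (A i)) lam} with hG
  have hGb : BddBelow G := bddBelow_growth A
  have hGn : G.Nonempty := exists_growth A
  have hlow : ∀ t, 0 < t → sInf G ≤ sSup (rates (convexHull ℝ (range A)) t) := fun t ht => by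
    by_contra! hlt
    obtain ⟨mu, h1, h2⟩ := exists_between hlt
    exact (csInf_le hGb (growth_of_sSup_rates_lt ht h1)).not_gt h2
  have hne : ∀ t, 0 < t → (rates (convexHull ℝ (range A)) t).Nonempty := fun t ht => by
    obtain ⟨i⟩ := ‹Nonempty ι›
    obtain ⟨v, hv⟩ := exists_ne (0 : Fin d → ℝ)
    obtain ⟨x, hx, rfl, -⟩ :=
      (Reach.flow (T := fun i => op (A i)) i ht.le).exists_isTrajectory (ι := ι) v
    exact ⟨_, x, hx, hv, rfl⟩
  refine Tendsto.limUnder_eq (tendsto_order.2 ⟨fun a ha => ?_, fun b hb => ?_⟩)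
  · filter_upwards [eventually_gt_atTop 0] with t ht
    exact ha.trans_le (hlow t ht)
  · obtain ⟨mu, hmu, hmub⟩ := exists_lt_of_csInf_lt hGn hb
    obtain ⟨c, hc⟩ := Growth.rates_le hmu
    have hlim : Tendsto (fun t : ℝ => c / t + mu) atTop (𝓝 (0 + mu)) :=
      (tendsto_const_nhds.div_atTop tendsto_id).add_const mu
    rw [zero_add] at hlim
    filter_upwards [hlim.eventually (gt_mem_nhds hmub), eventually_gt_atTop 0] with t h1 h2
    exact (csSup_le (hne t h2) (hc t h2)).trans_lt h1

end Concrete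

end Switching

theorem stmt_3 {d N₁ N₂ : ℕ} (A : Fin (N₁ + 1) → Matrix (Fin d) (Fin d) ℝ)
    (B : Fin (N₂ + 1) → Matrix (Fin d) (Fin d) ℝ)
    (hcomm : ∀ i j, A i * B j = B j * A i) :
    Lambda (convexHull ℝ (Set.range A ∪ Set.range B)) =
      max (Lambda (convexHull ℝ (Set.range A))) (Lambda (convexHull ℝ (Set.range B))) := by
  rcases Nat.eq_zero_or_pos d with rfl | hd
  -- In dimension zero there is no nonzero initial value, so all suprema are `sSup ∅ = 0`.
  · have h : ∀ S : Set (Matrix (Fin 0) (Fin 0) ℝ), Lambda S = limUnder atTop fun _ : ℝ => (0 : ℝ) := fun S => by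
      simp [Lambda, eq_iff_true_of_subsingleton]
    rw [h, h (convexHull ℝ (Set.range A)), h (convexHull ℝ (Set.range B)), max_self]
  have : NeZero d := ⟨hd.ne'⟩
  have hG := Switching.growth_sum_iff (T := fun i => Switching.op (A i))
    (U := fun j => Switching.op (B j)) fun i j => Switching.commute_op (hcomm i j)
  have hsum : (fun k => Switching.op (Sum.elim A B k)) =
      Sum.elim (fun i => Switching.op (A i)) fun j => Switching.op (B j) := by
    funext k
    cases k <;> rfl
  have hbC := Switching.bddBelow_growth (Sum.elim A B)
  have hbA := Switching.bddBelow_growth A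
  have hbB := Switching.bddBelow_growth B
  rw [← Set.Sum.elim_range, Switching.Lambda_eq, Switching.Lambda_eq, Switching.Lambda_eq]
  have hnC := Switching.exists_growth (Sum.elim A B)
  have hnA := Switching.exists_growth A
  have hnB := Switching.exists_growth B
  rw [hsum] at hbC hnC ⊢
  apply le_antisymm
  · refine le_of_forall_gt_imp_ge_of_dense fun b hb => ?_
    obtain ⟨hb1, hb2⟩ := max_lt_iff.1 hb
    obtain ⟨a₁, h1, h1'⟩ := exists_lt_of_csInf_lt hnA hb1
    obtain ⟨a₂, h2, h2'⟩ := exists_lt_of_csInf_lt hnB hb2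
    exact csInf_le hbC ((hG b).2 ⟨Switching.Growth.mono h1 h1'.le, Switching.Growth.mono h2 h2'.le⟩)
  · exact max_le (csInf_le_csInf hbA hnC fun _ h => ((hG _).1 h).1)
      (csInf_le_csInf hbB hnC fun _ h => ((hG _).1 h).2)
end

section
/- Let A₀,…,A_{N₁}, B₀,…,B_{N₂} ∈ M_d(ℝ) and suppose that A_i·B_j = B_j·A_i for every i ∈ {0,…,N₁} and j ∈ {0,…,N₂}. Let 𝖠 and 𝖡 denote the convex hulls of {A₀,…,A_{N₁}} and {B₀,…,B_{N₂}} respectively, and let 𝖣 denote the convex hull of {A_i + B_j : 0 ≤ i ≤ N₁, 0 ≤ j ≤ N₂}. Then Λ(𝖣) ≤ Λ(𝖠) + Λ(𝖡). -/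
/-!
Write the law of a trajectory `x` of the summed system as `D s ∈ conv {A i + B j}`. Since
`conv {A i + B j} = conv {A i} + conv {B j}`, each `D s` splits as `P s + Q s`, and the splitting
can be made measurable in `s` by choosing the one whose first part has least sum of squared
entries (`exists_measurable_splitting`, `exists_law_splitting`). Every `P s` commutes with every
`Q r`. The flow `Φ` of `P` is the sum of a Peano–Baker series in the `P s`, so it commutes with
every `Q r` as well (`exists_flow`); the product rule for integrals then shows that, with `Ψ` the
flow of `Q`, the product `Φ Ψ` is the flow of `D` (`flow_mul`). By uniqueness
`x t = Φ t (Ψ t (x 0))`, so `x` reaches `x t` by following a trajectory of the second system from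
`x 0` to `u = Ψ t (x 0)` and one of the first system from `u` (`exists_factor`). Hence the
logarithmic growth of `x` at time `t` is the sum of the growths of these two trajectories, and the
suprema of the growths satisfy the claimed inequality for each `t ≥ 0`.

It remains to pass to the limit. `Lambda` is a `limUnder`, so the limit has to be shown to exist
(`tendsto_Lambda`). The supremum of the growths is subadditive in `t`, because trajectories can be
restarted, and at most linear in absolute value, by Grönwall's inequality forwards and backwards in
time, so Fekete's lemma in continuous time applies (`tendsto_div_of_subadditive`). The backward
estimate also shows that nonzero trajectories never vanish, so no logarithm of zero occurs.
-/

open MeasureTheory Filter Matrix Kronecker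

namespace Switch

/-! ### Flows of bounded measurable laws -/

lemma intervalIntegrable_of_norm_le {E : Type*} [NormedAddCommGroup E] {f : ℝ → E} {g : ℝ → ℝ}
    (hf : AEStronglyMeasurable f volume) (hg : Continuous g) (h : ∀ s, ‖f s‖ ≤ g s) (a b : ℝ) :
    IntervalIntegrable f volume a b :=
  (hg.intervalIntegrable a b).mono_fun' hf.restrict (ae_of_all _ h)

/-- Terms of the Peano–Baker series for the equation `Φ' = a Φ`, `Φ 0 = 1`, extended to
negative times by their value at time `0`. -/
noncomputable def peanoBaker {R : Type*} [NormedRing R] [NormedAlgebra ℝ R] (a : ℝ → R) :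
    ℕ → ℝ → R
  | 0 => fun _ => 1
  | n + 1 => fun t => ∫ s in (0:ℝ)..(max t 0), a s * peanoBaker a n s

lemma norm_law_mul_le {R : Type*} [NormedRing R] {a y : ℝ → R} {K : ℝ} (hK : ∀ s, ‖a s‖ ≤ K) (s : ℝ) :
    ‖a s * y s‖ ≤ K * ‖y s‖ :=
  (norm_mul_le _ _).trans (mul_le_mul_of_nonneg_right (hK s) (norm_nonneg _))

lemma intervalIntegrable_law_mul {R : Type*} [NormedRing R] {a y : ℝ → R} {K : ℝ} (ha : StronglyMeasurable a)
    (hK : ∀ s, ‖a s‖ ≤ K) (hy : Continuous y) (u v : ℝ) :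
    IntervalIntegrable (fun s => a s * y s) volume u v :=
  intervalIntegrable_of_norm_le
    (ha.aestronglyMeasurable.mul hy.aestronglyMeasurable)
    (continuous_const.mul hy.norm) (norm_law_mul_le hK) u v

section Flow

variable {R : Type*} [NormedRing R] [NormedAlgebra ℝ R]

lemma peanoBaker_continuous {a : ℝ → R} {K : ℝ} (ha : StronglyMeasurable a)
    (hK : ∀ s, ‖a s‖ ≤ K) (n : ℕ) : Continuous (peanoBaker a n) := by
  induction n with
  | zero => exact continuous_const
  | succ n ih =>
    exact (intervalIntegral.continuous_primitive
      (intervalIntegrable_law_mul ha hK ih) 0).comp (continuous_id.max continuous_const)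

lemma peanoBaker_bound {a : ℝ → R} {K : ℝ} (hK : ∀ s, ‖a s‖ ≤ K) (n : ℕ) (t : ℝ) :
    ‖peanoBaker a n t‖ ≤ ‖(1 : R)‖ * ((K * max t 0) ^ n / n.factorial) := by
  induction n generalizing t with
  | zero => simp [peanoBaker]
  | succ n ih =>
    have hK0 : 0 ≤ K := (norm_nonneg _).trans (hK 0)
    have h0 : (0:ℝ) ≤ max t 0 := le_max_right _ _
    have hint : ∀ s : ℝ, s ∈ Set.Ioc 0 (max t 0) → ‖a s * peanoBaker a n s‖ ≤
        (‖(1 : R)‖ * K ^ (n + 1) / n.factorial) * s ^ n := by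
      intro s hs
      have h1 := ih s
      rw [max_eq_left hs.1.le] at h1
      refine (norm_law_mul_le hK s).trans ((mul_le_mul_of_nonneg_left h1 hK0).trans (le_of_eq ?_))
      rw [mul_pow]; ring
    refine (intervalIntegral.norm_integral_le_of_norm_le h0 (ae_of_all _ hint)
      (Continuous.intervalIntegrable (by fun_prop) _ _)).trans (le_of_eq ?_)
    rw [intervalIntegral.integral_const_mul, integral_pow, Nat.factorial_succ, mul_pow]
    have h2 : (n.factorial : ℝ) ≠ 0 := by positivity
    have h3 : (n : ℝ) + 1 ≠ 0 := by positivity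
    push_cast
    field_simp
    simp

lemma peanoBaker_commute {a : ℝ → R} [CompleteSpace R] {K : ℝ} (ha : StronglyMeasurable a)
    (hK : ∀ s, ‖a s‖ ≤ K) {c : R} (hc : ∀ s, Commute c (a s)) (n : ℕ) (t : ℝ) :
    Commute c (peanoBaker a n t) := by
  induction n generalizing t with
  | zero => exact Commute.one_right c
  | succ n ih =>
    have hi := intervalIntegrable_law_mul ha hK (peanoBaker_continuous ha hK n) 0 (max t 0)
    have h1 := (ContinuousLinearMap.mul ℝ R c).intervalIntegral_comp_comm hi
    have h2 := ((ContinuousLinearMap.mul ℝ R).flip c).intervalIntegral_comp_comm hi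
    simp only [ContinuousLinearMap.mul_apply', ContinuousLinearMap.flip_apply] at h1 h2
    change c * (∫ s in (0:ℝ)..(max t 0), a s * peanoBaker a n s) =
      (∫ s in (0:ℝ)..(max t 0), a s * peanoBaker a n s) * c
    rw [← h1, ← h2]
    congr 1
    funext s
    exact ((hc s).mul_right (ih s)).eq

/-- Existence of the flow of a bounded measurable switching law: the sum of the Peano–Baker
series. Whatever commutes with all values of the law commutes with the flow. -/
lemma exists_flow [CompleteSpace R] {a : ℝ → R} {K : ℝ} (ha : StronglyMeasurable a)
    (hK : ∀ s, ‖a s‖ ≤ K) :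
    ∃ Φ : ℝ → R, Continuous Φ ∧ (∀ t, 0 ≤ t → Φ t = 1 + ∫ s in (0:ℝ)..t, a s * Φ s) ∧
      ∀ c, (∀ s, Commute c (a s)) → ∀ t, Commute c (Φ t) := by
  have hK0 : 0 ≤ K := (norm_nonneg _).trans (hK 0)
  have hb : ∀ T : ℝ, ∀ n, ∀ t ∈ Set.Iic T, ‖peanoBaker a n t‖ ≤
      ‖(1 : R)‖ * ((K * max T 0) ^ n / n.factorial) := by
    intro T n t ht
    refine (peanoBaker_bound hK n t).trans ?_
    have : max t 0 ≤ max T 0 := max_le_max_right _ ht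
    have h0 : (0:ℝ) ≤ max t 0 := le_max_right _ _
    gcongr
  have hsum : ∀ T : ℝ, Summable fun n : ℕ => ‖(1 : R)‖ * ((K * max T 0) ^ n / n.factorial) :=
    fun T => (Real.summable_pow_div_factorial _).mul_left _
  have hs : ∀ t, Summable fun n => peanoBaker a n t := fun t =>
    Summable.of_norm_bounded (hsum t) fun n => hb t n t (Set.mem_Iic.2 le_rfl)
  have hcont : Continuous fun t => ∑' n, peanoBaker a n t := by
    rw [continuous_iff_continuousAt]
    intro t
    exact (continuousOn_tsum (fun n => (peanoBaker_continuous ha hK n).continuousOn)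
      (hsum (t + 1)) (hb (t + 1))).continuousAt (Iic_mem_nhds (by linarith))
  refine ⟨fun t => ∑' n, peanoBaker a n t, hcont, ?_, ?_⟩
  · intro t ht
    have key : HasSum (fun n => ∫ s in (0:ℝ)..t, a s * peanoBaker a n s)
        (∫ s in (0:ℝ)..t, a s * ∑' n, peanoBaker a n s) := by
      refine intervalIntegral.hasSum_integral_of_dominated_convergence
        (fun n _ => K * (‖(1 : R)‖ * ((K * max t 0) ^ n / n.factorial)))
        (fun n => (ha.aestronglyMeasurable.mul
          (peanoBaker_continuous ha hK n).aestronglyMeasurable).restrict) ?_ ?_ ?_ ?_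
      · refine fun n => ae_of_all _ fun s hs => (norm_law_mul_le hK s).trans ?_
        rw [Set.uIoc_of_le ht] at hs
        exact mul_le_mul_of_nonneg_left (hb t n s hs.2) hK0
      · exact ae_of_all _ fun s _ => (hsum t).mul_left K
      · exact intervalIntegrable_const
      · exact ae_of_all _ fun s _ => (hs s).hasSum.mul_left (a s)
    change ∑' n, peanoBaker a n t = _
    rw [(hs t).tsum_eq_zero_add, ← key.tsum_eq]
    simp [peanoBaker, max_eq_left ht]
  · intro c hc t
    change c * _ = _ * c
    rw [← (hs t).tsum_mul_left, ← (hs t).tsum_mul_right]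
    exact tsum_congr fun n => (peanoBaker_commute ha hK hc n t).eq

/-! ### Products of commuting flows -/

/-- Product rule in integrated form: `f g` minus its candidate primitive has increments of
quadratic order, hence derivative zero. -/
lemma integral_product_rule [CompleteSpace R] {f g f' g' : ℝ → R} {T C : ℝ} (hT : 0 ≤ T)
    (hf : Continuous f) (hg : Continuous g)
    (hf' : ∀ a b, IntervalIntegrable f' volume a b) (hg' : ∀ a b, IntervalIntegrable g' volume a b)
    (hbf : ∀ s ∈ Set.Icc 0 T, ‖f' s‖ ≤ C) (hbg : ∀ s ∈ Set.Icc 0 T, ‖g' s‖ ≤ C)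
    (hff : ∀ t, 0 ≤ t → f t = f 0 + ∫ s in (0:ℝ)..t, f' s)
    (hgg : ∀ t, 0 ≤ t → g t = g 0 + ∫ s in (0:ℝ)..t, g' s) :
    f T * g T = f 0 * g 0 + ∫ s in (0:ℝ)..T, (f' s * g s + f s * g' s) := by
  have hC : 0 ≤ C := (norm_nonneg _).trans (hbf 0 ⟨le_rfl, hT⟩)
  have hi1 : ∀ a b, IntervalIntegrable (fun s => f' s * g s) volume a b := fun a b =>
    (hf' a b).mul_continuousOn hg.continuousOn
  have hi2 : ∀ a b, IntervalIntegrable (fun s => f s * g' s) volume a b := fun a b =>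
    (hg' a b).continuousOn_mul hf.continuousOn
  have hi : ∀ a b, IntervalIntegrable (fun s => f' s * g s + f s * g' s) volume a b :=
    fun a b => (hi1 a b).add (hi2 a b)
  -- Increments of `f` and `g`.
  have inc : ∀ (p p' : ℝ → R), (∀ a b, IntervalIntegrable p' volume a b) →
      (∀ t, 0 ≤ t → p t = p 0 + ∫ s in (0:ℝ)..t, p' s) →
      ∀ a b, 0 ≤ a → a ≤ b → p b - p a = ∫ s in a..b, p' s := by
    intro p p' h1 h2 a b ha hab
    rw [h2 b (ha.trans hab), h2 a ha, ← intervalIntegral.integral_add_adjacent_intervals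
      (h1 0 a) (h1 a b)]
    abel
  have lip : ∀ (p p' : ℝ → R), (∀ a b, IntervalIntegrable p' volume a b) →
      (∀ t, 0 ≤ t → p t = p 0 + ∫ s in (0:ℝ)..t, p' s) →
      (∀ s ∈ Set.Icc 0 T, ‖p' s‖ ≤ C) →
      ∀ a b, 0 ≤ a → a ≤ b → b ≤ T → ‖p b - p a‖ ≤ C * (b - a) := by
    intro p p' h1 h2 h3 a b ha hab hb
    rw [inc p p' h1 h2 a b ha hab]
    have := intervalIntegral.norm_integral_le_of_norm_le_const (f := p') (a := a) (b := b) (C := C)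
      (fun s hs => by
        rw [Set.uIoc_of_le hab] at hs
        exact h3 s ⟨ha.trans hs.1.le, hs.2.trans hb⟩)
    rwa [abs_of_nonneg (sub_nonneg.2 hab)] at this
  set h : ℝ → R := fun t => f t * g t - ∫ s in (0:ℝ)..t, (f' s * g s + f s * g' s) with hh
  have hcont : Continuous h :=
    (hf.mul hg).sub (intervalIntegral.continuous_primitive hi 0)
  have hquad : ∀ a b, 0 ≤ a → a ≤ b → b ≤ T →
      ‖h b - h a‖ ≤ 2 * C ^ 2 * (b - a) * (b - a) := by
    intro a b ha hab hb
    have e : h b - h a =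
        ∫ s in a..b, (f' s * (g b - g s) + (f a - f s) * g' s) := by
      have e1 : ∫ s in a..b, f' s * g b = (f b - f a) * g b := by
        rw [inc f f' hf' hff a b ha hab]
        simpa using ((ContinuousLinearMap.mul ℝ R).flip (g b)).intervalIntegral_comp_comm (hf' a b)
      have e2 : ∫ s in a..b, f a * g' s = f a * (g b - g a) := by
        rw [inc g g' hg' hgg a b ha hab]
        simpa using (ContinuousLinearMap.mul ℝ R (f a)).intervalIntegral_comp_comm (hg' a b)
      have e3 : ∫ s in (0:ℝ)..b, (f' s * g s + f s * g' s) =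
          (∫ s in (0:ℝ)..a, (f' s * g s + f s * g' s)) +
            ∫ s in a..b, (f' s * g s + f s * g' s) :=
        (intervalIntegral.integral_add_adjacent_intervals (hi 0 a) (hi a b)).symm
      have i1 : IntervalIntegrable (fun s => f' s * g b) volume a b :=
        (hf' a b).mul_continuousOn continuousOn_const
      have i2 : IntervalIntegrable (fun s => f a * g' s) volume a b :=
        (hg' a b).continuousOn_mul continuousOn_const
      have e4 : (∫ s in a..b, (f' s * (g b - g s) + (f a - f s) * g' s)) =
          ((∫ s in a..b, f' s * g b) + ∫ s in a..b, f a * g' s) -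
            ∫ s in a..b, (f' s * g s + f s * g' s) := by
        rw [← intervalIntegral.integral_add i1 i2, ← intervalIntegral.integral_sub (i1.add i2)
          (hi a b)]
        congr 1
        funext s
        simp only [mul_sub, sub_mul]
        abel
      rw [e4, e1, e2]
      simp only [hh, e3, mul_sub, sub_mul]
      abel
    rw [e]
    have := intervalIntegral.norm_integral_le_of_norm_le_const
      (f := fun s => f' s * (g b - g s) + (f a - f s) * g' s) (a := a) (b := b)
      (C := 2 * C ^ 2 * (b - a)) (fun s hs => by
        rw [Set.uIoc_of_le hab] at hs
        have hs0 : 0 ≤ s := ha.trans hs.1.le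
        have hsT : s ≤ T := hs.2.trans hb
        have b1 := lip g g' hg' hgg hbg s b hs0 hs.2 hb
        have b2 := lip f f' hf' hff hbf a s ha hs.1.le hsT
        rw [norm_sub_rev] at b2
        have c1 : ‖f' s * (g b - g s)‖ ≤ C * (C * (b - a)) :=
          (norm_mul_le _ _).trans (mul_le_mul (hbf s ⟨hs0, hsT⟩)
            (b1.trans (mul_le_mul_of_nonneg_left (by linarith [hs.1]) hC)) (norm_nonneg _) hC)
        have c2 : ‖(f a - f s) * g' s‖ ≤ (C * (b - a)) * C :=
          (norm_mul_le _ _).trans (mul_le_mul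
            (b2.trans (mul_le_mul_of_nonneg_left (by linarith [hs.2]) hC))
            (hbg s ⟨hs0, hsT⟩) (norm_nonneg _) (mul_nonneg hC (by linarith)))
        refine (norm_add_le _ _).trans ?_
        nlinarith)
    rwa [abs_of_nonneg (sub_nonneg.2 hab)] at this
  have hder : ∀ t ∈ Set.Ico 0 T, HasDerivWithinAt h 0 (Set.Ici t) t := by
    intro t ht
    rw [hasDerivWithinAt_iff_isLittleO]
    simp only [smul_zero, sub_zero]
    have hO : (fun x' => h x' - h t) =O[nhdsWithin t (Set.Ici t)]
        fun x' => (x' - t) * (x' - t) := by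
      refine Asymptotics.IsBigO.of_bound (2 * C ^ 2) ?_
      have : Set.Icc t T ∈ nhdsWithin t (Set.Ici t) := Icc_mem_nhdsGE ht.2
      filter_upwards [this] with b hb
      refine (hquad t b ht.1 hb.1 hb.2).trans (le_of_eq ?_)
      rw [Real.norm_of_nonneg (mul_self_nonneg _)]
      ring
    have ho : (fun x' : ℝ => (x' - t) * (x' - t)) =o[nhdsWithin t (Set.Ici t)]
        fun x' => (x' - t) := by
      have h1 : (fun x' : ℝ => x' - t) =o[nhdsWithin t (Set.Ici t)] fun _ => (1:ℝ) := by
        rw [Asymptotics.isLittleO_one_iff]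
        have : Tendsto (fun x' : ℝ => x' - t) (nhds t) (nhds (t - t)) :=
          (continuous_id.sub continuous_const).tendsto t
        rw [sub_self] at this
        exact this.mono_left nhdsWithin_le_nhds
      simpa using h1.mul_isBigO (Asymptotics.isBigO_refl (fun x' : ℝ => x' - t) _)
    exact hO.trans_isLittleO ho
  have := constant_of_has_deriv_right_zero hcont.continuousOn hder T ⟨hT, le_rfl⟩
  simp only [hh, intervalIntegral.integral_same, sub_zero] at this
  rw [← this]
  abel

/-- Flows of commuting switching laws multiply to the flow of the sum of the laws. -/
lemma flow_mul [CompleteSpace R] {a b Φ Ψ : ℝ → R} {K : ℝ}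
    (ha : StronglyMeasurable a) (hb : StronglyMeasurable b)
    (hKa : ∀ s, ‖a s‖ ≤ K) (hKb : ∀ s, ‖b s‖ ≤ K)
    (hΦ : Continuous Φ) (hΨ : Continuous Ψ)
    (hΦe : ∀ t, 0 ≤ t → Φ t = 1 + ∫ s in (0:ℝ)..t, a s * Φ s)
    (hΨe : ∀ t, 0 ≤ t → Ψ t = 1 + ∫ s in (0:ℝ)..t, b s * Ψ s)
    (hcomm : ∀ s t, Commute (b s) (Φ t)) {t : ℝ} (ht : 0 ≤ t) :
    Φ t * Ψ t = 1 + ∫ s in (0:ℝ)..t, (a s + b s) * (Φ s * Ψ s) := by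
  have hK0 : 0 ≤ K := (norm_nonneg _).trans (hKa 0)
  have hΦ0 : Φ 0 = 1 := by simpa using hΦe 0 le_rfl
  have hΨ0 : Ψ 0 = 1 := by simpa using hΨe 0 le_rfl
  obtain ⟨C₁, hC₁⟩ := (isCompact_Icc (a := 0) (b := t)).exists_bound_of_continuousOn
    hΦ.continuousOn
  obtain ⟨C₂, hC₂⟩ := (isCompact_Icc (a := 0) (b := t)).exists_bound_of_continuousOn
    hΨ.continuousOn
  have h := integral_product_rule (f := Φ) (g := Ψ) (C := K * max C₁ C₂) ht hΦ hΨ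
    (intervalIntegrable_law_mul ha hKa hΦ) (intervalIntegrable_law_mul hb hKb hΨ)
    (fun s hs => (norm_law_mul_le hKa s).trans
      (mul_le_mul_of_nonneg_left ((hC₁ s hs).trans (le_max_left _ _)) hK0))
    (fun s hs => (norm_law_mul_le hKb s).trans
      (mul_le_mul_of_nonneg_left ((hC₂ s hs).trans (le_max_right _ _)) hK0))
    (fun t ht => by rw [hΦ0]; exact hΦe t ht) (fun t ht => by rw [hΨ0]; exact hΨe t ht)
  rw [h, hΦ0, hΨ0, one_mul]
  congr 2
  funext s
  rw [add_mul, mul_assoc, ← mul_assoc (Φ s), ← (hcomm s s).eq, mul_assoc]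

end Flow

/-! ### Grönwall's inequality -/

/-- Integral form of Grönwall's inequality. -/
lemma integral_gronwall {u : ℝ → ℝ} (hu : Continuous u) {c K T : ℝ} (hT : 0 ≤ T)
    (hK : 0 ≤ K) (hc : 0 ≤ c) (hu0 : ∀ t, 0 ≤ u t)
    (h : ∀ t ∈ Set.Icc 0 T, u t ≤ c + K * ∫ s in (0:ℝ)..t, u s) :
    u T ≤ c * Real.exp (K * T) := by
  have hF : ∀ t ∈ Set.Icc 0 T, 0 ≤ c + K * ∫ s in (0:ℝ)..t, u s := fun t ht =>
    (hu0 t).trans (h t ht)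
  have hd : ∀ t, HasDerivAt (fun t => c + K * ∫ s in (0:ℝ)..t, u s) (K * u t) t := fun t =>
    ((intervalIntegral.integral_hasDerivAt_right (hu.intervalIntegrable _ _)
      (hu.stronglyMeasurableAtFilter _ _) hu.continuousAt).const_mul K).const_add c
  have := norm_le_gronwallBound_of_norm_deriv_right_le (δ := c) (K := K) (ε := 0)
    (f := fun t => c + K * ∫ s in (0:ℝ)..t, u s) (f' := fun t => K * u t) (a := 0) (b := T)
    (fun t _ => (hd t).continuousAt.continuousWithinAt)
    (fun t _ => (hd t).hasDerivWithinAt)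
    (by simp [abs_of_nonneg hc])
    (fun t ht => by
      have ht' := Set.Ico_subset_Icc_self ht
      rw [Real.norm_of_nonneg (mul_nonneg hK (hu0 t)), Real.norm_of_nonneg (hF t ht'), add_zero]
      exact mul_le_mul_of_nonneg_left (h t ht') hK) T ⟨hT, le_rfl⟩
  rw [gronwallBound_ε0, Real.norm_of_nonneg (hF T ⟨hT, le_rfl⟩), sub_zero] at this
  exact (h T ⟨hT, le_rfl⟩).trans this

/-! ### Measurable splitting in a sum of compact convex sets -/

open scoped Pointwise in
/-- A fixed strictly midpoint-convex function has a unique minimiser on each compact fibre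
`S ∩ (v - T)`; this minimiser depends measurably on `v`. -/
lemma exists_measurable_splitting {E : Type*} [AddCommGroup E] [Module ℝ E] [TopologicalSpace E]
    [IsTopologicalAddGroup E] [T2Space E] [MeasurableSpace E] [BorelSpace E]
    {f : E → ℝ} (hf : Continuous f)
    (hconv : ∀ x y, x ≠ y → f ((1/2 : ℝ) • x + (1/2 : ℝ) • y) < 1/2 * f x + 1/2 * f y)
    {S T : Set E} (hS : IsCompact S) (hT : IsCompact T) (hSc : Convex ℝ S) (hTc : Convex ℝ T) :
    ∃ m : E → E, Measurable m ∧ ∀ v ∈ S + T, m v ∈ S ∧ v - m v ∈ T := by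
  classical
  -- For closed `C`, the points `v` having a splitting with first part in `C` and `f ≤ r`.
  let U : Set E → ℝ → Set E := fun C r => (S ∩ (C ∩ {a | f a ≤ r})) + T
  have hU : ∀ C, IsClosed C → ∀ r, MeasurableSet (U C r) := fun C hC r =>
    ((hS.inter_right (hC.inter (isClosed_le hf continuous_const))).add hT).isClosed.measurableSet
  have hUmem : ∀ C r v, v ∈ U C r ↔ ∃ a ∈ S, a ∈ C ∧ f a ≤ r ∧ v - a ∈ T := by
    intro C r v
    constructor
    · rintro ⟨a, ⟨h1, h2, h3⟩, b, hb, rfl⟩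
      exact ⟨a, h1, h2, h3, by simpa using hb⟩
    · rintro ⟨a, h1, h2, h3, h4⟩
      exact ⟨a, ⟨h1, h2, h3⟩, v - a, h4, by simp⟩
  have hmin : ∀ C, IsClosed C → ∀ v, (∃ a ∈ S, a ∈ C ∧ v - a ∈ T) →
      ∃ a, (a ∈ S ∧ a ∈ C ∧ v - a ∈ T) ∧ ∀ b, b ∈ S → b ∈ C → v - b ∈ T → f a ≤ f b := by
    rintro C hC v ⟨a₀, h1, h2, h3⟩
    have hcl : IsClosed {a | v - a ∈ T} := hT.isClosed.preimage (continuous_const.sub continuous_id)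
    obtain ⟨a, ha, hle⟩ := (hS.inter_right (hC.inter hcl)).exists_isMinOn ⟨a₀, h1, h2, h3⟩
      hf.continuousOn
    exact ⟨a, ⟨ha.1, ha.2.1, ha.2.2⟩, fun b h1 h2 h3 => hle ⟨h1, h2, h3⟩⟩
  have hex : ∀ v, ∃ a, v ∈ S + T → (a ∈ S ∧ v - a ∈ T) ∧ ∀ b, b ∈ S → v - b ∈ T → f a ≤ f b := by
    intro v
    by_cases hv : v ∈ S + T
    · obtain ⟨a₀, h1, b, h2, rfl⟩ := hv
      obtain ⟨a, ⟨k1, -, k3⟩, k4⟩ := hmin Set.univ isClosed_univ (a₀ + b)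
        ⟨a₀, h1, trivial, by simpa using h2⟩
      exact ⟨a, fun _ => ⟨⟨k1, k3⟩, fun b hb => k4 b hb trivial⟩⟩
    · exact ⟨0, fun h => absurd h hv⟩
  choose m₀ hm₀ using hex
  have huniq : ∀ v ∈ S + T, ∀ b, b ∈ S → v - b ∈ T → f b ≤ f (m₀ v) → b = m₀ v := by
    intro v hv b hb hvb hle
    by_contra hne
    obtain ⟨⟨h1, h2⟩, h3⟩ := hm₀ v hv
    have hlt := hconv b (m₀ v) hne
    have k1 : (1/2 : ℝ) • b + (1/2 : ℝ) • m₀ v ∈ S :=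
      hSc hb h1 (by norm_num) (by norm_num) (by norm_num)
    have k2 : v - ((1/2 : ℝ) • b + (1/2 : ℝ) • m₀ v) ∈ T := by
      have := hTc hvb h2 (a := 1/2) (b := 1/2) (by norm_num) (by norm_num) (by norm_num)
      convert this using 1
      have hv2 : v = (1/2 : ℝ) • v + (1/2 : ℝ) • v := by rw [← add_smul]; norm_num
      nth_rewrite 1 [hv2]
      simp only [smul_sub]
      abel
    linarith [h3 _ k1 k2]
  have hST : MeasurableSet (S + T) := (hS.add hT).isClosed.measurableSet
  refine ⟨(S + T).piecewise m₀ (fun _ => 0), ?_, ?_⟩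
  · refine measurable_of_restrict_of_restrict_compl hST ?_ ?_
    · rw [Set.domRestrict_piecewise]
      refine measurable_of_isClosed fun C hC => ?_
      -- `m₀ v ∈ C` iff every rational level reached by the fibre is reached inside `C`.
      have : (S + T).domRestrict m₀ ⁻¹' C =
          Subtype.val ⁻¹' (⋂ q : ℚ, ((U Set.univ q)ᶜ ∪ U C q)) := by
        ext ⟨v, hv⟩
        simp only [Set.mem_preimage, Set.domRestrict_apply, Set.mem_iInter, Set.mem_union,
          Set.mem_compl_iff]
        obtain ⟨⟨h1, h2⟩, h3⟩ := hm₀ v hv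
        constructor
        · intro hC' q
          by_cases h : v ∈ U Set.univ q
          · right
            obtain ⟨a, a1, -, a3, a4⟩ := (hUmem _ _ _).1 h
            exact (hUmem _ _ _).2 ⟨m₀ v, h1, hC', (h3 a a1 a4).trans a3, h2⟩
          · exact Or.inl h
        · intro h
          have hq : ∀ q : ℚ, f (m₀ v) ≤ q → v ∈ U C q := fun q hq =>
            (h q).resolve_left (not_not.2 ((hUmem _ _ _).2 ⟨m₀ v, h1, trivial, hq, h2⟩))
          obtain ⟨q₀, hq₀⟩ := exists_rat_gt (f (m₀ v))
          obtain ⟨a, a1, a2, -, a4⟩ := (hUmem _ _ _).1 (hq q₀ hq₀.le)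
          obtain ⟨c, ⟨c1, c2, c3⟩, c4⟩ := hmin C hC v ⟨a, a1, a2, a4⟩
          have hle : f c ≤ f (m₀ v) := by
            by_contra! hlt
            obtain ⟨q, hq1, hq2⟩ := exists_rat_btwn hlt
            obtain ⟨b, b1, b2, b3, b4⟩ := (hUmem _ _ _).1 (hq q hq1.le)
            linarith [c4 b b1 b2 b4]
          rwa [← huniq v hv c c1 c3 hle]
      rw [this]
      exact measurable_subtype_coe (MeasurableSet.iInter fun q =>
        (hU _ isClosed_univ _).compl.union (hU C hC _))
    · rw [Set.domRestrict_piecewise_compl]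
      exact measurable_const
  · intro v hv
    rw [Set.piecewise_eq_of_mem _ _ _ hv]
    exact (hm₀ v hv).1

/-! ### Fekete's lemma -/

/-- Fekete's lemma in continuous time. -/
lemma tendsto_div_of_subadditive {g : ℝ → ℝ} {K C : ℝ} (hK : 0 ≤ K) (hC : 0 ≤ C)
    (hsub : ∀ s t, 0 ≤ s → 0 ≤ t → g (s + t) ≤ g s + g t)
    (hb : ∀ t, 0 ≤ t → |g t| ≤ K * t + C) :
    ∃ l, Tendsto (fun t => g t / t) atTop (nhds l) := by
  have hsu : Subadditive fun n : ℕ => g n := fun m n => by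
    simpa using hsub m n m.cast_nonneg n.cast_nonneg
  have hbdd : BddBelow (Set.range fun n : ℕ => g n / n) := by
    refine ⟨-(K + C), ?_⟩
    rintro _ ⟨n, rfl⟩
    rcases Nat.eq_zero_or_pos n with rfl | hn
    · simp; linarith
    · have hn' : (1:ℝ) ≤ n := by exact_mod_cast hn
      have := (abs_le.1 (hb n n.cast_nonneg)).1
      change _ ≤ g n / n
      rw [le_div_iff₀ (by linarith)]
      nlinarith
  have hlim := hsu.tendsto_lim hbdd
  refine ⟨hsu.lim, ?_⟩
  have hsm : ∀ r, 0 ≤ r → r ≤ 1 → g r ≤ K + C := fun r h0 h1 =>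
    (abs_le.1 (hb r h0)).2.trans (by nlinarith)
  have hfl : Tendsto (fun t : ℝ => (⌊t⌋₊ : ℝ) / t) atTop (nhds 1) := tendsto_nat_floor_div_atTop
  have hinv : ∀ c : ℝ, Tendsto (fun t : ℝ => c / t) atTop (nhds 0) := fun c =>
    tendsto_const_nhds.div_atTop tendsto_id
  have hup : Tendsto (fun t : ℝ => g ⌊t⌋₊ / ⌊t⌋₊ * (⌊t⌋₊ / t) + (K + C) / t) atTop
      (nhds hsu.lim) := by
    have := ((hlim.comp tendsto_nat_floor_atTop).mul hfl).add (hinv (K + C))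
    simpa using this
  have hlo : Tendsto (fun t : ℝ => g (⌊t⌋₊ + 1 : ℕ) / (⌊t⌋₊ + 1 : ℕ) * (⌊t⌋₊ / t + 1 / t)
      - (K + C) / t) atTop (nhds hsu.lim) := by
    have h1 : Tendsto (fun t : ℝ => ⌊t⌋₊ + 1) atTop atTop :=
      (tendsto_add_atTop_nat 1).comp tendsto_nat_floor_atTop
    have := ((hlim.comp h1).mul (hfl.add (hinv 1))).sub (hinv (K + C))
    simpa using this
  refine tendsto_of_tendsto_of_tendsto_of_le_of_le' hlo hup ?_ ?_
  · filter_upwards [eventually_gt_atTop 0] with t ht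
    have h1 := Nat.lt_floor_add_one t
    have h2 := Nat.floor_le ht.le
    have h := hsub t ((⌊t⌋₊ + 1 : ℕ) - t) ht.le (by push_cast; linarith)
    rw [add_sub_cancel] at h
    have h3 := hsm ((⌊t⌋₊ + 1 : ℕ) - t) (by push_cast; linarith) (by push_cast; linarith)
    have h4 : ((⌊t⌋₊ + 1 : ℕ) : ℝ) ≠ 0 := by positivity
    have e : g (⌊t⌋₊ + 1 : ℕ) / (⌊t⌋₊ + 1 : ℕ) * (⌊t⌋₊ / t + 1 / t) - (K + C) / t =
        (g (⌊t⌋₊ + 1 : ℕ) - (K + C)) / t := by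
      rw [← add_div, sub_div]
      congr 1
      rw [show (⌊t⌋₊ : ℝ) + 1 = ((⌊t⌋₊ + 1 : ℕ) : ℝ) by push_cast; rfl]
      field_simp
    rw [e]
    exact div_le_div_of_nonneg_right (by linarith) ht.le
  · filter_upwards [eventually_ge_atTop 1] with t ht
    have h1 := Nat.lt_floor_add_one t
    have h2 := Nat.floor_le (zero_le_one.trans ht)
    have h := hsub ⌊t⌋₊ (t - ⌊t⌋₊) (Nat.cast_nonneg _) (by linarith)
    rw [add_sub_cancel] at h
    have h3 := hsm (t - ⌊t⌋₊) (by linarith) (by linarith)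
    have h5 : 0 < ⌊t⌋₊ := Nat.floor_pos.2 ht
    have h4 : (⌊t⌋₊ : ℝ) ≠ 0 := by positivity
    have e : g ⌊t⌋₊ / ⌊t⌋₊ * (⌊t⌋₊ / t) + (K + C) / t = (g ⌊t⌋₊ + (K + C)) / t := by
      rw [add_div]
      field_simp
    rw [e]
    exact div_le_div_of_nonneg_right (by linarith) (by linarith)

variable {d : ℕ}

/-! ### Trajectories of linear switching systems -/

/-- A matrix as a continuous linear operator on `Fin d → ℝ`. -/
noncomputable def toOp : Matrix (Fin d) (Fin d) ℝ →ₗ[ℝ] ((Fin d → ℝ) →L[ℝ] (Fin d → ℝ)) :=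
  (LinearMap.toContinuousLinearMap (𝕜 := ℝ) (E := Fin d → ℝ)
    (F' := Fin d → ℝ)).toLinearMap ∘ₗ (Matrix.toLin' (R := ℝ)).toLinearMap

lemma toOp_apply (M : Matrix (Fin d) (Fin d) ℝ) (v : Fin d → ℝ) : toOp M v = M.mulVec v := rfl

lemma toOp_mul (M N : Matrix (Fin d) (Fin d) ℝ) : toOp (M * N) = toOp M * toOp N := by
  ext v : 1
  simp [toOp_apply, Matrix.mulVec_mulVec]

lemma stronglyMeasurable_toOp {A : ℝ → Matrix (Fin d) (Fin d) ℝ}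
    (hA : ∀ i j, Measurable fun s => A s i j) : StronglyMeasurable fun s => toOp (A s) := by
  have : (fun s => toOp (A s)) =
      fun s => ∑ i, ∑ j, A s i j • toOp (Matrix.single i j (1:ℝ)) := by
    funext s
    conv_lhs => rw [Matrix.matrix_eq_sum_single (A s)]
    simp only [map_sum]
    refine Finset.sum_congr rfl fun i _ => Finset.sum_congr rfl fun j _ => ?_
    rw [← map_smul, Matrix.smul_single, smul_eq_mul, mul_one]
  rw [this]
  refine Finset.stronglyMeasurable_fun_sum _ fun i _ =>
    Finset.stronglyMeasurable_fun_sum _ fun j _ => ?_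
  exact (hA i j).stronglyMeasurable.smul_const _

/-- The operator norm is bounded on a polytope of matrices by its maximum over the generators. -/
lemma exists_op_bound {ι : Type*} [Finite ι] (A : ι → Matrix (Fin d) (Fin d) ℝ) :
    ∃ K, 0 ≤ K ∧ ∀ M ∈ convexHull ℝ (Set.range A), ‖toOp M‖ ≤ K := by
  obtain ⟨K, hK⟩ := (Set.finite_range fun i => ‖toOp (A i)‖).bddAbove
  have hc : Convex ℝ {M : Matrix (Fin d) (Fin d) ℝ | ‖toOp M‖ ≤ max K 0} := by
    intro M hM N hN a b ha hb hab
    simp only [Set.mem_ofPred_eq, map_add, map_smul] at *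
    refine (norm_add_le _ _).trans ?_
    rw [norm_smul, norm_smul, Real.norm_of_nonneg ha, Real.norm_of_nonneg hb]
    refine (add_le_add (mul_le_mul_of_nonneg_left hM ha)
      (mul_le_mul_of_nonneg_left hN hb)).trans (le_of_eq ?_)
    rw [← add_mul, hab, one_mul]
  refine ⟨max K 0, le_max_right _ _, fun M hM => convexHull_min ?_ hc hM⟩
  rintro _ ⟨i, rfl⟩
  exact (hK ⟨i, rfl⟩).trans (le_max_left _ _)

/-- A switching law may be assumed to take values in `S` at all times, negative ones included. -/
lemma IsTrajectory.exists_law {S : Set (Matrix (Fin d) (Fin d) ℝ)} {x : ℝ → Fin d → ℝ}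
    (h : IsTrajectory S x) : ∃ A : ℝ → Matrix (Fin d) (Fin d) ℝ,
      (∀ i j, Measurable fun s => A s i j) ∧ (∀ s, A s ∈ S) ∧
      ∀ t, 0 ≤ t → x t = x 0 + ∫ s in (0:ℝ)..t, toOp (A s) (x s) := by
  obtain ⟨-, A, hA, hAS, -, he⟩ := h
  refine ⟨fun s => A (max s 0), fun i j => (hA i j).comp (measurable_id.max measurable_const),
    fun s => hAS _ (le_max_right _ _), fun t ht => ?_⟩
  rw [he t ht]
  congr 1
  refine intervalIntegral.integral_congr fun s hs => ?_
  rw [Set.uIcc_of_le ht] at hs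
  simp only [toOp_apply]
  rw [max_eq_left hs.1]

lemma intervalIntegrable_law {A : ℝ → Matrix (Fin d) (Fin d) ℝ} {K : ℝ}
    (hA : ∀ i j, Measurable fun s => A s i j) (hK : ∀ s, ‖toOp (A s)‖ ≤ K)
    {x : ℝ → Fin d → ℝ} (hx : Continuous x) (u v : ℝ) :
    IntervalIntegrable (fun s => toOp (A s) (x s)) volume u v := by
  refine intervalIntegrable_of_norm_le (g := fun s => K * ‖x s‖) ?_
    (continuous_const.mul hx.norm) (fun s => (toOp (A s)).le_of_opNorm_le (hK s) _) u v
  refine (Measurable.stronglyMeasurable ?_).aestronglyMeasurable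
  refine measurable_pi_lambda _ fun i => ?_
  simp only [toOp_apply, Matrix.mulVec, dotProduct]
  exact Finset.measurable_sum _ fun j _ =>
    (hA i j).mul ((measurable_pi_apply j).comp hx.measurable)

/-- Integral equation between two nonnegative times. -/
lemma law_increment {A : ℝ → Matrix (Fin d) (Fin d) ℝ} {K : ℝ}
    (hA : ∀ i j, Measurable fun s => A s i j) (hK : ∀ s, ‖toOp (A s)‖ ≤ K)
    {x : ℝ → Fin d → ℝ} (hx : Continuous x)
    (he : ∀ t, 0 ≤ t → x t = x 0 + ∫ s in (0:ℝ)..t, toOp (A s) (x s))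
    {a b : ℝ} (ha : 0 ≤ a) (hb : 0 ≤ b) :
    x b = x a + ∫ s in a..b, toOp (A s) (x s) := by
  rw [he b hb, he a ha, ← intervalIntegral.integral_add_adjacent_intervals
    (intervalIntegrable_law hA hK hx 0 a) (intervalIntegrable_law hA hK hx a b)]
  abel

lemma law_growth_le {A : ℝ → Matrix (Fin d) (Fin d) ℝ} {K : ℝ}
    (hK : ∀ s, ‖toOp (A s)‖ ≤ K)
    {x : ℝ → Fin d → ℝ} (hx : Continuous x)
    (he : ∀ t, 0 ≤ t → x t = x 0 + ∫ s in (0:ℝ)..t, toOp (A s) (x s)) {t : ℝ} (ht : 0 ≤ t) :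
    ‖x t‖ ≤ ‖x 0‖ * Real.exp (K * t) := by
  have hK0 : 0 ≤ K := (norm_nonneg _).trans (hK 0)
  refine integral_gronwall hx.norm ht hK0 (norm_nonneg _) (fun _ => norm_nonneg _) fun s hs => ?_
  rw [he s hs.1]
  refine (norm_add_le _ _).trans (add_le_add_right ?_ _)
  rw [← intervalIntegral.integral_const_mul]
  exact intervalIntegral.norm_integral_le_of_norm_le hs.1
    (ae_of_all _ fun r _ => (toOp (A r)).le_of_opNorm_le (hK r) _)
    ((continuous_const.mul hx.norm).intervalIntegrable _ _)

/-- Lower growth bound, by Grönwall's inequality in reversed time. -/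
lemma law_growth_ge {A : ℝ → Matrix (Fin d) (Fin d) ℝ} {K : ℝ}
    (hA : ∀ i j, Measurable fun s => A s i j) (hK : ∀ s, ‖toOp (A s)‖ ≤ K)
    {x : ℝ → Fin d → ℝ} (hx : Continuous x)
    (he : ∀ t, 0 ≤ t → x t = x 0 + ∫ s in (0:ℝ)..t, toOp (A s) (x s)) {t : ℝ} (ht : 0 ≤ t) :
    ‖x 0‖ ≤ ‖x t‖ * Real.exp (K * t) := by
  have hK0 : 0 ≤ K := (norm_nonneg _).trans (hK 0)
  have := integral_gronwall (u := fun r => ‖x (t - r)‖) (by fun_prop) ht hK0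
    (norm_nonneg (x t)) (fun _ => norm_nonneg _) fun s hs => ?_
  · simpa using this
  · have e := law_increment hA hK hx he ht (sub_nonneg.2 hs.2)
    have hst : t - s ≤ t := by linarith [hs.1]
    have h1 : ‖x (t - s)‖ ≤ ‖x t‖ + ‖∫ r in (t - s)..t, toOp (A r) (x r)‖ := by
      rw [e, intervalIntegral.integral_symm (t - s) t]
      exact (norm_add_le _ _).trans (by rw [norm_neg])
    refine h1.trans (add_le_add_right ?_ _)
    have h2 := intervalIntegral.integral_comp_sub_left (a := 0) (b := s) (fun r => ‖x r‖) t
    rw [h2, sub_zero, ← intervalIntegral.integral_const_mul]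
    exact intervalIntegral.norm_integral_le_of_norm_le hst
      (ae_of_all _ fun r _ => (toOp (A r)).le_of_opNorm_le (hK r) _)
      ((continuous_const.mul hx.norm).intervalIntegrable _ _)

/-- Uniqueness of trajectories with a given law. -/
lemma law_unique {A : ℝ → Matrix (Fin d) (Fin d) ℝ} {K : ℝ}
    (hA : ∀ i j, Measurable fun s => A s i j) (hK : ∀ s, ‖toOp (A s)‖ ≤ K)
    {x y : ℝ → Fin d → ℝ} (hx : Continuous x) (hy : Continuous y) (h0 : x 0 = y 0)
    (hex : ∀ t, 0 ≤ t → x t = x 0 + ∫ s in (0:ℝ)..t, toOp (A s) (x s))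
    (hey : ∀ t, 0 ≤ t → y t = y 0 + ∫ s in (0:ℝ)..t, toOp (A s) (y s)) {t : ℝ} (ht : 0 ≤ t) :
    x t = y t := by
  have := law_growth_le (x := fun t => x t - y t) hK (hx.sub hy) (fun t ht => by
    simp only [map_sub]
    rw [intervalIntegral.integral_sub (intervalIntegrable_law hA hK hx 0 t)
      (intervalIntegrable_law hA hK hy 0 t), hex t ht, hey t ht]
    abel) ht
  rw [h0, sub_self, norm_zero, zero_mul] at this
  exact sub_eq_zero.1 (norm_le_zero_iff.1 this)

/-- The orbits of an operator flow solve the vector equation. -/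
lemma flow_apply {A : ℝ → Matrix (Fin d) (Fin d) ℝ} {K : ℝ}
    (hA : ∀ i j, Measurable fun s => A s i j) (hK : ∀ s, ‖toOp (A s)‖ ≤ K)
    {Φ : ℝ → (Fin d → ℝ) →L[ℝ] (Fin d → ℝ)} (hΦ : Continuous Φ)
    (he : ∀ t, 0 ≤ t → Φ t = 1 + ∫ s in (0:ℝ)..t, toOp (A s) * Φ s) (u : Fin d → ℝ) :
    ∀ t, 0 ≤ t → Φ t u = Φ 0 u + ∫ s in (0:ℝ)..t, toOp (A s) (Φ s u) := by
  intro t ht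
  have h0 : Φ 0 = 1 := by simpa using he 0 le_rfl
  rw [h0, he t ht, _root_.add_apply, ContinuousLinearMap.intervalIntegral_apply
    (intervalIntegrable_law_mul (stronglyMeasurable_toOp hA) hK hΦ 0 t)]
  rfl

lemma isTrajectory_of_law {S : Set (Matrix (Fin d) (Fin d) ℝ)}
    {A : ℝ → Matrix (Fin d) (Fin d) ℝ} {K : ℝ}
    (hA : ∀ i j, Measurable fun s => A s i j) (hAS : ∀ s, 0 ≤ s → A s ∈ S)
    (hK : ∀ s, ‖toOp (A s)‖ ≤ K) {x : ℝ → Fin d → ℝ} (hx : Continuous x)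
    (he : ∀ t, 0 ≤ t → x t = x 0 + ∫ s in (0:ℝ)..t, toOp (A s) (x s)) : IsTrajectory S x :=
  ⟨hx, A, hA, hAS, fun t _ => intervalIntegrable_law hA hK hx 0 t, he⟩

/-- Trajectories may be restarted at any nonnegative time. -/
lemma IsTrajectory.shift {S : Set (Matrix (Fin d) (Fin d) ℝ)} {K : ℝ}
    (hK : ∀ M ∈ S, ‖toOp M‖ ≤ K) {x : ℝ → Fin d → ℝ} (h : IsTrajectory S x) {a : ℝ}
    (ha : 0 ≤ a) : IsTrajectory S fun t => x (a + t) := by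
  have hx := h.1
  obtain ⟨A, hA, hAS, he⟩ := IsTrajectory.exists_law h
  have hK' : ∀ s, ‖toOp (A s)‖ ≤ K := fun s => hK _ (hAS s)
  refine isTrajectory_of_law (A := fun s => A (a + s)) (K := K)
    (fun i j => (hA i j).comp (measurable_const_add a)) (fun s _ => hAS _) (fun s => hK' _)
    (by fun_prop) fun t ht => ?_
  have := law_increment hA hK' hx he ha (add_nonneg ha ht)
  rw [this, intervalIntegral.integral_comp_add_left (fun s => toOp (A s) (x s)) a, add_zero]

/-! ### Existence of the limit defining the Lyapunov exponent -/

lemma norm_le_eNorm (v : Fin d → ℝ) : ‖v‖ ≤ eNorm v := by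
  refine (pi_norm_le_iff_of_nonneg (Real.sqrt_nonneg _)).2 fun i => ?_
  refine Real.le_sqrt_of_sq_le ?_
  rw [Real.norm_eq_abs, sq_abs]
  exact Finset.single_le_sum (f := fun i => v i ^ 2) (fun j _ => sq_nonneg _) (Finset.mem_univ i)

lemma eNorm_le_norm (v : Fin d → ℝ) : eNorm v ≤ (d + 1) * ‖v‖ := by
  refine Real.sqrt_le_iff.2 ⟨by positivity, ?_⟩
  calc ∑ i, v i ^ 2 ≤ ∑ _i : Fin d, ‖v‖ ^ 2 := Finset.sum_le_sum fun i _ => by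
        rw [← sq_abs]
        exact pow_le_pow_left₀ (abs_nonneg _) (norm_le_pi_norm v i) 2
    _ = d * ‖v‖ ^ 2 := by simp
    _ ≤ ((d + 1) * ‖v‖) ^ 2 := by
        have : (0:ℝ) ≤ d := d.cast_nonneg
        nlinarith [sq_nonneg ‖v‖, mul_nonneg this (sq_nonneg ‖v‖),
          mul_nonneg (mul_nonneg this this) (sq_nonneg ‖v‖)]

lemma eNorm_pos {v : Fin d → ℝ} (hv : v ≠ 0) : 0 < eNorm v :=
  (norm_pos_iff.2 hv).trans_le (norm_le_eNorm v)

lemma IsTrajectory.ne_zero {S : Set (Matrix (Fin d) (Fin d) ℝ)} {K : ℝ}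
    (hK : ∀ M ∈ S, ‖toOp M‖ ≤ K) {x : ℝ → Fin d → ℝ} (h : IsTrajectory S x) (h0 : x 0 ≠ 0)
    {t : ℝ} (ht : 0 ≤ t) : x t ≠ 0 := by
  obtain ⟨A, hA, hAS, he⟩ := IsTrajectory.exists_law h
  have := law_growth_ge hA (fun s => hK _ (hAS s)) h.1 he ht
  intro h1
  rw [h1, norm_zero, zero_mul] at this
  exact h0 (norm_le_zero_iff.1 this)

/-- Logarithmic growth `log (‖x t‖ / ‖x 0‖)` of the nonzero trajectories at time `t`. -/
def growthSet (S : Set (Matrix (Fin d) (Fin d) ℝ)) (t : ℝ) : Set ℝ :=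
  {r | ∃ x : ℝ → Fin d → ℝ, IsTrajectory S x ∧ x 0 ≠ 0 ∧ r = Real.log (eNorm (x t) / eNorm (x 0))}

/-- A log-ratio of Euclidean norms is controlled by a ratio of sup norms. -/
lemma log_eNorm_ratio_le {u v : Fin d → ℝ} {c : ℝ} (hu : u ≠ 0) (hv : v ≠ 0)
    (h : ‖u‖ ≤ ‖v‖ * Real.exp c) :
    Real.log (eNorm u) - Real.log (eNorm v) ≤ c + Real.log (d + 1) := by
  have h1 : eNorm u ≤ (d + 1) * (eNorm v * Real.exp c) :=
    (eNorm_le_norm u).trans (mul_le_mul_of_nonneg_left (h.trans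
      (mul_le_mul_of_nonneg_right (norm_le_eNorm v) (Real.exp_pos _).le)) (by positivity))
  have h2 := Real.log_le_log (eNorm_pos hu) h1
  rw [Real.log_mul (by positivity) (mul_pos (eNorm_pos hv) (Real.exp_pos _)).ne',
    Real.log_mul (eNorm_pos hv).ne' (Real.exp_pos _).ne', Real.log_exp] at h2
  linarith

lemma growthSet_bound {S : Set (Matrix (Fin d) (Fin d) ℝ)} {K : ℝ}
    (hK : ∀ M ∈ S, ‖toOp M‖ ≤ K) {t : ℝ} (ht : 0 ≤ t) {r : ℝ} (hr : r ∈ growthSet S t) :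
    |r| ≤ K * t + Real.log (d + 1) := by
  obtain ⟨x, hx, h0, rfl⟩ := hr
  have hxt := IsTrajectory.ne_zero hK hx h0 ht
  obtain ⟨A, hA, hAS, he⟩ := IsTrajectory.exists_law hx
  have hK' : ∀ s, ‖toOp (A s)‖ ≤ K := fun s => hK _ (hAS s)
  rw [Real.log_div (eNorm_pos hxt).ne' (eNorm_pos h0).ne', abs_le]
  have h1 := log_eNorm_ratio_le hxt h0 (law_growth_le hK' hx.1 he ht)
  have h2 := log_eNorm_ratio_le h0 hxt (law_growth_ge hA hK' hx.1 he ht)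
  constructor <;> linarith

lemma growthSet_bddAbove {S : Set (Matrix (Fin d) (Fin d) ℝ)} {K : ℝ}
    (hK : ∀ M ∈ S, ‖toOp M‖ ≤ K) {t : ℝ} (ht : 0 ≤ t) : BddAbove (growthSet S t) :=
  ⟨_, fun _ hr => (le_abs_self _).trans (growthSet_bound hK ht hr)⟩

/-- The limit defining `Lambda` exists when the operator norm is bounded on `S`. -/
lemma tendsto_Lambda {S : Set (Matrix (Fin d) (Fin d) ℝ)} {K : ℝ} (hK0 : 0 ≤ K)
    (hK : ∀ M ∈ S, ‖toOp M‖ ≤ K) :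
    Tendsto (fun t => sSup (growthSet S t) / t) atTop (nhds (Lambda S)) := by
  have hC : 0 ≤ Real.log ((d : ℝ) + 1) := Real.log_nonneg (by linarith [d.cast_nonneg (α := ℝ)])
  have hlim : ∃ l, Tendsto (fun t => sSup (growthSet S t) / t) atTop (nhds l) := by
    by_cases hex : ∃ x : ℝ → Fin d → ℝ, IsTrajectory S x ∧ x 0 ≠ 0
    · have hne : ∀ t, (growthSet S t).Nonempty := fun t => by
        obtain ⟨x, hx, h0⟩ := hex
        exact ⟨_, x, hx, h0, rfl⟩
      refine tendsto_div_of_subadditive hK0 hC ?_ ?_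
      · intro s t hs ht
        refine csSup_le (hne _) ?_
        rintro _ ⟨x, hx, h0, rfl⟩
        have hxs := IsTrajectory.ne_zero hK hx h0 hs
        have hxst := IsTrajectory.ne_zero hK hx h0 (add_nonneg hs ht)
        have h1 := le_csSup (growthSet_bddAbove hK hs) ⟨x, hx, h0, rfl⟩
        have h2 := le_csSup (growthSet_bddAbove hK ht)
          ⟨_, IsTrajectory.shift hK hx hs, by simpa using hxs, rfl⟩
        simp only [add_zero] at h2
        rw [Real.log_div (eNorm_pos hxs).ne' (eNorm_pos h0).ne'] at h1
        rw [Real.log_div (eNorm_pos hxst).ne' (eNorm_pos hxs).ne'] at h2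
        rw [Real.log_div (eNorm_pos hxst).ne' (eNorm_pos h0).ne']
        linarith
      · intro t ht
        obtain ⟨r, hr⟩ := hne t
        rw [abs_le]
        exact ⟨(abs_le.1 (growthSet_bound hK ht hr)).1.trans
            (le_csSup (growthSet_bddAbove hK ht) hr),
          csSup_le (hne t) fun r hr => (abs_le.1 (growthSet_bound hK ht hr)).2⟩
    · have : ∀ t, growthSet S t = ∅ := fun t => Set.eq_empty_iff_forall_notMem.2 fun r hr => by
        obtain ⟨x, hx, h0, -⟩ := hr
        exact hex ⟨x, hx, h0⟩
      exact ⟨0, by simp [this]⟩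
  obtain ⟨l, hl⟩ := hlim
  have h2 : Tendsto (fun t : ℝ =>
      sSup {r | ∃ x : ℝ → Fin d → ℝ, IsTrajectory S x ∧ x 0 ≠ 0 ∧
        r = (1 / t) * Real.log (eNorm (x t) / eNorm (x 0))}) atTop (nhds l) := by
    refine hl.congr' ?_
    filter_upwards [eventually_ge_atTop 0] with t ht
    have : {r | ∃ x : ℝ → Fin d → ℝ, IsTrajectory S x ∧ x 0 ≠ 0 ∧
        r = (1 / t) * Real.log (eNorm (x t) / eNorm (x 0))} =
        (fun r => (1 / t) • r) '' growthSet S t := by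
      ext r
      constructor
      · rintro ⟨x, hx, h0, rfl⟩
        exact ⟨_, ⟨x, hx, h0, rfl⟩, rfl⟩
      · rintro ⟨_, ⟨x, hx, h0, rfl⟩, rfl⟩
        exact ⟨x, hx, h0, rfl⟩
    rw [this]
    have h3 := Real.sSup_smul_of_nonneg (a := 1 / t) (by positivity) (growthSet S t)
    refine Eq.trans ?_ h3.symm
    rw [smul_eq_mul]
    ring
  have h3 : Lambda S = l := h2.limUnder_eq
  rwa [h3]

lemma exists_trajectory {S : Set (Matrix (Fin d) (Fin d) ℝ)} (hS : S.Nonempty) (u : Fin d → ℝ) :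
    ∃ x, IsTrajectory S x ∧ x 0 = u := by
  obtain ⟨M, hM⟩ := hS
  have hA : ∀ i j, Measurable fun _ : ℝ => M i j := fun i j => measurable_const
  obtain ⟨Φ, hΦ, he, -⟩ := exists_flow (stronglyMeasurable_toOp hA) (fun _ => le_refl ‖toOp M‖)
  have h0 : Φ 0 = 1 := by simpa using he 0 le_rfl
  exact ⟨fun t => Φ t u, isTrajectory_of_law hA (fun _ _ => hM) (fun _ => le_rfl) (by fun_prop)
    (flow_apply hA (fun _ => le_rfl) hΦ he u), by simp [h0]⟩

/-! ### Factorisation of trajectories of the summed system -/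

lemma commute_convexHull {S T : Set (Matrix (Fin d) (Fin d) ℝ)}
    (h : ∀ M ∈ S, ∀ N ∈ T, M * N = N * M) :
    ∀ M ∈ convexHull ℝ S, ∀ N ∈ convexHull ℝ T, M * N = N * M := by
  have h1 : ∀ M ∈ convexHull ℝ S, ∀ N ∈ T, M * N = N * M := by
    intro M hM N hN
    have hc : Convex ℝ {M : Matrix (Fin d) (Fin d) ℝ | M * N = N * M} := by
      intro P hP Q hQ a b _ _ _
      simp only [Set.mem_ofPred_eq] at *
      rw [add_mul, mul_add, smul_mul_assoc, smul_mul_assoc, mul_smul_comm, mul_smul_comm, hP, hQ]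
    exact convexHull_min (fun P hP => h P hP N hN) hc hM
  intro M hM N hN
  have hc : Convex ℝ {N : Matrix (Fin d) (Fin d) ℝ | M * N = N * M} := by
    intro P hP Q hQ a b _ _ _
    simp only [Set.mem_ofPred_eq] at *
    rw [add_mul, mul_add, smul_mul_assoc, smul_mul_assoc, mul_smul_comm, mul_smul_comm, hP, hQ]
  exact convexHull_min (fun P hP => h1 M hM P hP) hc hN

open scoped Pointwise in
/-- A measurable law with values in a sum of two polytopes of matrices is a sum of measurable laws
in the two polytopes; the strictly convex function used is the sum of squared entries. -/
lemma exists_law_splitting {ι κ : Type*} [Finite ι] [Finite κ]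
    (A : ι → Matrix (Fin d) (Fin d) ℝ) (B : κ → Matrix (Fin d) (Fin d) ℝ)
    {D : ℝ → Matrix (Fin d) (Fin d) ℝ} (hD : ∀ i j, Measurable fun s => D s i j)
    (hDS : ∀ s, D s ∈ convexHull ℝ {M | ∃ i j, M = A i + B j}) :
    ∃ P Q : ℝ → Matrix (Fin d) (Fin d) ℝ, (∀ i j, Measurable fun s => P s i j) ∧
      (∀ i j, Measurable fun s => Q s i j) ∧ (∀ s, P s ∈ convexHull ℝ (Set.range A)) ∧
      (∀ s, Q s ∈ convexHull ℝ (Set.range B)) ∧ ∀ s, D s = P s + Q s := by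
  have hset : {M | ∃ i j, M = A i + B j} = Set.range A + Set.range B := by
    ext M
    constructor
    · rintro ⟨i, j, rfl⟩
      exact ⟨_, ⟨i, rfl⟩, _, ⟨j, rfl⟩, rfl⟩
    · rintro ⟨_, ⟨i, rfl⟩, _, ⟨j, rfl⟩, rfl⟩
      exact ⟨i, j, rfl⟩
  rw [hset, convexHull_add] at hDS
  -- The hulls as sets of plain functions, where the Borel σ-algebra is available.
  let S' : Set (Fin d → Fin d → ℝ) := convexHull ℝ (Set.range A)
  let T' : Set (Fin d → Fin d → ℝ) := convexHull ℝ (Set.range B)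
  have hS1 : IsCompact S' := (Set.finite_range A).isCompact_convexHull ℝ
  have hT1 : IsCompact T' := (Set.finite_range B).isCompact_convexHull ℝ
  have hS2 : Convex ℝ S' := convex_convexHull ℝ (Set.range A)
  have hT2 : Convex ℝ T' := convex_convexHull ℝ (Set.range B)
  obtain ⟨m, hm, hmST⟩ := exists_measurable_splitting (E := Fin d → Fin d → ℝ)
    (f := fun M => ∑ i, ∑ j, M i j ^ 2) (by fun_prop) (by
      intro x y hxy
      obtain ⟨i, hi⟩ := Function.ne_iff.1 hxy
      obtain ⟨j, hj⟩ := Function.ne_iff.1 hi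
      simp only [Finset.mul_sum, ← Finset.sum_add_distrib, Pi.add_apply, Pi.smul_apply,
        smul_eq_mul]
      have hle : ∀ i j, (1/2 * x i j + 1/2 * y i j) ^ 2 ≤ 1/2 * x i j ^ 2 + 1/2 * y i j ^ 2 :=
        fun i j => by nlinarith [sq_nonneg (x i j - y i j)]
      refine Finset.sum_lt_sum (fun i _ => Finset.sum_le_sum fun j _ => hle i j)
        ⟨i, Finset.mem_univ i, Finset.sum_lt_sum (fun j _ => hle i j) ⟨j, Finset.mem_univ j, ?_⟩⟩
      have : 0 < (x i j - y i j) ^ 2 := by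
        have := sub_ne_zero.2 hj
        positivity
      nlinarith)
    hS1 hT1 hS2 hT2
  let D' : ℝ → Fin d → Fin d → ℝ := D
  have hDm : Measurable D' :=
    measurable_pi_lambda _ fun i => measurable_pi_lambda _ fun j => hD i j
  have hPm : ∀ i j, Measurable fun s => m (D' s) i j := fun i j =>
    (measurable_pi_apply j).comp ((measurable_pi_apply i).comp (hm.comp hDm))
  refine ⟨fun s => m (D' s), fun s => D' s - m (D' s), hPm, fun i j => (hD i j).sub (hPm i j),
    fun s => (hmST _ (hDS s)).1, fun s => (hmST _ (hDS s)).2, fun s => ?_⟩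
  exact (add_sub_cancel (m (D' s)) (D' s)).symm

/-- A trajectory of the summed system factors through trajectories of the two commuting systems:
one from `x 0` to an intermediate point `u`, one from `u` to `x t`. -/
lemma exists_factor {ι κ : Type*} [Finite ι] [Finite κ]
    {A : ι → Matrix (Fin d) (Fin d) ℝ} {B : κ → Matrix (Fin d) (Fin d) ℝ}
    (hcomm : ∀ i j, A i * B j = B j * A i) {x : ℝ → Fin d → ℝ}
    (hx : IsTrajectory (convexHull ℝ {M | ∃ i j, M = A i + B j}) x) {t : ℝ} (ht : 0 ≤ t) :
    ∃ y z : ℝ → Fin d → ℝ, IsTrajectory (convexHull ℝ (Set.range A)) y ∧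
      IsTrajectory (convexHull ℝ (Set.range B)) z ∧ z 0 = x 0 ∧ y 0 = z t ∧ y t = x t := by
  obtain ⟨D, hD, hDS, hDe⟩ := IsTrajectory.exists_law hx
  obtain ⟨P, Q, hP, hQ, hPS, hQS, hPQ⟩ := exists_law_splitting A B hD hDS
  obtain ⟨K₁, hK₁, hA⟩ := exists_op_bound A
  obtain ⟨K₂, hK₂, hB⟩ := exists_op_bound B
  have hKP : ∀ s, ‖toOp (P s)‖ ≤ K₁ + K₂ := fun s => (hA _ (hPS s)).trans (by linarith)
  have hKQ : ∀ s, ‖toOp (Q s)‖ ≤ K₁ + K₂ := fun s => (hB _ (hQS s)).trans (by linarith)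
  have hKD : ∀ s, ‖toOp (D s)‖ ≤ K₁ + K₂ := fun s => by
    rw [hPQ, map_add]
    exact (norm_add_le _ _).trans (add_le_add (hA _ (hPS s)) (hB _ (hQS s)))
  have hc : ∀ s r, Commute (toOp (Q s)) (toOp (P r)) := fun s r => by
    change _ * _ = _ * _
    rw [← toOp_mul, ← toOp_mul, commute_convexHull (S := Set.range A) (T := Set.range B)
      (by rintro _ ⟨i, rfl⟩ _ ⟨j, rfl⟩; exact hcomm i j) _ (hPS r) _ (hQS s)]
  obtain ⟨Φ, hΦ, hΦe, hΦc⟩ := exists_flow (stronglyMeasurable_toOp hP) hKP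
  obtain ⟨Ψ, hΨ, hΨe, -⟩ := exists_flow (stronglyMeasurable_toOp hQ) hKQ
  have hΦ0 : Φ 0 = 1 := by simpa using hΦe 0 le_rfl
  have hΨ0 : Ψ 0 = 1 := by simpa using hΨe 0 le_rfl
  have hmul : ∀ t, 0 ≤ t → Φ t * Ψ t = 1 + ∫ s in (0:ℝ)..t, toOp (D s) * (Φ s * Ψ s) := by
    intro t ht
    simp only [hPQ, map_add]
    exact flow_mul (stronglyMeasurable_toOp hP) (stronglyMeasurable_toOp hQ) hKP hKQ hΦ hΨ hΦe hΨe
      (fun s t => hΦc _ (fun r => hc s r) t) ht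
  have hxt : x t = (Φ t * Ψ t) (x 0) :=
    law_unique hD hKD hx.1 (y := fun t => (Φ t * Ψ t) (x 0))
      ((hΦ.mul hΨ).clm_apply continuous_const) (by simp [hΦ0, hΨ0]) hDe
      (flow_apply hD hKD (hΦ.mul hΨ) hmul (x 0)) ht
  refine ⟨fun s => Φ s (Ψ t (x 0)), fun s => Ψ s (x 0),
    isTrajectory_of_law hP (fun s _ => hPS s) hKP (by fun_prop) (flow_apply hP hKP hΦ hΦe _),
    isTrajectory_of_law hQ (fun s _ => hQS s) hKQ (by fun_prop) (flow_apply hQ hKQ hΨ hΨe _),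
    by simp [hΨ0], by simp [hΦ0], by simp [hxt]⟩

end Switch

theorem stmt_4 {d N₁ N₂ : ℕ} (A : Fin (N₁ + 1) → Matrix (Fin d) (Fin d) ℝ)
    (B : Fin (N₂ + 1) → Matrix (Fin d) (Fin d) ℝ)
    (hcomm : ∀ i j, A i * B j = B j * A i) :
    Lambda (convexHull ℝ {M | ∃ i j, M = A i + B j}) ≤
      Lambda (convexHull ℝ (Set.range A)) + Lambda (convexHull ℝ (Set.range B)) := by
  obtain ⟨K₁, hK₁, hA⟩ := Switch.exists_op_bound A
  obtain ⟨K₂, hK₂, hB⟩ := Switch.exists_op_bound B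
  have hset : {M | ∃ i j, M = A i + B j} =
      Set.range fun p : Fin (N₁ + 1) × Fin (N₂ + 1) => A p.1 + B p.2 := by
    ext M
    simp [eq_comm]
  obtain ⟨K₃, hK₃, hD⟩ := Switch.exists_op_bound
    fun p : Fin (N₁ + 1) × Fin (N₂ + 1) => A p.1 + B p.2
  rw [← hset] at hD
  have hlim := (Switch.tendsto_Lambda hK₁ hA).add (Switch.tendsto_Lambda hK₂ hB)
  refine le_of_tendsto_of_tendsto (Switch.tendsto_Lambda hK₃ hD) hlim ?_
  filter_upwards [eventually_ge_atTop 0] with t ht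
  rw [← add_div]
  refine div_le_div_of_nonneg_right ?_ ht
  by_cases hd : ∃ u : Fin d → ℝ, u ≠ 0
  · have hne : (Switch.growthSet (convexHull ℝ {M | ∃ i j, M = A i + B j}) t).Nonempty := by
      obtain ⟨u, hu⟩ := hd
      obtain ⟨x, hx, h0⟩ := Switch.exists_trajectory
        (S := convexHull ℝ {M | ∃ i j, M = A i + B j})
        ⟨_, subset_convexHull ℝ _ ⟨0, 0, rfl⟩⟩ u
      exact ⟨_, x, hx, h0 ▸ hu, rfl⟩
    refine csSup_le hne ?_
    rintro _ ⟨x, hx, h0, rfl⟩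
    obtain ⟨y, z, hy, hz, hz0, hy0, hyt⟩ := Switch.exists_factor hcomm hx ht
    have hz0' : z 0 ≠ 0 := hz0 ▸ h0
    have hzt := Switch.IsTrajectory.ne_zero hB hz hz0' ht
    have hy0' : y 0 ≠ 0 := hy0 ▸ hzt
    have hyt' := Switch.IsTrajectory.ne_zero hA hy hy0' ht
    have h1 := le_csSup (Switch.growthSet_bddAbove hA ht) ⟨y, hy, hy0', rfl⟩
    have h2 := le_csSup (Switch.growthSet_bddAbove hB ht) ⟨z, hz, hz0', rfl⟩
    rw [Real.log_div (Switch.eNorm_pos hyt').ne' (Switch.eNorm_pos hy0').ne'] at h1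
    rw [Real.log_div (Switch.eNorm_pos hzt).ne' (Switch.eNorm_pos hz0').ne'] at h2
    rw [← hyt, ← hz0, Real.log_div (Switch.eNorm_pos hyt').ne' (Switch.eNorm_pos hz0').ne']
    rw [hy0] at h1
    linarith
  · -- In dimension zero there are no nonzero trajectories and every supremum is `sSup ∅ = 0`.
    have : ∀ S : Set (Matrix (Fin d) (Fin d) ℝ), Switch.growthSet S t = ∅ := fun S =>
      Set.eq_empty_iff_forall_notMem.2 fun r hr => by
        obtain ⟨x, -, h0, -⟩ := hr
        exact hd ⟨_, h0⟩
    simp [this]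
end

section
/- Let A₀ = [[0,0],[0,-1]] and A₁ = [[-1,1],[-1,-1]] in M₂(ℝ), and let 𝖠 denote their convex hull. Then: 𝖠 is irreducible; Λ(𝖠) = 0 and there exists C > 0 such that every trajectory x of the linear switching system defined by 𝖠 satisfies ‖x(t)‖ ≤ C·‖x(0)‖ for all t ≥ 0 (so the system is marginally stable); and every element of 𝖠 other than A₀ is a Hurwitz matrix. -/
/-!
The squared Euclidean norm is a common weak Lyapunov function: the elements of the convex hull are
the matrices `[[-θ, θ], [-θ, -1]]` with `0 ≤ θ ≤ 1`, and the quadratic form of such a matrix is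
`v ↦ -θ v₀² - v₁² ≤ 0`. Along a trajectory, which is only absolutely continuous, integrating
`d‖x‖²/dt = 2 ⟨x, A x⟩` therefore gives `‖x t‖ ≤ ‖x 0‖` (`eNorm_le_of_isTrajectory`), so the system
is marginally stable with constant `1`. Hence the suprema defining `Lambda` are at most `0`, and the
equilibrium `(1, 0)` of `A₀` shows that they are equal to `0`.

Irreducibility only needs `A₁`, which is minus the identity plus a rotation by a right angle and so
has no real eigenvector. Finally the matrix with parameter `θ` has trace `-(1 + θ) < 0` and
determinant `θ + θ²`, which is positive exactly when the matrix is not `A₀`.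
-/

open MeasureTheory Filter Matrix Kronecker

/-- The convex hull of the two generating matrices is the family `[[-θ, θ], [-θ, -1]]`,
`0 ≤ θ ≤ 1`. -/
lemma mem_hull_iff (M : Matrix (Fin 2) (Fin 2) ℝ) :
    M ∈ convexHull ℝ {!![(0 : ℝ), 0; 0, -1], !![-1, 1; -1, -1]} ↔
      ∃ θ : ℝ, 0 ≤ θ ∧ θ ≤ 1 ∧ M = !![-θ, θ; -θ, -1] := by
  rw [convexHull_pair, segment_eq_image]
  have key : ∀ θ : ℝ, (1 - θ) • !![(0 : ℝ), 0; 0, -1] + θ • !![-1, 1; -1, -1]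
      = !![-θ, θ; -θ, -1] := by
    intro θ
    ext i j
    fin_cases i <;> fin_cases j <;> simp [← sub_eq_add_neg]
  constructor
  · rintro ⟨θ, ⟨h0, h1⟩, rfl⟩
    exact ⟨θ, h0, h1, key θ⟩
  · rintro ⟨θ, h0, h1, rfl⟩
    exact ⟨θ, ⟨h0, h1⟩, key θ⟩

/-- The chain rule for the square of an absolutely continuous function, in integrated form. -/
lemma integral_two_mul_mul_eq_sq_sub_sq {y h : ℝ → ℝ} {t : ℝ} (ht : 0 ≤ t)
    (hh : IntervalIntegrable h volume 0 t)
    (hy : ∀ s, 0 ≤ s → y s = y 0 + ∫ u in (0 : ℝ)..s, h u) :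
    ∫ s in (0 : ℝ)..t, 2 * (y s * h s) = y t ^ 2 - y 0 ^ 2 := by
  set F : ℝ → ℝ := fun s => ∫ u in (0 : ℝ)..s, h u with hF
  have hac : AbsolutelyContinuousOnInterval F 0 t :=
    hh.absolutelyContinuousOnInterval_intervalIntegral (by simp)
  have hprod := hac.integral_deriv_mul_eq_sub hac
  have hFc : ContinuousOn F (Set.uIcc 0 t) := hac.continuousOn
  have hae : ∀ᵐ s, s ∈ Set.uIoc 0 t →
      deriv F s * F s + F s * deriv F s = 2 * (F s * h s) := by
    filter_upwards [hh.ae_hasDerivAt_integral] with s hs hmem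
    have := (hs (Set.uIoc_subset_uIcc hmem) 0 (by simp)).deriv
    rw [show deriv F s = h s from this]
    ring
  rw [intervalIntegral.integral_congr_ae hae] at hprod
  have hFh : IntervalIntegrable (fun s => 2 * (F s * h s)) volume 0 t :=
    (hh.continuousOn_mul hFc).const_mul 2
  have hsplit : ∫ s in (0 : ℝ)..t, 2 * (y s * h s)
      = ∫ s in (0 : ℝ)..t, (2 * y 0 * h s + 2 * (F s * h s)) := by
    refine intervalIntegral.integral_congr fun s hs => ?_
    rw [Set.uIcc_of_le ht] at hs
    simp only [hy s hs.1, hF]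
    ring
  rw [hsplit, intervalIntegral.integral_add (hh.const_mul _) hFh, hprod,
    intervalIntegral.integral_const_mul, hy t ht]
  have hF0 : F 0 = 0 := by simp [hF]
  rw [hF0]
  simp only [hF]
  ring

/-- The Euclidean norm does not exceed its initial value along trajectories of a system all of whose
matrices have a nonpositive quadratic form. -/
lemma eNorm_le_of_isTrajectory {S : Set (Matrix (Fin 2) (Fin 2) ℝ)}
    (hS : ∀ M ∈ S, ∀ v : Fin 2 → ℝ, ∑ i, v i * (M.mulVec v) i ≤ 0)
    {x : ℝ → Fin 2 → ℝ} (hx : IsTrajectory S x) {t : ℝ} (ht : 0 ≤ t) :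
    eNorm (x t) ≤ eNorm (x 0) := by
  obtain ⟨hc, A, -, hAS, hint, heq⟩ := hx
  have hinti : ∀ s, 0 ≤ s → ∀ i, IntervalIntegrable (fun s => (A s).mulVec (x s) i) volume 0 s :=
    fun s hs i => ⟨(hint s hs).1.eval i, (hint s hs).2.eval i⟩
  have hcoord : ∀ i, ∀ s, 0 ≤ s →
      x s i = x 0 i + ∫ u in (0 : ℝ)..s, (A u).mulVec (x u) i := by
    intro i s hs
    have h1 := (ContinuousLinearMap.proj (R := ℝ) (φ := fun _ : Fin 2 => ℝ)
      i).intervalIntegral_comp_comm (hint s hs)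
    simp only [ContinuousLinearMap.proj_apply] at h1
    rw [h1]
    exact congrFun (heq s hs) i
  have hsq : ∀ i, ∫ s in (0 : ℝ)..t, 2 * (x s i * (A s).mulVec (x s) i)
      = x t i ^ 2 - x 0 i ^ 2 := fun i =>
    integral_two_mul_mul_eq_sq_sub_sq (y := fun s => x s i) ht (hinti t ht i) (hcoord i)
  have hii : ∀ i ∈ Finset.univ, IntervalIntegrable
      (fun s => 2 * (x s i * (A s).mulVec (x s) i)) volume 0 t := fun i _ =>
    ((hinti t ht i).continuousOn_mul ((continuous_apply i).comp hc).continuousOn).const_mul 2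
  have hsum := intervalIntegral.integral_finsetSum hii
  simp only [hsq, Finset.sum_sub_distrib] at hsum
  have hle : ∫ s in (0 : ℝ)..t, ∑ i, 2 * (x s i * (A s).mulVec (x s) i) ≤ 0 := by
    have := intervalIntegral.integral_nonneg (μ := volume)
      (f := fun s => - ∑ i, 2 * (x s i * (A s).mulVec (x s) i)) ht (fun s hs => by
        rw [← Finset.mul_sum]
        have := hS _ (hAS s hs.1) (x s)
        linarith)
    rw [intervalIntegral.integral_neg] at this
    linarith
  exact Real.sqrt_le_sqrt (by linarith)

lemma quadraticForm_nonpos (M : Matrix (Fin 2) (Fin 2) ℝ)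
    (hM : M ∈ convexHull ℝ {!![(0 : ℝ), 0; 0, -1], !![-1, 1; -1, -1]}) (v : Fin 2 → ℝ) :
    ∑ i, v i * (M.mulVec v) i ≤ 0 := by
  obtain ⟨θ, h0, -, rfl⟩ := (mem_hull_iff M).1 hM
  simp only [Fin.sum_univ_two, Matrix.mulVec, dotProduct, Matrix.of_apply, Matrix.cons_val_zero,
    Matrix.cons_val_one, Matrix.cons_val_fin_one]
  nlinarith [mul_nonneg h0 (sq_nonneg (v 0)), sq_nonneg (v 1)]

lemma irreducible_hull :
    IrreducibleSystem (convexHull ℝ {!![(0 : ℝ), 0; 0, -1], !![-1, 1; -1, -1]}) := by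
  rintro ⟨V, hpos, hlt, hV⟩
  have hinv := hV !![-1, 1; -1, -1] (subset_convexHull ℝ _ (by simp))
  have hne : V ≠ ⊥ := by
    rintro rfl
    simp at hpos
  obtain ⟨v, hv, hv0⟩ := V.exists_mem_ne_zero_of_ne_bot hne
  -- `w` is `v` rotated by a right angle.
  have hw : ![v 1, -v 0] ∈ V := by
    have h := V.add_mem (hinv v hv) hv
    convert! h using 1
    ext i
    fin_cases i <;> simp [dotProduct, Fin.sum_univ_two]
  have hn : v 0 ^ 2 + v 1 ^ 2 ≠ 0 := by
    intro h
    apply hv0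
    ext i
    fin_cases i
    · show v 0 = 0
      exact pow_eq_zero_iff two_ne_zero |>.1 (by nlinarith [sq_nonneg (v 0), sq_nonneg (v 1)])
    · show v 1 = 0
      exact pow_eq_zero_iff two_ne_zero |>.1 (by nlinarith [sq_nonneg (v 0), sq_nonneg (v 1)])
  have htop : V = ⊤ := by
    refine Submodule.eq_top_iff'.2 fun u => ?_
    -- The coordinates of `u` in the orthogonal basis `v`, `w`.
    have h := V.add_mem
      (V.smul_mem ((u 0 * v 0 + u 1 * v 1) / (v 0 ^ 2 + v 1 ^ 2)) hv)
      (V.smul_mem ((u 0 * v 1 - u 1 * v 0) / (v 0 ^ 2 + v 1 ^ 2)) hw)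
    convert! h using 1
    ext i
    fin_cases i
    · simp
      field_simp
      ring
    · simp
      field_simp
      ring
  rw [htop] at hlt
  simp at hlt

/-- The equilibrium `(1, 0)` of the first generating matrix is a trajectory. -/
lemma isTrajectory_const :
    IsTrajectory (convexHull ℝ {!![(0 : ℝ), 0; 0, -1], !![-1, 1; -1, -1]})
      (fun _ => ![1, 0]) := by
  have h0 : (!![(0 : ℝ), 0; 0, -1]).mulVec ![1, 0] = 0 := by
    ext i
    fin_cases i <;> simp [Matrix.mulVec, dotProduct]
  refine ⟨continuous_const, fun _ => !![0, 0; 0, -1], fun _ _ => measurable_const,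
    fun _ _ => subset_convexHull ℝ _ (by simp), fun t _ => ?_, fun t _ => ?_⟩
  · exact intervalIntegrable_const
  · simp only [h0]
    simp

lemma lambda_hull :
    Lambda (convexHull ℝ {!![(0 : ℝ), 0; 0, -1], !![-1, 1; -1, -1]}) = 0 := by
  refine Tendsto.limUnder_eq (tendsto_const_nhds.congr' ?_)
  filter_upwards [eventually_gt_atTop (0 : ℝ)] with t ht
  refine (IsGreatest.csSup_eq ⟨?_, ?_⟩).symm
  · exact ⟨fun _ => ![1, 0], isTrajectory_const, fun h => by simpa using congrFun h 0,
      by simp [eNorm]⟩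
  · rintro r ⟨x, hx, -, rfl⟩
    have hle := eNorm_le_of_isTrajectory quadraticForm_nonpos hx ht.le
    have hlog : Real.log (eNorm (x t) / eNorm (x 0)) ≤ 0 :=
      Real.log_nonpos (div_nonneg (Real.sqrt_nonneg _) (Real.sqrt_nonneg _))
        (div_le_one_of_le₀ hle (Real.sqrt_nonneg _))
    exact mul_nonpos_of_nonneg_of_nonpos (by positivity) hlog

lemma isHurwitz_of_pos {θ : ℝ} (hθ : 0 < θ) : IsHurwitz !![-θ, θ; -θ, -1] := by
  intro μ hμ
  rw [Matrix.mem_spectrum_iff_isRoot_charpoly, Matrix.charpoly_fin_two] at hμ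
  simp [Matrix.trace, Matrix.det_fin_two, Fin.sum_univ_two] at hμ
  have hre := congrArg Complex.re hμ
  have him := congrArg Complex.im hμ
  simp [pow_two] at hre him
  -- A nonreal root has real part half the trace; a nonnegative real root is impossible.
  have hprod : μ.im * (2 * μ.re + 1 + θ) = 0 := by linarith
  by_contra! hnn
  rcases mul_eq_zero.1 hprod with h | h
  · rw [h] at hre
    nlinarith [mul_nonneg hnn hθ.le, mul_nonneg hnn hnn, mul_pos hθ hθ]
  · linarith

theorem stmt_6 (A₀ A₁ : Matrix (Fin 2) (Fin 2) ℝ)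
    (hA₀ : A₀ = !![0, 0; 0, -1]) (hA₁ : A₁ = !![-1, 1; -1, -1]) :
    IrreducibleSystem (convexHull ℝ {A₀, A₁}) ∧
      Lambda (convexHull ℝ {A₀, A₁}) = 0 ∧
      (∃ C > (0:ℝ), ∀ x : ℝ → Fin 2 → ℝ, IsTrajectory (convexHull ℝ {A₀, A₁}) x →
        ∀ t : ℝ, 0 ≤ t → eNorm (x t) ≤ C * eNorm (x 0)) ∧
      ∀ M ∈ convexHull ℝ {A₀, A₁}, M ≠ A₀ → IsHurwitz M := by
  subst hA₀ hA₁
  refine ⟨irreducible_hull, lambda_hull, ⟨1, one_pos, fun x hx t ht => ?_⟩, fun M hM hne => ?_⟩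
  · rw [one_mul]
    exact eNorm_le_of_isTrajectory quadraticForm_nonpos hx ht
  · obtain ⟨θ, h0, -, rfl⟩ := (mem_hull_iff M).1 hM
    refine isHurwitz_of_pos (lt_of_le_of_ne h0 ?_)
    rintro rfl
    exact hne (by simp)
end

section
/- Let A₀ = [[0,0],[0,-1]] and A₁ = [[-1,1],[-1,-1]] in M₂(ℝ), and let 𝖠 denote their convex hull. Define N : ℝ² → ℝ by N(v₁,v₂) = sup_{τ ≥ 0} |e^{-τ}·v₁·cos τ + e^{-τ}·v₂·sin τ|. Then N is a norm on ℝ², the function t ↦ N(x(t)) is non-increasing for every trajectory x of the linear switching system defined by 𝖠, and for every u ∈ ℝ² there exists a trajectory x of this system with x(0) = u such that N(x(t)) = N(u) for all t ≥ 0; that is, N is a Barabanov norm for 𝖠 (note Λ(𝖠) = 0). -/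
/-!
Let `φ_τ v` be the first coordinate of `e^{τA₁} v`, so that `N v = sup_{τ ≥ 0} |φ_τ v|`.

`N` does not increase along the flow of `A₁`, because `φ_τ (e^{hA₁} v) = φ_{τ+h} v`. It does not
increase under `(v₁, v₂) ↦ (v₁, c v₂)`, `0 ≤ c ≤ 1`, either: this vector is a convex combination of
`v` and `(v₁, 0)`, and `N (v₁, 0) = |v₁| = |φ_0 v| ≤ N v`. By convexity every `A` in the hull
satisfies `N (v + hAv) ≤ N v + O(h²)` (`abs_phi_euler_le`). For a trajectory
`x (t+h) = h⁻¹ ∫_t^{t+h} (x t + h A(s) x(s)) ds`, and `x` is locally Lipschitz, so integrating this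
bound against each functional `φ_τ` gives `N (x (t+h)) ≤ N (x t) + K h²` locally uniformly
(`NA_trajectory_step`). Summing over finer and finer partitions shows that `N ∘ x` is
non-increasing; no differentiability of `x` is used.

For the Barabanov property, the supremum defining `N u` is attained at some `τ₀`
(`exists_NA_eq`). Follow `A₁` up to time `τ₀` and `A₀` afterwards. Up to `τ₀` the value `φ_{τ₀} u` is
still in the future of the `A₁`-flow; after `τ₀` the first coordinate stays equal to `φ_{τ₀} u`. Hence
`N (x t) ≥ N u` throughout, and the reverse inequality is monotonicity.
-/

open MeasureTheory Filter Matrix Kronecker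

/-- The candidate Barabanov norm `N (v₁, v₂) = sup_{τ ≥ 0} |e^{-τ} v₁ cos τ + e^{-τ} v₂ sin τ|`. -/
noncomputable def NA (v : Fin 2 → ℝ) : ℝ :=
  sSup {r | ∃ τ : ℝ, 0 ≤ τ ∧
    r = |Real.exp (-τ) * v 0 * Real.cos τ + Real.exp (-τ) * v 1 * Real.sin τ|}

/-! ### `N` is a norm -/

/-- The functional `φ_τ v = e^{-τ} (v₁ cos τ + v₂ sin τ)`, the first coordinate of `e^{τA₁} v`. -/
noncomputable def phi (τ : ℝ) : (Fin 2 → ℝ) →L[ℝ] ℝ :=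
  (Real.exp (-τ) * Real.cos τ) • ContinuousLinearMap.proj (R := ℝ) (φ := fun _ : Fin 2 => ℝ) 0 +
  (Real.exp (-τ) * Real.sin τ) • ContinuousLinearMap.proj (R := ℝ) (φ := fun _ : Fin 2 => ℝ) 1

lemma phi_apply (τ : ℝ) (v : Fin 2 → ℝ) :
    phi τ v = Real.exp (-τ) * (v 0 * Real.cos τ + v 1 * Real.sin τ) := by
  simp [phi]; ring

lemma phi_zero (v : Fin 2 → ℝ) : phi 0 v = v 0 := by simp [phi_apply]

lemma abs_phi_le_exp (τ : ℝ) (v : Fin 2 → ℝ) :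
    |phi τ v| ≤ Real.exp (-τ) * (|v 0| + |v 1|) := by
  rw [phi_apply, abs_mul, abs_of_pos (Real.exp_pos _)]
  gcongr
  refine (abs_add_le _ _).trans ?_
  rw [abs_mul, abs_mul]
  nlinarith [Real.abs_cos_le_one τ, Real.abs_sin_le_one τ, abs_nonneg (v 0), abs_nonneg (v 1)]

lemma abs_phi_le {τ : ℝ} (hτ : 0 ≤ τ) (v : Fin 2 → ℝ) : |phi τ v| ≤ |v 0| + |v 1| := by
  refine (abs_phi_le_exp τ v).trans (mul_le_of_le_one_left (by positivity) ?_)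
  exact Real.exp_le_one_iff.2 (by linarith)

lemma abs_phi_le_norm {τ : ℝ} (hτ : 0 ≤ τ) (v : Fin 2 → ℝ) : |phi τ v| ≤ 2 * ‖v‖ := by
  have h0 : |v 0| ≤ ‖v‖ := norm_le_pi_norm v 0
  have h1 : |v 1| ≤ ‖v‖ := norm_le_pi_norm v 1
  linarith [abs_phi_le hτ v]

lemma NA_eq (v : Fin 2 → ℝ) : NA v = sSup {r | ∃ τ : ℝ, 0 ≤ τ ∧ r = |phi τ v|} := by
  unfold NA
  congr 1; ext r
  have (τ : ℝ) : Real.exp (-τ) * v 0 * Real.cos τ + Real.exp (-τ) * v 1 * Real.sin τ = phi τ v := by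
    rw [phi_apply]; ring
  simp only [this]

lemma abs_phi_le_NA {τ : ℝ} (hτ : 0 ≤ τ) (v : Fin 2 → ℝ) : |phi τ v| ≤ NA v := by
  rw [NA_eq]
  refine le_csSup ⟨|v 0| + |v 1|, ?_⟩ ⟨τ, hτ, rfl⟩
  rintro _ ⟨σ, hσ, rfl⟩
  exact abs_phi_le hσ v

lemma NA_le {v : Fin 2 → ℝ} {c : ℝ} (h : ∀ τ, 0 ≤ τ → |phi τ v| ≤ c) : NA v ≤ c := by
  rw [NA_eq]
  refine csSup_le ⟨_, 0, le_rfl, rfl⟩ ?_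
  rintro _ ⟨σ, hσ, rfl⟩
  exact h σ hσ

lemma NA_smul_le (a : ℝ) (v : Fin 2 → ℝ) : NA (a • v) ≤ |a| * NA v := by
  refine NA_le fun τ hτ => ?_
  rw [map_smul, smul_eq_mul, abs_mul]
  exact mul_le_mul_of_nonneg_left (abs_phi_le_NA hτ v) (abs_nonneg a)

lemma isNorm_NA : IsNorm NA where
  eq_zero_iff v := by
    constructor
    · intro h
      have h0 := abs_phi_le_NA le_rfl v
      have h1 := abs_phi_le_NA (τ := Real.pi / 2) (by positivity) v
      rw [h, abs_nonpos_iff, phi_apply] at h0 h1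
      simp at h0 h1
      ext i; fin_cases i
      · exact h0
      · exact h1
    · rintro rfl
      refine le_antisymm (NA_le fun τ _ => by simp) ?_
      exact (abs_nonneg _).trans (abs_phi_le_NA le_rfl 0)
  smul a v := by
    refine le_antisymm (NA_smul_le a v) ?_
    rcases eq_or_ne a 0 with rfl | ha
    · simpa using (abs_nonneg _).trans (abs_phi_le_NA le_rfl ((0 : ℝ) • v))
    · have h := NA_smul_le a⁻¹ (a • v)
      rw [inv_smul_smul₀ ha, abs_inv] at h
      rwa [← le_inv_mul_iff₀ (abs_pos.2 ha)]
  triangle v w := NA_le fun τ hτ => by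
    rw [map_add]
    exact (abs_add_le _ _).trans (add_le_add (abs_phi_le_NA hτ v) (abs_phi_le_NA hτ w))

/-! ### Euler steps -/

/-- The flow `e^{hA₁} v` of `A₁`. -/
noncomputable def flow (h : ℝ) (v : Fin 2 → ℝ) : Fin 2 → ℝ :=
  ![Real.exp (-h) * (v 0 * Real.cos h + v 1 * Real.sin h),
    Real.exp (-h) * (-v 0 * Real.sin h + v 1 * Real.cos h)]

lemma phi_flow (τ h : ℝ) (v : Fin 2 → ℝ) : phi τ (flow h v) = phi (τ + h) v := by
  simp only [phi_apply, flow, Matrix.cons_val_zero, Matrix.cons_val_one, Real.cos_add,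
    Real.sin_add, neg_add, Real.exp_add]
  ring

/-- Second-order error bounds for `e^{-h} cos h` and `e^{-h} sin h`, the real and imaginary parts of
`e^{h(-1+i)}`. -/
lemma flow_coeff_error {h : ℝ} (h0 : 0 ≤ h) (h1 : h ≤ 1 / 2) :
    |Real.exp (-h) * Real.cos h - 1 + h| ≤ 2 * h ^ 2 ∧
      |Real.exp (-h) * Real.sin h - h| ≤ 2 * h ^ 2 := by
  set z : ℂ := ⟨-h, h⟩ with hz
  have hn : ‖z‖ ^ 2 = 2 * h ^ 2 := by
    rw [← Complex.normSq_eq_norm_sq, Complex.normSq_mk]; ring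
  have hz1 : ‖z‖ ≤ 1 := by nlinarith [norm_nonneg z]
  have hb := Complex.norm_exp_sub_one_sub_id_le hz1
  rw [hn] at hb
  constructor
  · refine le_trans (le_of_eq ?_) ((Complex.abs_re_le_norm _).trans hb)
    simp [Complex.exp_re, hz]
  · refine le_trans (le_of_eq ?_) ((Complex.abs_im_le_norm _).trans hb)
    simp [Complex.exp_im, hz]

/-- One Euler step for a matrix `A = a A₀ + b A₁` of the hull, written in coordinates, increases `N`
by at most a second-order term. -/
lemma abs_phi_euler_le {a b h τ : ℝ} (ha : 0 ≤ a) (hb : 0 ≤ b) (hab : a + b = 1) (h0 : 0 ≤ h)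
    (h1 : h ≤ 1 / 2) (hτ : 0 ≤ τ) (v : Fin 2 → ℝ) :
    |phi τ (v + h • ![b * (v 1 - v 0), -b * v 0 - v 1])| ≤ NA v + 8 * h ^ 2 * ‖v‖ := by
  have hv0 : |v 0| ≤ ‖v‖ := norm_le_pi_norm v 0
  have hv1 : |v 1| ≤ ‖v‖ := norm_le_pi_norm v 1
  obtain ⟨hc, hs⟩ := flow_coeff_error h0 h1
  have e1 : |phi τ (v + h • ![v 1 - v 0, -v 0 - v 1])| ≤ NA v + 8 * h ^ 2 * ‖v‖ := by
    set w : Fin 2 → ℝ := flow h v - (v + h • ![v 1 - v 0, -v 0 - v 1]) with hw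
    have hw0 : w 0 = (Real.exp (-h) * Real.cos h - 1 + h) * v 0
        + (Real.exp (-h) * Real.sin h - h) * v 1 := by
      simp [hw, flow, Matrix.vecHead, Matrix.vecTail]; ring
    have hw1 : w 1 = (Real.exp (-h) * Real.cos h - 1 + h) * v 1
        - (Real.exp (-h) * Real.sin h - h) * v 0 := by
      simp [hw, flow, Matrix.vecHead, Matrix.vecTail]; ring
    have b0 : |w 0| ≤ 4 * h ^ 2 * ‖v‖ := by
      rw [hw0]
      refine (abs_add_le _ _).trans ?_
      rw [abs_mul, abs_mul]
      have := mul_le_mul hc hv0 (abs_nonneg _) (by positivity)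
      have := mul_le_mul hs hv1 (abs_nonneg _) (by positivity)
      linarith
    have b1 : |w 1| ≤ 4 * h ^ 2 * ‖v‖ := by
      rw [hw1]
      refine (abs_sub _ _).trans ?_
      rw [abs_mul, abs_mul]
      have := mul_le_mul hc hv1 (abs_nonneg _) (by positivity)
      have := mul_le_mul hs hv0 (abs_nonneg _) (by positivity)
      linarith
    have hsplit : v + h • ![v 1 - v 0, -v 0 - v 1] = flow h v - w := by rw [hw]; abel
    rw [hsplit, map_sub, phi_flow]
    refine (abs_sub _ _).trans ?_
    linarith [abs_phi_le_NA (add_nonneg hτ h0) v, abs_phi_le hτ w]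
  have e0 : |phi τ (v + h • ![0, -v 1])| ≤ NA v + 8 * h ^ 2 * ‖v‖ := by
    have hsplit : v + h • ![0, -v 1] = (1 - h) • v + h • ![v 0, 0] := by
      ext i; fin_cases i <;> simp [Matrix.vecHead, Matrix.vecTail] <;> ring
    have hx : |phi τ ![v 0, 0]| ≤ NA v := by
      refine (abs_phi_le hτ _).trans ?_
      simpa [phi_zero] using abs_phi_le_NA le_rfl v
    rw [hsplit, map_add, map_smul, map_smul, smul_eq_mul, smul_eq_mul]
    refine (abs_add_le _ _).trans ?_
    rw [abs_mul, abs_mul, abs_of_nonneg h0, abs_of_nonneg (by linarith : 0 ≤ 1 - h)]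
    have := mul_le_mul_of_nonneg_left hx h0
    have := mul_le_mul_of_nonneg_left (abs_phi_le_NA hτ v) (by linarith : 0 ≤ 1 - h)
    have : 0 ≤ 8 * h ^ 2 * ‖v‖ := by positivity
    linarith
  have hsplit : v + h • ![b * (v 1 - v 0), -b * v 0 - v 1]
      = a • (v + h • ![0, -v 1]) + b • (v + h • ![v 1 - v 0, -v 0 - v 1]) := by
    obtain rfl : a = 1 - b := by linarith
    ext i; fin_cases i <;> simp [Matrix.vecHead, Matrix.vecTail] <;> ring
  rw [hsplit, map_add, map_smul, map_smul, smul_eq_mul, smul_eq_mul]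
  refine (abs_add_le _ _).trans ?_
  rw [abs_mul, abs_mul, abs_of_nonneg ha, abs_of_nonneg hb]
  calc _ ≤ a * (NA v + 8 * h ^ 2 * ‖v‖) + b * (NA v + 8 * h ^ 2 * ‖v‖) := by gcongr
    _ = _ := by rw [← add_mul, hab, one_mul]

lemma mem_hull {A : Matrix (Fin 2) (Fin 2) ℝ}
    (hA : A ∈ convexHull ℝ {!![0, 0; 0, -1], !![-1, 1; -1, -1]}) :
    ∃ a b : ℝ, 0 ≤ a ∧ 0 ≤ b ∧ a + b = 1 ∧
      ∀ v, A.mulVec v = ![b * (v 1 - v 0), -b * v 0 - v 1] := by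
  rw [convexHull_pair] at hA
  obtain ⟨a, b, ha, hb, hab, rfl⟩ := hA
  refine ⟨a, b, ha, hb, hab, fun v => ?_⟩
  obtain rfl : a = 1 - b := by linarith
  ext i; fin_cases i <;> simp [Matrix.mulVec, dotProduct, Fin.sum_univ_two] <;> ring

lemma norm_mulVec_le_of_mem_hull {A : Matrix (Fin 2) (Fin 2) ℝ}
    (hA : A ∈ convexHull ℝ {!![0, 0; 0, -1], !![-1, 1; -1, -1]}) (v : Fin 2 → ℝ) :
    ‖A.mulVec v‖ ≤ 2 * ‖v‖ := by
  obtain ⟨a, b, ha, hb, hab, h⟩ := mem_hull hA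
  have hv0 : |v 0| ≤ ‖v‖ := norm_le_pi_norm v 0
  have hv1 : |v 1| ≤ ‖v‖ := norm_le_pi_norm v 1
  rw [h, pi_norm_le_iff_of_nonneg (by positivity)]
  have hb1 : b ≤ 1 := by linarith
  rw [abs_le] at hv0 hv1
  intro i; fin_cases i <;> simp only [Real.norm_eq_abs, abs_le] <;> simp <;>
    constructor <;> nlinarith

/-! ### Monotonicity along trajectories -/

/-- A function that increases by at most `K h²` over intervals of length `h` is non-increasing:
sum over a partition into `n` equal pieces and let `n → ∞`. -/
lemma le_of_quadratic_step {g : ℝ → ℝ} {s T K : ℝ} (hsT : s ≤ T)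
    (hg : ∀ t h, s ≤ t → 0 < h → h ≤ 1 / 2 → t + h ≤ T → g (t + h) ≤ g t + K * h ^ 2) :
    g T ≤ g s := by
  rcases hsT.eq_or_lt with rfl | hlt
  · exact le_rfl
  set L := T - s with hL
  have hLpos : 0 < L := sub_pos.2 hlt
  have key : ∀ n : ℕ, 2 * L + 1 ≤ n → g T ≤ g s + K * L ^ 2 * (1 / (n : ℝ)) := by
    intro n hn
    have hn0 : (0 : ℝ) < n := by linarith
    set δ := L / n with hδ
    have hδn : n * δ = L := by rw [hδ]; field_simp
    have hδ0 : 0 < δ := by positivity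
    have hδ1 : δ ≤ 1 / 2 := by rw [hδ, div_le_iff₀ hn0]; linarith
    have ind : ∀ k : ℕ, k ≤ n → g (s + k * δ) ≤ g s + k * (K * δ ^ 2) := by
      intro k
      induction k with
      | zero => intro _; simp
      | succ k ih =>
        intro hk
        have hk' : ((k : ℝ) + 1) ≤ n := by exact_mod_cast hk
        have := hg (s + k * δ) δ (by nlinarith [Nat.cast_nonneg (α := ℝ) k]) hδ0 hδ1
          (by nlinarith)
        have e : s + ((k + 1 : ℕ) : ℝ) * δ = s + k * δ + δ := by push_cast; ring
        rw [e]; push_cast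
        linarith [ih (by omega)]
    have h := ind n le_rfl
    have e1 : s + n * δ = T := by rw [hδn]; ring
    have e2 : n * (K * δ ^ 2) = K * L ^ 2 * (1 / (n : ℝ)) := by rw [hδ]; field_simp
    rwa [e1, e2] at h
  have lim : Tendsto (fun n : ℕ => g s + K * L ^ 2 * (1 / (n : ℝ))) atTop (nhds (g s)) := by
    simpa using (tendsto_one_div_atTop_nhds_zero_nat.const_mul (K * L ^ 2)).const_add (g s)
  refine ge_of_tendsto lim ?_
  filter_upwards [eventually_ge_atTop ⌈2 * L + 1⌉₊] with n hn
  exact key n (Nat.ceil_le.1 hn)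

/-- Along a trajectory bounded by `M` on `[0,T]`, `N` grows by at most `24 M h²` over a time
interval of length `h`. -/
lemma NA_trajectory_step {x : ℝ → Fin 2 → ℝ} {A : ℝ → Matrix (Fin 2) (Fin 2) ℝ}
    (hA : ∀ s, 0 ≤ s → A s ∈ convexHull ℝ {!![0, 0; 0, -1], !![-1, 1; -1, -1]})
    (hi : ∀ t, 0 ≤ t → IntervalIntegrable (fun s => (A s).mulVec (x s)) volume 0 t)
    (hx : ∀ t, 0 ≤ t → x t = x 0 + ∫ s in (0:ℝ)..t, (A s).mulVec (x s))
    {T M : ℝ} (hM : ∀ t, 0 ≤ t → t ≤ T → ‖x t‖ ≤ M)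
    {t h : ℝ} (ht : 0 ≤ t) (h0 : 0 < h) (h1 : h ≤ 1 / 2) (hT : t + h ≤ T) :
    NA (x (t + h)) ≤ NA (x t) + 24 * M * h ^ 2 := by
  have hii : ∀ c, 0 ≤ c → IntervalIntegrable (fun s => (A s).mulVec (x s)) volume t c :=
    fun c hc => (hi t ht).symm.trans (hi c hc)
  have hdiff : ∀ c, 0 ≤ c → x c - x t = ∫ s in t..c, (A s).mulVec (x s) := by
    intro c hc
    rw [hx c hc, hx t ht, ← intervalIntegral.integral_interval_sub_left (hi c hc) (hi t ht)]
    abel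
  have hM0 : 0 ≤ M := (norm_nonneg _).trans (hM t ht (by linarith))
  have hLip : ∀ s, t ≤ s → s ≤ t + h → ‖x s - x t‖ ≤ 2 * M * h := by
    intro s hs hs'
    rw [hdiff s (by linarith)]
    have hb := intervalIntegral.norm_integral_le_of_norm_le_const (a := t) (b := s) (C := 2 * M)
      (f := fun s => (A s).mulVec (x s)) (by
        intro r hr
        rw [Set.uIoc_of_le hs] at hr
        refine (norm_mulVec_le_of_mem_hull (hA r (by linarith [hr.1])) _).trans ?_
        linarith [hM r (by linarith [hr.1]) (by linarith [hr.2])])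
    refine hb.trans ?_
    rw [abs_of_nonneg (by linarith)]
    exact mul_le_mul_of_nonneg_left (by linarith) (by positivity)
  have pt : ∀ τ, 0 ≤ τ → ∀ s ∈ Set.Icc t (t + h),
      |phi τ (x t) + h * phi τ ((A s).mulVec (x s))| ≤ NA (x t) + 24 * M * h ^ 2 := by
    intro τ hτ s hs
    have hs0 : 0 ≤ s := ht.trans hs.1
    obtain ⟨a, b, ha, hb, hab, hv⟩ := mem_hull (hA s hs0)
    have e := abs_phi_euler_le ha hb hab h0.le h1 hτ (x t)
    rw [← hv] at e
    have d := abs_phi_le_norm hτ ((A s).mulVec (x s - x t))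
    have d' := norm_mulVec_le_of_mem_hull (hA s hs0) (x s - x t)
    have d'' := hLip s hs.1 hs.2
    have hMt := hM t ht (by linarith)
    have heq : phi τ (x t) + h * phi τ ((A s).mulVec (x s))
        = phi τ (x t + h • (A s).mulVec (x t)) + h * phi τ ((A s).mulVec (x s - x t)) := by
      rw [Matrix.mulVec_sub, map_sub, map_add, map_smul, smul_eq_mul]; ring
    rw [heq]
    refine (abs_add_le _ _).trans ?_
    rw [abs_mul, abs_of_pos h0]
    have g1 : h * |phi τ ((A s).mulVec (x s - x t))| ≤ h * (8 * M * h) := by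
      gcongr; linarith
    have g2 : 8 * h ^ 2 * ‖x t‖ ≤ 8 * h ^ 2 * M := by gcongr
    have g3 : 0 ≤ M * h ^ 2 := by positivity
    nlinarith
  refine NA_le fun τ hτ => ?_
  have hth : 0 ≤ t + h := by linarith
  -- `h φ_τ (x (t+h))` is the integral of the quantity bounded in `pt`.
  have hint : IntervalIntegrable (fun s => phi τ ((A s).mulVec (x s))) volume t (t + h) :=
    ⟨(phi τ).integrable_comp (hii _ hth).1, (phi τ).integrable_comp (hii _ hth).2⟩
  have hI : ∫ s in t..(t + h), (phi τ (x t) + h * phi τ ((A s).mulVec (x s)))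
      = h * phi τ (x (t + h)) := by
    rw [intervalIntegral.integral_add intervalIntegrable_const (hint.const_mul h),
      intervalIntegral.integral_const, intervalIntegral.integral_const_mul,
      (phi τ).intervalIntegral_comp_comm (hii _ hth), ← hdiff _ hth, map_sub, smul_eq_mul]
    ring
  have hB := intervalIntegral.norm_integral_le_of_norm_le_const (a := t) (b := t + h)
    (C := NA (x t) + 24 * M * h ^ 2)
    (f := fun s => phi τ (x t) + h * phi τ ((A s).mulVec (x s))) (by
      intro s hs
      rw [Set.uIoc_of_le (by linarith)] at hs
      exact pt τ hτ s ⟨hs.1.le, hs.2⟩)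
  rw [hI, Real.norm_eq_abs, abs_mul, add_sub_cancel_left, abs_of_pos h0, mul_comm] at hB
  exact le_of_mul_le_mul_right hB h0

lemma NA_trajectory_antitone {x : ℝ → Fin 2 → ℝ}
    (hx : IsTrajectory (convexHull ℝ {!![0, 0; 0, -1], !![-1, 1; -1, -1]}) x)
    {s t : ℝ} (hs : 0 ≤ s) (hst : s ≤ t) : NA (x t) ≤ NA (x s) := by
  obtain ⟨hc, A, -, hA, hi, hx⟩ := hx
  obtain ⟨M, hM⟩ := (isCompact_Icc (a := (0 : ℝ)) (b := t)).exists_bound_of_continuousOn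
    hc.continuousOn
  refine le_of_quadratic_step (g := fun t => NA (x t)) (K := 24 * M) hst ?_
  intro r h hr h0 h1 hT
  exact NA_trajectory_step hA hi hx (fun t h h' => hM t ⟨h, h'⟩) (hs.trans hr) h0 h1 hT

/-! ### Trajectories along which `N` is constant -/

/-- The supremum defining `N` is attained, since `φ_τ u → 0` as `τ → ∞`. -/
lemma exists_NA_eq (u : Fin 2 → ℝ) : ∃ τ, 0 ≤ τ ∧ NA u = |phi τ u| := by
  by_cases hz : ∀ τ, 0 ≤ τ → |phi τ u| = 0
  · exact ⟨0, le_rfl, le_antisymm (NA_le fun τ hτ => by rw [hz τ hτ, hz 0 le_rfl])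
      (abs_phi_le_NA le_rfl u)⟩
  push Not at hz
  obtain ⟨σ, hσ, hne⟩ := hz
  have hpos : 0 < |phi σ u| := lt_of_le_of_ne (abs_nonneg _) hne.symm
  have lim : Tendsto (fun τ : ℝ => Real.exp (-τ) * (|u 0| + |u 1|)) atTop (nhds 0) := by
    simpa using (Real.tendsto_exp_neg_atTop_nhds_zero).mul_const (|u 0| + |u 1|)
  obtain ⟨T, hT⟩ := eventually_atTop.1 (lim.eventually_lt_const hpos)
  have hcont : Continuous fun τ => |phi τ u| := by
    simp only [phi_apply]; fun_prop
  obtain ⟨τ, hτ, hmax⟩ := (isCompact_Icc (a := (0 : ℝ)) (b := max σ T)).exists_isMaxOn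
    ⟨σ, hσ, le_max_left _ _⟩ hcont.continuousOn
  refine ⟨τ, hτ.1, le_antisymm (NA_le fun r hr => ?_) (abs_phi_le_NA hτ.1 u)⟩
  rcases le_total r (max σ T) with h | h
  · exact hmax ⟨hr, h⟩
  · exact (abs_phi_le_exp r u).trans
      ((hT r ((le_max_right _ _).trans h)).le.trans (hmax ⟨hσ, le_max_left _ _⟩))

/-- The trajectory from `u` following `A₁` until time `τ` and `A₀` from then on. -/
noncomputable def barTraj (τ : ℝ) (u : Fin 2 → ℝ) (t : ℝ) : Fin 2 → ℝ :=
  ![flow (min t τ) u 0, Real.exp (-max (t - τ) 0) * flow (min t τ) u 1]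

/-- The switching law of `barTraj`. -/
noncomputable def barLaw (τ : ℝ) (t : ℝ) : Matrix (Fin 2) (Fin 2) ℝ :=
  if t < τ then !![-1, 1; -1, -1] else !![0, 0; 0, -1]

lemma barTraj_of_le {τ t : ℝ} (h : t ≤ τ) (u : Fin 2 → ℝ) : barTraj τ u t = flow t u := by
  ext i; fin_cases i <;> simp [barTraj, h]

lemma barTraj_of_ge {τ t : ℝ} (h : τ ≤ t) (u : Fin 2 → ℝ) :
    barTraj τ u t = ![flow τ u 0, Real.exp (-(t - τ)) * flow τ u 1] := by
  simp [barTraj, h]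

lemma continuous_barTraj (τ : ℝ) (u : Fin 2 → ℝ) : Continuous (barTraj τ u) := by
  refine continuous_pi fun i => ?_
  fin_cases i <;> simp [barTraj, flow] <;> fun_prop

lemma hasDerivAt_flow (u : Fin 2 → ℝ) (t : ℝ) :
    HasDerivAt (fun t => flow t u)
      ((!![-1, 1; -1, -1] : Matrix (Fin 2) (Fin 2) ℝ).mulVec (flow t u)) t := by
  have he : HasDerivAt (fun t : ℝ => Real.exp (-t)) (Real.exp (-t) * -1) t :=
    (hasDerivAt_neg t).exp
  have hc := Real.hasDerivAt_cos t
  have hs := Real.hasDerivAt_sin t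
  have e : (!![-1, 1; -1, -1] : Matrix (Fin 2) (Fin 2) ℝ).mulVec (flow t u) =
      ![Real.exp (-t) * -1 * (u 0 * Real.cos t + u 1 * Real.sin t)
          + Real.exp (-t) * (u 0 * -Real.sin t + u 1 * Real.cos t),
        Real.exp (-t) * -1 * (-u 0 * Real.sin t + u 1 * Real.cos t)
          + Real.exp (-t) * (-u 0 * Real.cos t + u 1 * -Real.sin t)] := by
    ext i; fin_cases i <;> simp [flow, Matrix.vecHead, Matrix.vecTail] <;> ring
  rw [e, hasDerivAt_pi]
  intro i; fin_cases i
  · exact he.mul ((hc.const_mul (u 0)).add (hs.const_mul (u 1)))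
  · exact he.mul ((hs.const_mul (-u 0)).add (hc.const_mul (u 1)))

lemma hasDerivWithinAt_barTraj (τ : ℝ) (u : Fin 2 → ℝ) (t : ℝ) :
    HasDerivWithinAt (barTraj τ u) ((barLaw τ t).mulVec (barTraj τ u t)) (Set.Ioi t) t := by
  rcases lt_or_ge t τ with h | h
  · rw [barTraj_of_le h.le, barLaw, if_pos h]
    refine ((hasDerivAt_flow u t).congr_of_eventuallyEq ?_).hasDerivWithinAt
    filter_upwards [eventually_lt_nhds h] with s hs using barTraj_of_le hs.le u
  · rw [barTraj_of_ge h, barLaw, if_neg h.not_gt]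
    have he : HasDerivAt (fun t : ℝ => Real.exp (-(t - τ))) (Real.exp (-(t - τ)) * -1) t :=
      (((hasDerivAt_id t).sub_const τ).neg).exp
    have hd : HasDerivAt (fun t : ℝ => ![flow τ u 0, Real.exp (-(t - τ)) * flow τ u 1])
        ((!![0, 0; 0, -1] : Matrix (Fin 2) (Fin 2) ℝ).mulVec
          ![flow τ u 0, Real.exp (-(t - τ)) * flow τ u 1]) t := by
      have e : (!![0, 0; 0, -1] : Matrix (Fin 2) (Fin 2) ℝ).mulVec
          ![flow τ u 0, Real.exp (-(t - τ)) * flow τ u 1] =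
          ![0, Real.exp (-(t - τ)) * -1 * flow τ u 1] := by
        ext i; fin_cases i <;> simp
      rw [e, hasDerivAt_pi]
      intro i; fin_cases i
      · exact hasDerivAt_const t (flow τ u 0)
      · exact he.mul_const (flow τ u 1)
    exact hd.hasDerivWithinAt.congr (fun s hs => barTraj_of_ge (h.trans (le_of_lt hs)) u)
      (barTraj_of_ge h u)

lemma isTrajectory_barTraj (τ : ℝ) (u : Fin 2 → ℝ) :
    IsTrajectory (convexHull ℝ {!![0, 0; 0, -1], !![-1, 1; -1, -1]}) (barTraj τ u) := by
  have hcont := continuous_barTraj τ u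
  have hint : ∀ t, IntervalIntegrable (fun s => (barLaw τ s).mulVec (barTraj τ u s)) volume 0 t := by
    intro t
    have hf (B : Matrix (Fin 2) (Fin 2) ℝ) :
        IntervalIntegrable (fun s => B.mulVec (barTraj τ u s)) volume 0 t :=
      (Continuous.matrix_mulVec continuous_const hcont).intervalIntegrable 0 t
    have e : (fun s => (barLaw τ s).mulVec (barTraj τ u s))
        = (Set.Iio τ).piecewise (fun s => !![-1, 1; -1, -1].mulVec (barTraj τ u s))
          (fun s => !![0, 0; 0, -1].mulVec (barTraj τ u s)) := by
      ext1 s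
      by_cases hs : s < τ <;> simp [barLaw, hs, Set.piecewise]
    rw [e]
    exact ⟨Integrable.piecewise measurableSet_Iio (hf _).1.integrableOn (hf _).1.integrableOn,
      Integrable.piecewise measurableSet_Iio (hf _).2.integrableOn (hf _).2.integrableOn⟩
  refine ⟨hcont, barLaw τ, fun i j => ?_, fun s _ => ?_, fun t _ => hint t, fun t ht => ?_⟩
  · have e : (fun s => barLaw τ s i j) = fun s => if s < τ then
        (!![-1, 1; -1, -1] : Matrix (Fin 2) (Fin 2) ℝ) i j else
        (!![0, 0; 0, -1] : Matrix (Fin 2) (Fin 2) ℝ) i j := by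
      ext s; unfold barLaw; split_ifs <;> rfl
    rw [e]
    exact Measurable.ite measurableSet_Iio measurable_const measurable_const
  · apply subset_convexHull
    unfold barLaw; split_ifs <;> simp
  · rw [intervalIntegral.integral_eq_sub_of_hasDeriv_right hcont.continuousOn
      (fun s _ => hasDerivWithinAt_barTraj τ u s) (hint t)]
    abel

theorem stmt_7 (A₀ A₁ : Matrix (Fin 2) (Fin 2) ℝ)
    (hA₀ : A₀ = !![0, 0; 0, -1]) (hA₁ : A₁ = !![-1, 1; -1, -1]) :
    IsNorm NA ∧
      (∀ x : ℝ → Fin 2 → ℝ, IsTrajectory (convexHull ℝ {A₀, A₁}) x →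
        ∀ s t : ℝ, 0 ≤ s → s ≤ t → NA (x t) ≤ NA (x s)) ∧
      ∀ u : Fin 2 → ℝ, ∃ x : ℝ → Fin 2 → ℝ, IsTrajectory (convexHull ℝ {A₀, A₁}) x ∧
        x 0 = u ∧ ∀ t : ℝ, 0 ≤ t → NA (x t) = NA u := by
  subst hA₀ hA₁
  refine ⟨isNorm_NA, fun x hx s t hs hst => NA_trajectory_antitone hx hs hst, fun u => ?_⟩
  obtain ⟨τ, hτ, hmax⟩ := exists_NA_eq u
  have htraj := isTrajectory_barTraj τ u
  have hzero : barTraj τ u 0 = u := by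
    rw [barTraj_of_le hτ]
    ext i; fin_cases i <;> simp [flow]
  refine ⟨barTraj τ u, htraj, hzero, fun t ht => le_antisymm ?_ ?_⟩
  · simpa only [hzero] using NA_trajectory_antitone htraj le_rfl ht
  · rw [hmax]
    rcases le_total t τ with h | h
    · have := abs_phi_le_NA (sub_nonneg.2 h) (flow t u)
      rwa [phi_flow, sub_add_cancel, ← barTraj_of_le h] at this
    · have h0 : barTraj τ u t 0 = phi τ u := by
        rw [barTraj_of_ge h, Matrix.cons_val_zero, ← phi_zero (flow τ u), phi_flow, zero_add]
      have := abs_phi_le_NA le_rfl (barTraj τ u t)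
      rwa [phi_zero, h0] at this
end

section
/- Define N : ℝ² → ℝ by N(v₁,v₂) = sup_{τ ≥ 0} |e^{-τ}·v₁·cos τ + e^{-τ}·v₂·sin τ|. Then for all v₁, v₂ ∈ ℝ with |v₂| ≤ |v₁| one has N(v₁,v₂) = N(v₁,0) = |v₁|. -/
/-! For `τ ≥ 0` one has `|cos τ| + |sin τ| ≤ 1 + τ ≤ e^τ`. Hence, when `|v₂| ≤ |v₁|`, each element
of the set defining `Nsup v₁ v₂` is at most `|v₁|`, and this value is attained at `τ = 0`. -/

open MeasureTheory Filter Matrix Kronecker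

/-- `Nsup v₁ v₂ = sup_{τ ≥ 0} |e^{-τ} v₁ cos τ + e^{-τ} v₂ sin τ|`. -/
noncomputable def Nsup (v₁ v₂ : ℝ) : ℝ :=
  sSup {r | ∃ τ : ℝ, 0 ≤ τ ∧
    r = |Real.exp (-τ) * v₁ * Real.cos τ + Real.exp (-τ) * v₂ * Real.sin τ|}

lemma Nsup_eq_abs (v₁ v₂ : ℝ) (h : |v₂| ≤ |v₁|) : Nsup v₁ v₂ = |v₁| := by
  refine IsGreatest.csSup_eq ⟨⟨0, le_rfl, by simp⟩, ?_⟩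
  rintro r ⟨τ, hτ, rfl⟩
  have hs : |Real.sin τ| ≤ τ := by simpa [abs_of_nonneg hτ] using Real.abs_sin_le_abs (x := τ)
  have hsum : |Real.cos τ| + |Real.sin τ| ≤ Real.exp τ := by
    linarith [Real.abs_cos_le_one τ, Real.add_one_le_exp τ]
  calc |Real.exp (-τ) * v₁ * Real.cos τ + Real.exp (-τ) * v₂ * Real.sin τ|
      ≤ |Real.exp (-τ) * v₁ * Real.cos τ| + |Real.exp (-τ) * v₂ * Real.sin τ| := abs_add_le _ _
    _ = Real.exp (-τ) * (|v₁| * |Real.cos τ| + |v₂| * |Real.sin τ|) := by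
        simp only [abs_mul, Real.abs_exp]; ring
    _ ≤ Real.exp (-τ) * (|v₁| * |Real.cos τ| + |v₁| * |Real.sin τ|) := by gcongr
    _ = Real.exp (-τ) * (|v₁| * (|Real.cos τ| + |Real.sin τ|)) := by ring
    _ ≤ Real.exp (-τ) * (|v₁| * Real.exp τ) := by gcongr
    _ = |v₁| := by rw [mul_left_comm, ← Real.exp_add]; simp

theorem stmt_8 (v₁ v₂ : ℝ) (h : |v₂| ≤ |v₁|) :
    Nsup v₁ v₂ = Nsup v₁ 0 ∧ Nsup v₁ 0 = |v₁| := by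
  have h0 : Nsup v₁ 0 = |v₁| := Nsup_eq_abs v₁ 0 (by simp)
  exact ⟨(Nsup_eq_abs v₁ v₂ h).trans h0.symm, h0⟩
end

section
/- Let A₀ = [[0,0],[0,-1]] and A₁ = [[-1,1],[-1,-1]] in M₂(ℝ), and let 𝖠 denote their convex hull. If N₁ and N₂ are both Barabanov norms for 𝖠, then there exists c > 0 such that N₁(v) = c·N₂(v) for all v ∈ ℝ². -/
/-!
Write `S` for the convex hull of `{A₀, A₁}` and `Λ = Lambda S`. Every `A ∈ S` satisfies
`⟨v, A v⟩ ≤ -v₁²` (coordinates are numbered `0, 1`), so along a trajectory `x` the energy balance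
`‖x T‖² + 2 ∫₀ᵀ (x t)₁² dt ≤ ‖x 0‖²` holds (`energy_bound`). Hence every trajectory is bounded and
comes arbitrarily close to the axis `ℝ e₀` (`exists_small`), which consists of equilibria of `A₀`.

Given a Barabanov norm, the equilibrium `e₀` forces `Λ ≥ 0`, and the boundedness of a trajectory
along which `e^{-tΛ} N (x t)` is constant forces `Λ ≤ 0`; thus `Λ = 0`
(`lambda_eq_zero`). If `x` is a trajectory from `u` on which `N₁` is constant, then at a time
when `(x t)₁` is small, `N₁ u = N₁ (x t) ≈ |(x t)₀| N₁ e₀`, whereas extremality of `N₂` gives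
`N₂ u ≥ N₂ (x t) ≈ |(x t)₀| N₂ e₀`. Therefore `N₁ u * N₂ e₀ ≤ N₂ u * N₁ e₀`, and exchanging the
two norms gives equality, with `c = N₁ e₀ / N₂ e₀`.
-/

open MeasureTheory Filter Matrix Kronecker

/-! ### Energy dissipation along trajectories -/

/-- The set of matrices of the switching system. -/
def swSet : Set (Matrix (Fin 2) (Fin 2) ℝ) :=
  convexHull ℝ {!![0, 0; 0, -1], !![-1, 1; -1, -1]}

lemma swSet_dissipative {A : Matrix (Fin 2) (Fin 2) ℝ} (hA : A ∈ swSet) (v : Fin 2 → ℝ) :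
    v 0 * A.mulVec v 0 + v 1 * A.mulVec v 1 ≤ -(v 1) ^ 2 := by
  have hconv : Convex ℝ {B : Matrix (Fin 2) (Fin 2) ℝ |
      v 0 * B.mulVec v 0 + v 1 * B.mulVec v 1 ≤ -(v 1) ^ 2} := by
    intro B hB C hC a b ha hb hab
    simp only [Set.mem_ofPred_eq, add_mulVec, smul_mulVec, Pi.add_apply, Pi.smul_apply,
      smul_eq_mul] at hB hC ⊢
    have h1 := mul_le_mul_of_nonneg_left hB ha
    have h2 := mul_le_mul_of_nonneg_left hC hb
    have h3 : -(v 1) ^ 2 = a * -(v 1) ^ 2 + b * -(v 1) ^ 2 := by rw [← add_mul, hab, one_mul]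
    rw [h3]
    linarith
  refine convexHull_min ?_ hconv hA
  rintro B (rfl | rfl)
  · simp [mulVec, dotProduct, Fin.sum_univ_two]
    nlinarith
  · simp [mulVec, dotProduct, Fin.sum_univ_two]
    nlinarith [sq_nonneg (v 0)]

/-- The chain rule for the square of an absolutely continuous function given by its primitive. -/
lemma sq_sub_sq_eq_integral {u f : ℝ → ℝ} {T : ℝ} (hT : 0 ≤ T)
    (hf : IntervalIntegrable f volume 0 T)
    (hu : ∀ t ∈ Set.Icc 0 T, u t = u 0 + ∫ s in (0:ℝ)..t, f s) :
    (u T) ^ 2 - (u 0) ^ 2 = ∫ t in (0:ℝ)..T, 2 * (u t * f t) := by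
  let U : ℝ → ℝ := fun t => ∫ s in (0:ℝ)..t, f s
  have hU : AbsolutelyContinuousOnInterval U 0 T :=
    hf.absolutelyContinuousOnInterval_intervalIntegral (by simp)
  -- `(u - u 0)²` and `u` are treated separately, so that only the primitive `U` is differentiated.
  have h1 := hU.integral_deriv_mul_eq_sub hU
  have h2 : ∫ t in (0:ℝ)..T, (deriv U t * U t + U t * deriv U t)
      = ∫ t in (0:ℝ)..T, (2 * (u t * f t) - 2 * u 0 * f t) := by
    apply intervalIntegral.integral_congr_ae
    filter_upwards [hf.ae_hasDerivAt_integral] with t ht htm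
    have htm' : t ∈ Set.uIcc 0 T := Set.uIoc_subset_uIcc htm
    have hd : deriv U t = f t := (ht htm' 0 (by simp)).deriv
    rw [hd, hu t (by rwa [Set.uIcc_of_le hT] at htm')]
    simp only [U]
    ring
  have hcont : ContinuousOn u (Set.uIcc 0 T) := by
    refine (continuousOn_const.add hU.continuousOn).congr (f := fun t => u 0 + U t) ?_
    intro t ht
    exact hu t (by rwa [Set.uIcc_of_le hT] at ht)
  rw [h2, intervalIntegral.integral_sub ((hf.continuousOn_mul hcont).const_mul 2)
    (hf.const_mul _), intervalIntegral.integral_const_mul (2 * u 0)] at h1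
  have hU0 : U 0 = 0 := by simp [U]
  have h3 : u T = u 0 + U T := hu T ⟨hT, le_rfl⟩
  rw [hU0] at h1
  have h4 : ∫ t in (0:ℝ)..T, f t = U T := rfl
  rw [h4] at h1
  rw [h3]
  linarith

lemma energy_bound {x : ℝ → Fin 2 → ℝ} (hx : IsTrajectory swSet x) {T : ℝ} (hT : 0 ≤ T) :
    (x T 0) ^ 2 + (x T 1) ^ 2 + 2 * ∫ t in (0:ℝ)..T, (x t 1) ^ 2
      ≤ (x 0 0) ^ 2 + (x 0 1) ^ 2 := by
  obtain ⟨hc, A, -, hA, hint, heq⟩ := hx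
  have hci : ∀ i, Continuous fun t => x t i := fun i => (continuous_apply i).comp hc
  have hinti : ∀ i, ∀ t, 0 ≤ t →
      IntervalIntegrable (fun s => (A s).mulVec (x s) i) volume 0 t := by
    intro i t ht
    have h := hint t ht
    rw [intervalIntegrable_iff] at h ⊢
    exact h.eval i
  have heqi : ∀ i, ∀ t ∈ Set.Icc 0 T,
      x t i = x 0 i + ∫ s in (0:ℝ)..t, (A s).mulVec (x s) i := by
    intro i t ht
    have h := congrFun (heq t ht.1) i
    rw [Pi.add_apply] at h
    rw [h]
    congr 1
    exact ((ContinuousLinearMap.proj (R := ℝ) (φ := fun _ : Fin 2 => ℝ)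
      i).intervalIntegral_comp_comm (hint t ht.1)).symm
  have e0 := sq_sub_sq_eq_integral hT (hinti 0 T hT) (heqi 0)
  have e1 := sq_sub_sq_eq_integral hT (hinti 1 T hT) (heqi 1)
  have i0 := ((hinti 0 T hT).continuousOn_mul (hci 0).continuousOn).const_mul 2
  have i1 := ((hinti 1 T hT).continuousOn_mul (hci 1).continuousOn).const_mul 2
  have hle : ∫ t in (0:ℝ)..T, (2 * (x t 0 * (A t).mulVec (x t) 0)
        + 2 * (x t 1 * (A t).mulVec (x t) 1))
      ≤ ∫ t in (0:ℝ)..T, (-2) * (x t 1) ^ 2 := by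
    refine intervalIntegral.integral_mono_on hT (i0.add i1)
      ((continuous_const.mul ((hci 1).pow 2)).intervalIntegrable _ _) ?_
    intro t ht
    have := swSet_dissipative (hA t ht.1) (x t)
    linarith
  rw [intervalIntegral.integral_add i0 i1, intervalIntegral.integral_const_mul (-2)] at hle
  linarith

lemma traj_bound {x : ℝ → Fin 2 → ℝ} (hx : IsTrajectory swSet x) {T : ℝ} (hT : 0 ≤ T) :
    (x T 0) ^ 2 + (x T 1) ^ 2 ≤ (x 0 0) ^ 2 + (x 0 1) ^ 2 := by
  have h := energy_bound hx hT
  have : 0 ≤ ∫ t in (0:ℝ)..T, (x t 1) ^ 2 :=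
    intervalIntegral.integral_nonneg hT fun t _ => sq_nonneg _
  linarith

lemma exists_small {x : ℝ → Fin 2 → ℝ} (hx : IsTrajectory swSet x) {ε : ℝ} (hε : 0 < ε) :
    ∃ t, 0 ≤ t ∧ |x t 1| < ε := by
  by_contra! hcon
  set R := (x 0 0) ^ 2 + (x 0 1) ^ 2
  have hR : 0 ≤ R := by positivity
  -- On `[0, T]` the dissipated energy would be at least `2 T ε² = 2 (R + 1)`.
  set T := (R + 1) / ε ^ 2
  have hT : 0 ≤ T := by positivity
  have h := energy_bound hx hT
  have hci : Continuous fun t => x t 1 := (continuous_apply 1).comp hx.1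
  have hle : ∫ t in (0:ℝ)..T, ε ^ 2 ≤ ∫ t in (0:ℝ)..T, (x t 1) ^ 2 := by
    refine intervalIntegral.integral_mono_on hT (by simp)
      ((hci.pow 2).intervalIntegrable _ _) ?_
    intro t ht
    rw [← sq_abs (x t 1)]
    exact pow_le_pow_left₀ hε.le (hcon t ht.1) 2
  rw [intervalIntegral.integral_const, smul_eq_mul, sub_zero] at hle
  have hTε : T * ε ^ 2 = R + 1 := div_mul_cancel₀ _ (by positivity)
  nlinarith [sq_nonneg (x T 0), sq_nonneg (x T 1)]

lemma const_trajectory : IsTrajectory swSet fun _ => ![1, 0] := by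
  have h0 : (!![0, 0; 0, -1] : Matrix (Fin 2) (Fin 2) ℝ).mulVec ![1, 0] = 0 := by
    ext i; fin_cases i <;> simp
  refine ⟨continuous_const, fun _ => !![0, 0; 0, -1], fun _ _ => measurable_const,
    fun _ _ => subset_convexHull ℝ _ (by simp), fun t _ => ?_, fun t _ => ?_⟩
  · simp only [h0]; exact intervalIntegrable_const
  · simp only [h0]; simp

/-! ### Norms on the plane in coordinates -/

namespace IsNorm

variable {N : (Fin 2 → ℝ) → ℝ}

lemma nonneg (h : IsNorm N) (v : Fin 2 → ℝ) : 0 ≤ N v := by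
  have h1 := h.triangle v (-v)
  have h2 := h.smul (-1) v
  have h0 := (h.eq_zero_iff 0).2 rfl
  simp only [neg_smul, one_smul, abs_neg, abs_one, one_mul] at h2
  rw [add_neg_cancel, h0, h2] at h1
  linarith

lemma pos (h : IsNorm N) {v : Fin 2 → ℝ} (hv : v ≠ 0) : 0 < N v :=
  lt_of_le_of_ne (h.nonneg v) fun h' => hv ((h.eq_zero_iff v).1 h'.symm)

lemma le_coords (h : IsNorm N) (v : Fin 2 → ℝ) :
    N v ≤ |v 0| * N ![1, 0] + |v 1| * N ![0, 1] := by
  have hv : v = v 0 • ![1, 0] + v 1 • ![0, 1] := by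
    ext i; fin_cases i <;> simp
  calc N v = N (v 0 • ![1, 0] + v 1 • ![0, 1]) := by rw [← hv]
    _ ≤ _ := h.triangle _ _
    _ = _ := by rw [h.smul, h.smul]

lemma coords_le (h : IsNorm N) (v : Fin 2 → ℝ) :
    |v 0| * N ![1, 0] ≤ N v + |v 1| * N ![0, 1] := by
  have hv : v 0 • ![1, 0] = v + (-v 1) • ![0, 1] := by
    ext i; fin_cases i <;> simp
  calc |v 0| * N ![1, 0] = N (v + (-v 1) • ![0, 1]) := by rw [← hv, h.smul]
    _ ≤ _ := h.triangle _ _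
    _ = _ := by rw [h.smul, abs_neg]

end IsNorm

/-! ### Vanishing of the exponent and comparison of Barabanov norms -/

lemma e0_ne_zero : (![1, 0] : Fin 2 → ℝ) ≠ 0 := fun h => by simpa using congrFun h 0

lemma lambda_eq_zero {N : (Fin 2 → ℝ) → ℝ} (h : IsBarabanovNorm swSet N) :
    Lambda swSet = 0 := by
  obtain ⟨⟨hN, hext⟩, hbar⟩ := h
  set L := Lambda swSet
  have hpos : 0 < N ![1, 0] := hN.pos e0_ne_zero
  apply le_antisymm
  · by_contra! hL
    obtain ⟨x, hx, hx0, hc⟩ := hbar ![1, 0]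
    -- The trajectory stays in the Euclidean unit ball, so `N` is bounded by `K` along it.
    set K := N ![1, 0] + N ![0, 1]
    have hK : 0 ≤ K := add_nonneg (hN.nonneg _) (hN.nonneg _)
    -- This time is chosen so that `1 + t * L` exceeds `K / N e₀`.
    set t := K / N ![1, 0] / L
    have ht : 0 ≤ t := by positivity
    have htL : t * L * N ![1, 0] = K := by
      simp only [t]; field_simp
    have hb := traj_bound hx ht
    rw [hx0] at hb
    simp only [cons_val_zero, cons_val_one] at hb
    have h0 : |x t 0| ≤ 1 := by
      apply abs_le_one_iff_mul_self_le_one.2; nlinarith [sq_nonneg (x t 1)]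
    have h1 : |x t 1| ≤ 1 := by
      apply abs_le_one_iff_mul_self_le_one.2; nlinarith [sq_nonneg (x t 0)]
    have hNx : N (x t) ≤ K := by
      have := hN.le_coords (x t)
      have a := mul_le_of_le_one_left (hN.nonneg ![1, 0]) h0
      have b := mul_le_of_le_one_left (hN.nonneg ![0, 1]) h1
      linarith
    have hE : N (x t) = Real.exp (t * L) * N ![1, 0] := by
      rw [← hc t ht, ← mul_assoc, ← Real.exp_add]; simp
    have hexp := Real.add_one_le_exp (t * L)
    nlinarith
  · have h := hext _ const_trajectory 0 1 le_rfl zero_le_one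
    have h' := le_of_mul_le_mul_right h hpos
    rw [Real.exp_le_exp] at h'
    linarith

lemma barabanov_compare {N₁ N₂ : (Fin 2 → ℝ) → ℝ} (h₁ : IsBarabanovNorm swSet N₁)
    (h₂ : IsBarabanovNorm swSet N₂) (u : Fin 2 → ℝ) :
    N₁ u * N₂ ![1, 0] ≤ N₂ u * N₁ ![1, 0] := by
  have hL := lambda_eq_zero h₁
  obtain ⟨x, hx, hx0, hc⟩ := h₁.2 u
  have hn₁ := h₁.1.1
  have hn₂ := h₂.1.1
  have p₁ := hn₁.nonneg ![1, 0]
  have p₂ := hn₂.nonneg ![1, 0]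
  have q₁ := hn₁.nonneg ![0, 1]
  have q₂ := hn₂.nonneg ![0, 1]
  set C := N₁ ![0, 1] * N₂ ![1, 0] + N₂ ![0, 1] * N₁ ![1, 0]
  have hC : 0 ≤ C := by positivity
  apply le_of_forall_pos_le_add
  intro ε hε
  obtain ⟨t, ht, hs⟩ := exists_small hx (ε := ε / (C + 1)) (by positivity)
  have e₁ : N₁ (x t) = N₁ u := by simpa [hL] using hc t ht
  have e₂ : N₂ (x t) ≤ N₂ u := by
    simpa [hL, hx0] using h₂.1.2 x hx 0 t le_rfl ht
  have a := mul_le_mul_of_nonneg_right (hn₁.le_coords (x t)) p₂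
  have b := mul_le_mul_of_nonneg_right (hn₂.coords_le (x t)) p₁
  have c := mul_le_mul_of_nonneg_right e₂ p₁
  have d : |x t 1| * C ≤ ε := by
    rw [lt_div_iff₀ (by positivity)] at hs
    nlinarith [abs_nonneg (x t 1)]
  rw [e₁] at a
  simp only [C] at d
  linarith

theorem stmt_9 (A₀ A₁ : Matrix (Fin 2) (Fin 2) ℝ)
    (hA₀ : A₀ = !![0, 0; 0, -1]) (hA₁ : A₁ = !![-1, 1; -1, -1])
    (N₁ N₂ : (Fin 2 → ℝ) → ℝ)
    (h₁ : IsBarabanovNorm (convexHull ℝ {A₀, A₁}) N₁)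
    (h₂ : IsBarabanovNorm (convexHull ℝ {A₀, A₁}) N₂) :
    ∃ c > (0:ℝ), ∀ v : Fin 2 → ℝ, N₁ v = c * N₂ v := by
  subst hA₀ hA₁
  have p₁ := h₁.1.1.pos e0_ne_zero
  have p₂ := h₂.1.1.pos e0_ne_zero
  refine ⟨N₁ ![1, 0] / N₂ ![1, 0], div_pos p₁ p₂, fun v => ?_⟩
  have h := le_antisymm (barabanov_compare h₁ h₂ v) (barabanov_compare h₂ h₁ v)
  rw [div_mul_eq_mul_div, eq_div_iff p₂.ne', h, mul_comm]
end
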